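/- arXiv:2602.10488 — 2 statements merged into one kernel-verified Lean document; each statement's English description precedes it below -/
import Mathlib

section
/- Let N ≥ 2 and let g be a nonzero integer such that X^N − g has no root in ℚ(ζ_{2N}). Let P_g be the set of rational primes q such that q ∤ 2Ng, q ≡ 1 (mod 2N), and g is not an N-th power in ℤ/qℤ. Let L_g denote the splitting field over ℚ of (X^N − g)(X^{2N} − 1) and set δ_g = 1/φ(2N) − 1/[L_g : ℚ]. Then there exists a constant κ > 0 such that, as X → ∞, #{m ∈ ℕ : 1 ≤ m ≤ X and no q ∈ P_g divides m} is asymptotic to κ·X/(log X)^{δ_g}, i.e., the ratio of the count to X/(log X)^{δ_g} tends to κ. -/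
open Polynomial Filter
open scoped Classical

open Topology

section EulerProduct

/-- The part of the Euler factor at `q` coming from exponents at least two is `O(q⁻²)`,
uniformly on the half-line `1 < s`. -/
lemma exists_eulerFactor_bound (n : ℕ) :
    ∃ K : ℝ, 0 ≤ K ∧ (Summable fun e : ℕ => ((e : ℝ) + 1) ^ n * (1 / 2 : ℝ) ^ e) ∧
      (Summable fun e : ℕ => ((e : ℝ) + 3) ^ n * (1 / 2 : ℝ) ^ e) ∧
      (∑' e : ℕ, ((e : ℝ) + 3) ^ n * (1 / 2 : ℝ) ^ e) = K := by
  have h0 : Summable fun e : ℕ => (e : ℝ) ^ n * (1 / 2 : ℝ) ^ e :=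
    summable_pow_mul_geometric_of_norm_lt_one n (by norm_num)
  refine ⟨_, tsum_nonneg fun e => by positivity, ?_, ?_, rfl⟩
  · have h := ((summable_nat_add_iff 1).2 h0).mul_left 2
    refine h.congr fun e => ?_
    push_cast; rw [pow_succ]; ring
  · have h := ((summable_nat_add_iff 3).2 h0).mul_left 8
    refine h.congr fun e => ?_
    push_cast; rw [pow_add]; ring

lemma natCast_pow_rpow_neg (p e : ℕ) (s : ℝ) :
    (((p ^ e : ℕ) : ℝ)) ^ (-s) = ((p : ℝ) ^ (-s)) ^ e := by
  push_cast
  rw [← Real.rpow_natCast, ← Real.rpow_mul (by positivity), ← Real.rpow_natCast,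
    ← Real.rpow_mul (by positivity), mul_comm]

lemma prime_rpow_neg_le_inv {p : ℕ} (hp : p.Prime) {σ : ℝ} (hσ : 0 ≤ σ) :
    (p : ℝ) ^ (-(1 + σ)) ≤ (p : ℝ)⁻¹ := by
  rw [← Real.rpow_neg_one]
  exact Real.rpow_le_rpow_of_exponent_le (by exact_mod_cast hp.one_lt.le) (by linarith)

lemma prime_rpow_neg_le_half {p : ℕ} (hp : p.Prime) {σ : ℝ} (hσ : 0 ≤ σ) :
    (p : ℝ) ^ (-(1 + σ)) ≤ 1 / 2 := by
  refine (prime_rpow_neg_le_inv hp hσ).trans ?_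
  rw [inv_eq_one_div]
  exact one_div_le_one_div_of_le (by norm_num) (by exact_mod_cast hp.two_le)

variable {a : ℕ → ℝ} {n : ℕ}

lemma eulerFactor_summable (h0 : ∀ m, 0 ≤ a m)
    (hb : ∀ p k : ℕ, p.Prime → a (p ^ k) ≤ ((k : ℝ) + 1) ^ n)
    {p : ℕ} (hp : p.Prime) {σ : ℝ} (hσ : 0 ≤ σ) :
    Summable fun e : ℕ => a (p ^ e) * ((p : ℝ) ^ (-(1 + σ))) ^ e := by
  obtain ⟨K, -, hs, -⟩ := exists_eulerFactor_bound n
  have hx : 0 ≤ (p : ℝ) ^ (-(1 + σ)) := by positivity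
  refine hs.of_nonneg_of_le (fun e => mul_nonneg (h0 _) (pow_nonneg hx e)) fun e => ?_
  exact mul_le_mul (hb p e hp) (pow_le_pow_left₀ hx (prime_rpow_neg_le_half hp hσ) e)
    (pow_nonneg hx e) (by positivity)

/-- The logarithm of an Euler factor agrees with its linear term up to `O(p⁻²)`. -/
lemma abs_log_eulerFactor_sub_le (h0 : ∀ m, 0 ≤ a m) (h1 : a 1 = 1)
    (hb : ∀ p k : ℕ, p.Prime → a (p ^ k) ≤ ((k : ℝ) + 1) ^ n) :
    ∃ K : ℝ, ∀ p : ℕ, p.Prime → ∀ σ : ℝ, 0 ≤ σ →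
      0 < ∑' e : ℕ, a (p ^ e) * ((p : ℝ) ^ (-(1 + σ))) ^ e ∧
      |Real.log (∑' e : ℕ, a (p ^ e) * ((p : ℝ) ^ (-(1 + σ))) ^ e)
        - a p * (p : ℝ) ^ (-(1 + σ))| ≤ K * ((p : ℝ) ^ 2)⁻¹ := by
  obtain ⟨K, hK, -, hs, hsK⟩ := exists_eulerFactor_bound n
  refine ⟨K + 4 ^ n, fun p hp σ hσ => ?_⟩
  set x := (p : ℝ) ^ (-(1 + σ)) with hx
  have hx0 : 0 ≤ x := by positivity
  have hx1 : x ≤ (p : ℝ)⁻¹ := prime_rpow_neg_le_inv hp hσ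
  have hx2 : x ≤ 1 / 2 := prime_rpow_neg_le_half hp hσ
  have hsum := eulerFactor_summable h0 hb hp hσ
  rw [← hx] at hsum
  have hxx : x ^ 2 ≤ ((p : ℝ) ^ 2)⁻¹ := by
    rw [← inv_pow]; exact pow_le_pow_left₀ hx0 hx1 2
  set r := ∑' e : ℕ, a (p ^ (e + 2)) * x ^ (e + 2) with hr
  have hsplit : ∑' e : ℕ, a (p ^ e) * x ^ e = 1 + a p * x + r := by
    rw [← hsum.sum_add_tsum_nat_add 2]
    simp [Finset.sum_range_succ, h1, hr]
  have hr0 : 0 ≤ r := tsum_nonneg fun e => mul_nonneg (h0 _) (pow_nonneg hx0 _)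
  have hrle : r ≤ K * ((p : ℝ) ^ 2)⁻¹ := by
    have h2 : r ≤ ∑' e : ℕ, (((e : ℝ) + 3) ^ n * (1 / 2 : ℝ) ^ e) * x ^ 2 := by
      refine Summable.tsum_le_tsum (fun e => ?_) ((summable_nat_add_iff 2).2 hsum)
        (hs.mul_right _)
      have h3 := hb p (e + 2) hp
      push_cast at h3
      rw [show ((e : ℝ) + 2 + 1) = e + 3 by ring] at h3
      rw [pow_add x, ← mul_assoc]
      refine mul_le_mul_of_nonneg_right ?_ (by positivity)
      exact mul_le_mul h3 (pow_le_pow_left₀ hx0 hx2 e) (pow_nonneg hx0 e) (by positivity)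
    rw [tsum_mul_right, hsK] at h2
    exact h2.trans (mul_le_mul_of_nonneg_left hxx hK)
  set u := a p * x with hu
  have hu0 : 0 ≤ u := mul_nonneg (h0 _) hx0
  have hu2 : u ^ 2 ≤ 4 ^ n * ((p : ℝ) ^ 2)⁻¹ := by
    have h4 : a p ≤ 2 ^ n := by
      have h := hb p 1 hp
      norm_num at h; exact h
    rw [hu, mul_pow]
    refine mul_le_mul ?_ hxx (by positivity) (by positivity)
    calc a p ^ 2 ≤ (2 ^ n) ^ 2 := pow_le_pow_left₀ (h0 _) h4 2
      _ = 4 ^ n := by rw [← pow_mul, mul_comm, pow_mul]; norm_num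
  rw [hsplit]
  have hpos : 0 < 1 + u + r := by linarith
  refine ⟨hpos, ?_⟩
  rw [abs_le]
  constructor
  · have h5 := Real.one_sub_inv_le_log_of_pos hpos
    have h6 : u - u ^ 2 ≤ 1 - (1 + u + r)⁻¹ := by
      have h7 : (1 + u + r)⁻¹ ≤ (1 + u)⁻¹ := inv_anti₀ (by linarith) (by linarith)
      have h8 : (1 + u)⁻¹ ≤ 1 - u + u ^ 2 := by
        rw [inv_le_iff_one_le_mul₀ (by linarith)]
        nlinarith [pow_nonneg hu0 3]
      linarith
    have : 0 ≤ K * ((p : ℝ) ^ 2)⁻¹ := by positivity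
    nlinarith
  · have h5 := Real.log_le_sub_one_of_pos hpos
    have : 0 ≤ (4 : ℝ) ^ n * ((p : ℝ) ^ 2)⁻¹ := by positivity
    nlinarith

lemma summable_primes_inv_sq : Summable fun p : Nat.Primes => (((p : ℕ) : ℝ) ^ 2)⁻¹ :=
  (Real.summable_nat_pow_inv.2 one_lt_two).subtype _

lemma summable_primes_rpow {w : Nat.Primes → ℝ} {B : ℝ} (hw : ∀ p, |w p| ≤ B) {σ : ℝ}
    (hσ : 0 < σ) : Summable fun p : Nat.Primes => w p * ((p : ℕ) : ℝ) ^ (-(1 + σ)) := by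
  have h : Summable fun p : Nat.Primes => B * ((p : ℕ) : ℝ) ^ (-(1 + σ)) :=
    ((Real.summable_nat_rpow.2 (by linarith : -(1 + σ) < -1)).subtype _).mul_left B
  refine Summable.of_norm_bounded h fun p => ?_
  rw [norm_mul, Real.norm_eq_abs, Real.norm_of_nonneg (by positivity)]
  exact mul_le_mul_of_nonneg_right (hw p) (by positivity)

/-- For a multiplicative function of moderate growth on prime powers, the logarithm of the
Dirichlet series differs from the sum over primes by a function with a limit at `1`. -/
theorem exists_tendsto_log_sub_tsum_primes (h0 : ∀ m, 0 ≤ a m) (hz : a 0 = 0) (h1 : a 1 = 1)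
    (hmul : ∀ {k l : ℕ}, k.Coprime l → a (k * l) = a k * a l)
    (hb : ∀ p k : ℕ, p.Prime → a (p ^ k) ≤ ((k : ℝ) + 1) ^ n)
    (hs : ∀ᶠ σ in 𝓝[>] (0 : ℝ), Summable fun m : ℕ => a m * (m : ℝ) ^ (-(1 + σ))) :
    ∃ C : ℝ, Tendsto (fun σ : ℝ => Real.log (∑' m : ℕ, a m * (m : ℝ) ^ (-(1 + σ)))
      - ∑' p : Nat.Primes, a p * ((p : ℕ) : ℝ) ^ (-(1 + σ))) (𝓝[>] 0) (𝓝 C) := by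
  obtain ⟨K, hK⟩ := abs_log_eulerFactor_sub_le h0 h1 hb
  set E : ℝ → Nat.Primes → ℝ := fun σ p =>
    ∑' e : ℕ, a ((p : ℕ) ^ e) * (((p : ℕ) : ℝ) ^ (-(1 + σ))) ^ e with hE
  have hlim : Tendsto (fun σ : ℝ => ∑' p : Nat.Primes,
      (Real.log (E σ p) - a p * ((p : ℕ) : ℝ) ^ (-(1 + σ)))) (𝓝[>] 0)
      (𝓝 (∑' p : Nat.Primes, (Real.log (E 0 p) - a p * ((p : ℕ) : ℝ) ^ (-(1 + (0 : ℝ)))))) := by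
    refine tendsto_tsum_of_dominated_convergence (summable_primes_inv_sq.mul_left K)
      (fun p => ?_) ?_
    · have hcont : Tendsto (fun σ : ℝ => ((p : ℕ) : ℝ) ^ (-(1 + σ))) (𝓝[>] 0)
          (𝓝 (((p : ℕ) : ℝ) ^ (-(1 + (0 : ℝ))))) := by
        have : Continuous fun σ : ℝ => ((p : ℕ) : ℝ) ^ (-(1 + σ)) :=
          Continuous.rpow continuous_const (by fun_prop)
            fun _ => Or.inl (by exact_mod_cast p.2.pos.ne')
        exact (this.tendsto 0).mono_left nhdsWithin_le_nhds
      refine Tendsto.sub ?_ (hcont.const_mul _)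
      refine Tendsto.log ?_ (hK p p.2 0 le_rfl).1.ne'
      obtain ⟨-, -, hsum, -⟩ := exists_eulerFactor_bound n
      refine tendsto_tsum_of_dominated_convergence hsum
        (fun e => (hcont.pow e).const_mul _) ?_
      filter_upwards [self_mem_nhdsWithin] with σ hσ e
      have hx : 0 ≤ ((p : ℕ) : ℝ) ^ (-(1 + σ)) := by positivity
      rw [Real.norm_of_nonneg (mul_nonneg (h0 _) (pow_nonneg hx e))]
      exact mul_le_mul (hb p e p.2)
        (pow_le_pow_left₀ hx (prime_rpow_neg_le_half p.2 (Set.mem_Ioi.1 hσ).le) e)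
        (pow_nonneg hx e) (by positivity)
    · filter_upwards [self_mem_nhdsWithin] with σ hσ p
      exact (hK p p.2 σ (Set.mem_Ioi.1 hσ).le).2
  refine ⟨_, hlim.congr' ?_⟩
  filter_upwards [self_mem_nhdsWithin, hs] with σ hσ hsσ
  have hσ' : 0 < σ := hσ
  have hprod : HasProd (fun p : Nat.Primes => E σ p) (∑' m : ℕ, a m * (m : ℝ) ^ (-(1 + σ))) := by
    have := EulerProduct.eulerProduct_hasProd (f := fun m : ℕ => a m * (m : ℝ) ^ (-(1 + σ)))
      (by simp [h1]) (fun {k l} hkl => by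
        simp only [hmul hkl, Nat.cast_mul]
        rw [Real.mul_rpow (by positivity) (by positivity)]; ring) hsσ.norm (by simp [hz])
    simpa only [natCast_pow_rpow_neg] using this
  have hF : 0 < ∑' m : ℕ, a m * (m : ℝ) ^ (-(1 + σ)) :=
    hsσ.tsum_pos (fun m => mul_nonneg (h0 m) (by positivity)) 1 (by simp [h1])
  have hlog : HasSum (fun p : Nat.Primes => Real.log (E σ p))
      (Real.log (∑' m : ℕ, a m * (m : ℝ) ^ (-(1 + σ)))) := by
    have h := (Real.continuousAt_log hF.ne').tendsto.comp hprod
    refine Tendsto.congr (fun s => ?_) h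
    exact Real.log_prod fun p _ => (hK p p.2 σ hσ'.le).1.ne'
  have hsw : Summable fun p : Nat.Primes => a p * ((p : ℕ) : ℝ) ^ (-(1 + σ)) := by
    refine summable_primes_rpow (w := fun p => a p) (B := 2 ^ n) (fun p => ?_) hσ'
    have h := hb p 1 p.2
    norm_num at h
    rwa [abs_of_nonneg (h0 _)]
  rw [hlog.summable.tsum_sub hsw, hlog.tsum_eq]

/-- `HasLogDensity w α` expresses that `∑ₚ w(p) p⁻ˢ = -α log (s - 1) + C + o(1)` as `s → 1⁺`. -/
def HasLogDensity (w : Nat.Primes → ℝ) (α : ℝ) : Prop :=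
  ∃ C : ℝ, Tendsto (fun σ : ℝ => (∑' p : Nat.Primes, w p * ((p : ℕ) : ℝ) ^ (-(1 + σ)))
    + α * Real.log σ) (𝓝[>] 0) (𝓝 C)

lemma HasLogDensity.const_mul {w : Nat.Primes → ℝ} {α : ℝ} (h : HasLogDensity w α) (c : ℝ) :
    HasLogDensity (fun p => c * w p) (c * α) := by
  obtain ⟨C, hC⟩ := h
  refine ⟨c * C, (hC.const_mul c).congr fun σ => ?_⟩
  simp only [mul_assoc]
  rw [tsum_mul_left]; ring

lemma HasLogDensity.sub {v w : Nat.Primes → ℝ} {α β B : ℝ} (hv : HasLogDensity v α)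
    (hw : HasLogDensity w β) (hvB : ∀ p, |v p| ≤ B) (hwB : ∀ p, |w p| ≤ B) :
    HasLogDensity (fun p => v p - w p) (α - β) := by
  obtain ⟨C, hC⟩ := hv
  obtain ⟨D, hD⟩ := hw
  refine ⟨C - D, (hC.sub hD).congr' ?_⟩
  filter_upwards [self_mem_nhdsWithin] with σ hσ
  simp only [sub_mul]
  rw [(summable_primes_rpow hvB hσ).tsum_sub (summable_primes_rpow hwB hσ)]
  ring

/-- The logarithmic density is insensitive to a change of the weight at finitely many primes. -/
lemma HasLogDensity.congr_cofinite {v w : Nat.Primes → ℝ} {α B : ℝ} (hv : HasLogDensity v α)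
    (hvB : ∀ p, |v p| ≤ B) (hwB : ∀ p, |w p| ≤ B) {S : Set Nat.Primes} (hS : S.Finite)
    (hvw : ∀ p, p ∉ S → v p = w p) : HasLogDensity w α := by
  have hd : HasLogDensity (fun p => v p - w p) 0 := by
    refine ⟨∑ p ∈ hS.toFinset, (v p - w p) * ((p : ℕ) : ℝ) ^ (-(1 + (0 : ℝ))), ?_⟩
    have h : Tendsto (fun σ : ℝ => ∑ p ∈ hS.toFinset, (v p - w p) * ((p : ℕ) : ℝ) ^ (-(1 + σ)))
        (𝓝[>] 0) (𝓝 (∑ p ∈ hS.toFinset, (v p - w p) * ((p : ℕ) : ℝ) ^ (-(1 + (0 : ℝ))))) := by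
      refine tendsto_finsetSum _ fun p _ => Tendsto.const_mul _ ?_
      have : Continuous fun σ : ℝ => ((p : ℕ) : ℝ) ^ (-(1 + σ)) :=
        Continuous.rpow continuous_const (by fun_prop)
          fun _ => Or.inl (by exact_mod_cast p.2.pos.ne')
      exact (this.tendsto 0).mono_left nhdsWithin_le_nhds
    refine h.congr fun σ => ?_
    rw [zero_mul, add_zero]
    refine (tsum_eq_sum fun p hp => ?_).symm
    rw [hvw p (by simpa using hp)]; simp
  have hB : ∀ p, |v p - w p| ≤ 2 * B := fun p =>
    (abs_sub _ _).trans (by linarith [hvB p, hwB p])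
  have h := hv.sub hd (B := 2 * B)
    (fun p => (hvB p).trans (by linarith [(abs_nonneg _).trans (hvB p)])) hB
  simpa using h

/-- A simple pole of the Dirichlet series at `1` yields logarithmic density one. -/
theorem hasLogDensity_of_tendsto_mul_tsum (h0 : ∀ m, 0 ≤ a m) (hz : a 0 = 0) (h1 : a 1 = 1)
    (hmul : ∀ {k l : ℕ}, k.Coprime l → a (k * l) = a k * a l)
    (hb : ∀ p k : ℕ, p.Prime → a (p ^ k) ≤ ((k : ℝ) + 1) ^ n)
    (hs : ∀ᶠ σ in 𝓝[>] (0 : ℝ), Summable fun m : ℕ => a m * (m : ℝ) ^ (-(1 + σ)))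
    {ρ : ℝ} (hρ : 0 < ρ)
    (hlim : Tendsto (fun σ : ℝ => σ * ∑' m : ℕ, a m * (m : ℝ) ^ (-(1 + σ))) (𝓝[>] 0) (𝓝 ρ)) :
    HasLogDensity (fun p => a p) 1 := by
  obtain ⟨C, hC⟩ := exists_tendsto_log_sub_tsum_primes h0 hz h1 hmul hb hs
  refine ⟨Real.log ρ - C, ((hlim.log hρ.ne').sub hC).congr' ?_⟩
  filter_upwards [self_mem_nhdsWithin, hlim.eventually_ne hρ.ne'] with σ hσ hne
  rw [Real.log_mul (ne_of_gt hσ) (right_ne_zero_of_mul hne)]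
  ring

/-- Logarithmic density `α` of the prime values gives a singularity of order `α` at `1`. -/
theorem HasLogDensity.exists_tendsto_rpow_mul_tsum {α : ℝ} (h0 : ∀ m, 0 ≤ a m) (hz : a 0 = 0)
    (h1 : a 1 = 1) (hmul : ∀ {k l : ℕ}, k.Coprime l → a (k * l) = a k * a l)
    (hb : ∀ p k : ℕ, p.Prime → a (p ^ k) ≤ ((k : ℝ) + 1) ^ n)
    (hs : ∀ᶠ σ in 𝓝[>] (0 : ℝ), Summable fun m : ℕ => a m * (m : ℝ) ^ (-(1 + σ)))
    (hα : HasLogDensity (fun p => a p) α) :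
    ∃ C : ℝ, 0 < C ∧ Tendsto (fun σ : ℝ => σ ^ α * ∑' m : ℕ, a m * (m : ℝ) ^ (-(1 + σ)))
      (𝓝[>] 0) (𝓝 C) := by
  obtain ⟨C, hC⟩ := exists_tendsto_log_sub_tsum_primes h0 hz h1 hmul hb hs
  obtain ⟨D, hD⟩ := hα
  refine ⟨Real.exp (C + D), Real.exp_pos _,
    ((Real.continuous_exp.tendsto _).comp (hC.add hD)).congr' ?_⟩
  filter_upwards [self_mem_nhdsWithin, hs] with σ hσ hsσ
  have hF : 0 < ∑' m : ℕ, a m * (m : ℝ) ^ (-(1 + σ)) :=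
    hsσ.tsum_pos (fun m => mul_nonneg (h0 m) (by positivity)) 1 (by simp [h1])
  simp only [Function.comp_apply]
  rw [show ∀ x y z : ℝ, x - y + (y + z) = x + z from fun _ _ _ => by ring,
    Real.exp_add, Real.exp_log hF, Real.rpow_def_of_pos hσ]
  ring_nf

lemma tendsto_one_add_nhdsGT : Tendsto (fun σ : ℝ => 1 + σ) (𝓝[>] 0) (𝓝[>] 1) := by
  refine tendsto_nhdsWithin_iff.2 ⟨?_, ?_⟩
  · have : Tendsto (fun σ : ℝ => 1 + σ) (𝓝 0) (𝓝 (1 + 0)) := tendsto_const_nhds.add tendsto_id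
    rw [add_zero] at this
    exact this.mono_left nhdsWithin_le_nhds
  · filter_upwards [self_mem_nhdsWithin] with σ hσ
    simpa using hσ

/-- The set of all primes has logarithmic density one. -/
theorem hasLogDensity_one : HasLogDensity (fun _ => 1) 1 := by
  have hterm : ∀ (m : ℕ) {t : ℝ}, t ≠ 0 →
      (m : ℝ) ^ t = (if m = 0 then (0 : ℝ) else 1) * (m : ℝ) ^ t := by
    intro m t ht
    rcases eq_or_ne m 0 with rfl | hm
    · simp [Real.zero_rpow ht]
    · simp [hm]
  have h := hasLogDensity_of_tendsto_mul_tsum (a := fun m => if m = 0 then 0 else 1) (n := 0)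
    (ρ := 1) (fun m => by positivity) (by simp) (by simp)
    (fun {k l} _ => by by_cases hk : k = 0 <;> by_cases hl : l = 0 <;> simp [hk, hl])
    (fun p k hp => by simp [hp.ne_zero]) ?_ one_pos ?_
  · refine (congrArg (HasLogDensity · 1) (funext fun p => ?_)).mp h
    simp [p.2.ne_zero]
  · filter_upwards [self_mem_nhdsWithin] with σ hσ
    have hσ' : -(1 + σ) < -1 := by linarith [Set.mem_Ioi.1 hσ]
    exact (Real.summable_nat_rpow.2 hσ').congr fun m => hterm m (by linarith)
  · refine (tendsto_sub_mul_tsum_nat_rpow.comp tendsto_one_add_nhdsGT).congr' ?_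
    filter_upwards [self_mem_nhdsWithin] with σ hσ
    have hσ' : -(1 + σ) ≠ 0 := by linarith [Set.mem_Ioi.1 hσ]
    simp only [Function.comp_apply, add_sub_cancel_left]
    congr 1
    refine tsum_congr fun m => ?_
    rw [← hterm m hσ', Real.rpow_neg (by positivity), one_div]

end EulerProduct

section IdealCount

open NumberField Ideal

variable (K : Type*) [Field K] [NumberField K]

/-- The number of nonzero ideals of norm `n` in the ring of integers of `K`. -/
noncomputable def idealCount (n : ℕ) : ℝ :=
  if n = 0 then 0 else (Nat.card {I : Ideal (𝓞 K) // absNorm I = n} : ℝ)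

lemma idealCount_nonneg (n : ℕ) : 0 ≤ idealCount K n := by
  unfold idealCount; positivity

lemma idealCount_one : idealCount K 1 = 1 := by
  have : Unique {I : Ideal (𝓞 K) // absNorm I = 1} :=
    { default := ⟨⊤, by simp⟩
      uniq := fun I => Subtype.ext (absNorm_eq_one_iff.1 I.2) }
  simp [idealCount]

variable {K}

lemma span_natCast_sup_span_natCast {R : Type*} [CommRing R] {m n : ℕ} (h : m.Coprime n) :
    span {(m : R)} ⊔ span {(n : R)} = ⊤ := by
  have h1 : IsCoprime (m : R) (n : R) := by
    simpa using (Nat.isCoprime_iff_coprime.2 h).map (Int.castRingHom (R))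
  have h2 := (isCoprime_span_singleton_iff _ _).2 h1
  exact isCoprime_iff_sup_eq.1 h2

lemma isCoprime_of_coprime_absNorm {I J : Ideal (𝓞 K)}
    (h : (absNorm I).Coprime (absNorm J)) : IsCoprime I J := by
  rw [isCoprime_iff_sup_eq, eq_top_iff, ← span_natCast_sup_span_natCast h]
  exact sup_le_sup (span_singleton_absNorm_le I) (span_singleton_absNorm_le J)

lemma card_absNorm_eq_mul {m n : ℕ} (h : m.Coprime n) (hm : m ≠ 0) (hn : n ≠ 0) :
    Nat.card {I : Ideal (𝓞 K) // absNorm I = m * n} =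
      Nat.card {I : Ideal (𝓞 K) // absNorm I = m} *
        Nat.card {I : Ideal (𝓞 K) // absNorm I = n} := by
  rw [← Nat.card_prod]
  symm
  refine Nat.card_congr (Equiv.ofBijective
    (fun q => ⟨q.1.1 * q.2.1, by rw [map_mul, q.1.2, q.2.2]⟩) ⟨?_, ?_⟩)
  · rintro ⟨⟨I, hI⟩, ⟨J, hJ⟩⟩ ⟨⟨I', hI'⟩, ⟨J', hJ'⟩⟩ hq
    have hq' : I * J = I' * J' := congrArg Subtype.val hq
    have c1 : IsCoprime I J' := isCoprime_of_coprime_absNorm (by rw [hI, hJ']; exact h)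
    have c2 : IsCoprime I' J := isCoprime_of_coprime_absNorm (by rw [hI', hJ]; exact h)
    have e1 : I = I' := dvd_antisymm (c1.dvd_of_dvd_mul_right (hq' ▸ dvd_mul_right I J))
      (c2.dvd_of_dvd_mul_right (hq' ▸ dvd_mul_right I' J'))
    have e2 : J = J' := dvd_antisymm (c2.symm.dvd_of_dvd_mul_left (hq' ▸ dvd_mul_left J I))
      (c1.symm.dvd_of_dvd_mul_left (hq' ▸ dvd_mul_left J' I'))
    subst e1 e2
    rfl
  · rintro ⟨Q, hQ⟩
    have hprod : (Q ⊔ span {(m : 𝓞 K)}) * (Q ⊔ span {(n : 𝓞 K)}) = Q := by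
      have hle : span {(m : 𝓞 K)} * span {(n : 𝓞 K)} ≤ Q := by
        rw [span_singleton_mul_span_singleton, ← Nat.cast_mul, ← hQ]
        exact span_singleton_absNorm_le Q
      have hexp : (Q + span {(m : 𝓞 K)}) * (Q + span {(n : 𝓞 K)}) =
          Q * (Q + (span {(m : 𝓞 K)} + span {(n : 𝓞 K)})) +
            span {(m : 𝓞 K)} * span {(n : 𝓞 K)} := by ring
      simp only [Ideal.add_eq_sup] at hexp
      rw [hexp, span_natCast_sup_span_natCast h, sup_top_eq, mul_top, sup_eq_left.2 hle]
    have h1 : absNorm (Q ⊔ span {(m : 𝓞 K)}) ∣ m ^ Module.finrank ℤ (𝓞 K) := by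
      rw [← absNorm_span_natCast]; exact absNorm_dvd_absNorm_of_le le_sup_right
    have h2 : absNorm (Q ⊔ span {(n : 𝓞 K)}) ∣ n ^ Module.finrank ℤ (𝓞 K) := by
      rw [← absNorm_span_natCast]; exact absNorm_dvd_absNorm_of_le le_sup_right
    have h3 : absNorm (Q ⊔ span {(m : 𝓞 K)}) * absNorm (Q ⊔ span {(n : 𝓞 K)}) = m * n := by
      rw [← map_mul, hprod, hQ]
    have d1 : absNorm (Q ⊔ span {(m : 𝓞 K)}) ∣ m :=
      ((h.pow_left _).coprime_dvd_left h1).dvd_of_dvd_mul_right (Dvd.intro _ h3)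
    have d2 : absNorm (Q ⊔ span {(n : 𝓞 K)}) ∣ n :=
      ((h.symm.pow_left _).coprime_dvd_left h2).dvd_of_dvd_mul_left (Dvd.intro_left _ h3)
    have l1 := Nat.le_of_dvd (Nat.pos_of_ne_zero hm) d1
    have l2 := Nat.le_of_dvd (Nat.pos_of_ne_zero hn) d2
    have e1 : absNorm (Q ⊔ span {(m : 𝓞 K)}) = m := by
      refine le_antisymm l1 (Nat.le_of_mul_le_mul_right ?_ (Nat.pos_of_ne_zero hn))
      rw [← h3]; exact Nat.mul_le_mul_left _ l2
    have e2 : absNorm (Q ⊔ span {(n : 𝓞 K)}) = n := by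
      rw [e1] at h3; exact Nat.eq_of_mul_eq_mul_left (Nat.pos_of_ne_zero hm) h3
    exact ⟨⟨⟨_, e1⟩, ⟨_, e2⟩⟩, Subtype.ext hprod⟩

lemma idealCount_mul {m n : ℕ} (h : m.Coprime n) :
    idealCount K (m * n) = idealCount K m * idealCount K n := by
  unfold idealCount
  by_cases hm : m = 0
  · simp [hm]
  by_cases hn : n = 0
  · simp [hn]
  simp [hm, hn, card_absNorm_eq_mul h hm hn]

lemma isMaximal_span_natCast {p : ℕ} (hp : p.Prime) : (span {(p : ℤ)}).IsMaximal :=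
  PrincipalIdealRing.isMaximal_of_irreducible (Nat.prime_iff_prime_int.1 hp).irreducible

lemma liesOver_span_of_natCast_mem {p : ℕ} (hp : p.Prime) {R : Type*} [CommRing R] {Q : Ideal R}
    (hQ : Q.IsPrime) (hpQ : (p : R) ∈ Q) : Q.LiesOver (span {(p : ℤ)}) := by
  refine ⟨(isMaximal_span_natCast hp).eq_of_le (comap_ne_top _ hQ.ne_top) ?_⟩
  rw [span_singleton_le_iff_mem, under_def, Ideal.mem_comap]
  simpa using hpQ

lemma card_absNorm_eq_prime_pow_le {p : ℕ} (hp : p.Prime) (k : ℕ) :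
    Nat.card {I : Ideal (𝓞 K) // absNorm I = p ^ k} ≤ (k + 1) ^ Module.finrank ℚ K := by
  have hpb : span {(p : ℤ)} ≠ ⊥ := by simp [hp.ne_zero]
  have hmax := isMaximal_span_natCast hp
  set S := IsDedekindDomain.primesOverFinset (span {(p : ℤ)}) (𝓞 K) with hS
  have hcard : S.card ≤ Module.finrank ℚ K :=
    card_primesOverFinset_le_finrank (S := 𝓞 K) ℚ K hpb
  have hne : ∀ {I : Ideal (𝓞 K)}, absNorm I = p ^ k → I ≠ ⊥ := by
    rintro I hI rfl
    simp at hI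
    exact absurd hI.symm (pow_ne_zero _ hp.ne_zero)
  have hmem : ∀ {I Q : Ideal (𝓞 K)}, absNorm I = p ^ k → Q ∣ I → Prime Q → Q ∈ S := by
    intro I Q hI hQI hQ
    have hQp : Q.IsPrime := isPrime_of_prime hQ
    refine (IsDedekindDomain.mem_primesOverFinset_iff hpb _).2
      ⟨hQp, liesOver_span_of_natCast_mem hp hQp (hQp.mem_of_pow_mem k ?_)⟩
    have := dvd_iff_le.1 hQI (absNorm_mem I)
    rw [hI] at this
    simpa using this
  have hcount : ∀ {I Q : Ideal (𝓞 K)}, absNorm I = p ^ k → Q ∈ S →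
      (UniqueFactorizationMonoid.normalizedFactors I).count Q < k + 1 := by
    intro I Q hI hQ
    rw [Nat.lt_succ_iff]
    by_contra! hlt
    set c := (UniqueFactorizationMonoid.normalizedFactors I).count Q with hc
    have hrep : Multiset.replicate c Q ≤ UniqueFactorizationMonoid.normalizedFactors I :=
      Multiset.le_count_iff_replicate_le.1 le_rfl
    have hdvd := Multiset.prod_dvd_prod_of_le hrep
    rw [Ideal.prod_normalizedFactors_eq_self (hne hI), Multiset.prod_replicate] at hdvd
    have hn := map_dvd absNorm hdvd
    rw [map_pow, hI] at hn
    have hQmem : Q ∈ UniqueFactorizationMonoid.normalizedFactors I :=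
      Multiset.count_pos.1 (by omega)
    have hQ1 : absNorm Q ≠ 1 := fun h1 =>
      (UniqueFactorizationMonoid.prime_of_normalized_factor Q hQmem).not_isUnit
        (isUnit_iff.2 (absNorm_eq_one_iff.1 h1))
    have hQp : absNorm Q ∣ p ^ k := (dvd_pow_self _ (by omega)).trans hn
    obtain ⟨j, -, hj⟩ := (Nat.dvd_prime_pow hp).1 hQp
    have hj0 : j ≠ 0 := by rintro rfl; exact hQ1 (by simpa using hj)
    rw [hj, ← pow_mul] at hn
    have := (Nat.pow_dvd_pow_iff_le_right hp.one_lt).1 hn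
    nlinarith [Nat.pos_of_ne_zero hj0]
  let F : {I : Ideal (𝓞 K) // absNorm I = p ^ k} → (S → Fin (k + 1)) := fun I Q =>
    ⟨(UniqueFactorizationMonoid.normalizedFactors I.1).count Q.1, hcount I.2 Q.2⟩
  have hF : Function.Injective F := by
    rintro ⟨I, hI⟩ ⟨J, hJ⟩ hIJ
    have hfac : UniqueFactorizationMonoid.normalizedFactors I =
        UniqueFactorizationMonoid.normalizedFactors J := by
      ext Q
      by_cases hQ : Q ∈ S
      · exact congrArg Fin.val (congrFun hIJ ⟨Q, hQ⟩)
      · rw [Multiset.count_eq_zero_of_notMem, Multiset.count_eq_zero_of_notMem]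
        · exact fun h => hQ (hmem hJ (UniqueFactorizationMonoid.dvd_of_mem_normalizedFactors h)
            (UniqueFactorizationMonoid.prime_of_normalized_factor Q h))
        · exact fun h => hQ (hmem hI (UniqueFactorizationMonoid.dvd_of_mem_normalizedFactors h)
            (UniqueFactorizationMonoid.prime_of_normalized_factor Q h))
    refine Subtype.ext ?_
    change I = J
    rw [← Ideal.prod_normalizedFactors_eq_self (hne hI), hfac,
      Ideal.prod_normalizedFactors_eq_self (hne hJ)]
  calc Nat.card {I : Ideal (𝓞 K) // absNorm I = p ^ k} ≤ Nat.card (S → Fin (k + 1)) :=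
        Nat.card_le_card_of_injective F hF
    _ = (k + 1) ^ S.card := by simp
    _ ≤ (k + 1) ^ Module.finrank ℚ K := Nat.pow_le_pow_right (by omega) hcard

lemma idealCount_prime_pow_le {p : ℕ} (hp : p.Prime) (k : ℕ) :
    idealCount K (p ^ k) ≤ ((k : ℝ) + 1) ^ Module.finrank ℚ K := by
  rw [idealCount, if_neg (pow_ne_zero _ hp.ne_zero)]
  exact_mod_cast card_absNorm_eq_prime_pow_le hp k

variable (K)

lemma dedekindZeta_term_eq (σ : ℝ) (n : ℕ) :
    LSeries.term (fun n ↦ (Nat.card {I : Ideal (𝓞 K) // absNorm I = n} : ℂ)) ((1 + σ : ℝ) : ℂ) n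
      = ((idealCount K n * (n : ℝ) ^ (-(1 + σ)) : ℝ) : ℂ) := by
  rcases eq_or_ne n 0 with rfl | hn
  · simp [idealCount]
  rw [LSeries.term_of_ne_zero hn, idealCount, if_neg hn, Real.rpow_neg (by positivity)]
  push_cast
  rw [Complex.ofReal_cpow (by positivity)]
  push_cast
  rw [div_eq_mul_inv]

/-- The prime values of the ideal counting function have logarithmic density one. -/
theorem hasLogDensity_idealCount : HasLogDensity (fun p => idealCount K p) 1 := by
  have hlim : Tendsto (fun σ : ℝ => σ * ∑' m : ℕ, idealCount K m * (m : ℝ) ^ (-(1 + σ)))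
      (𝓝[>] 0) (𝓝 (dedekindZeta_residue K)) := by
    rw [← Filter.tendsto_ofReal_iff]
    refine ((tendsto_sub_one_mul_dedekindZeta_nhdsGT K).comp tendsto_one_add_nhdsGT).congr' ?_
    filter_upwards [self_mem_nhdsWithin] with σ hσ
    simp only [Function.comp_apply, dedekindZeta, LSeries, dedekindZeta_term_eq K σ]
    push_cast
    ring
  refine hasLogDensity_of_tendsto_mul_tsum (idealCount_nonneg K) (by simp [idealCount])
    (idealCount_one K) idealCount_mul (fun p k hp => idealCount_prime_pow_le hp k) ?_
    (dedekindZeta_residue_pos K) hlim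
  filter_upwards [hlim.eventually_ne (dedekindZeta_residue_ne_zero K)] with σ hσ
  by_contra hns
  exact hσ (by rw [tsum_eq_zero_of_not_summable hns, mul_zero])

end IdealCount

section Splitting

open NumberField Ideal
open scoped Pointwise

lemma exists_intCast_eq_of_pow_char_eq {F : Type*} [Field F] {p : ℕ} [Fact p.Prime] [CharP F p]
    {x : F} (hx : x ^ p = x) : ∃ y : ℤ, (y : F) = x := by
  have h : x ∈ (⊥ : Subfield F) := Subfield.mem_bot_iff_pow_eq_self F p |>.2 hx
  rw [← ZMod.fieldRange_castHom_eq_bot p] at h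
  obtain ⟨z, rfl⟩ := h
  obtain ⟨y, rfl⟩ := ZMod.intCast_surjective z
  exact ⟨y, by simp⟩

variable {L : Type*} [Field L] [NumberField L] {m N p : ℕ} {g : ℤ} {ζ α : 𝓞 L}

lemma coe_galois_smul_integers (σ : L ≃ₐ[ℚ] L) (x : 𝓞 L) : ((σ • x : 𝓞 L) : L) = σ (x : L) := rfl

/-- An ideal of prime norm `p` produces a root of unity and an `N`-th root of `g` modulo `p`. -/
lemma mod_eq_one_and_exists_root_of_absNorm_eq (hp : p.Prime) (hm : 2 ≤ m) (hpm : ¬ p ∣ m)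
    (hζ : IsPrimitiveRoot ζ m) (hα : α ^ N = g) {I : Ideal (𝓞 L)} (hI : absNorm I = p) :
    p % m = 1 ∧ ∃ y : ZMod p, y ^ N = (g : ZMod p) := by
  have : Fact p.Prime := ⟨hp⟩
  have : NeZero m := ⟨by omega⟩
  have hcard : Nat.card (𝓞 L ⧸ I) = p := by rw [← hI, absNorm_apply, Submodule.cardQuot_apply]
  have : Finite (𝓞 L ⧸ I) := Nat.finite_of_card_ne_zero (by rw [hcard]; exact hp.ne_zero)
  have : Fintype (𝓞 L ⧸ I) := Fintype.ofFinite _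
  let e := ZMod.ringEquivOfPrime (𝓞 L ⧸ I) hp (by rw [← Nat.card_eq_fintype_card, hcard])
  have hprim : IsPrimitiveRoot (Ideal.Quotient.mk I ζ) m :=
    hζ.idealQuotient_mk (by rw [hI]; exact hp.ne_one)
      (by rw [hI]; exact (Nat.Prime.coprime_iff_not_dvd hp).2 hpm)
  have hprim' : IsPrimitiveRoot (e.symm (Ideal.Quotient.mk I ζ)) m :=
    hprim.map_of_injective (f := e.symm) e.symm.injective
  refine ⟨?_, e.symm (Ideal.Quotient.mk I α), ?_⟩
  · have h := ZMod.orderOf_dvd_card_sub_one (hprim'.ne_zero (by omega))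
    rw [← hprim'.eq_orderOf] at h
    obtain ⟨k, hk⟩ := h
    have hp1 := hp.one_lt
    rw [show p = 1 + m * k by omega, Nat.add_mul_mod_self_left, Nat.mod_eq_of_lt (by omega)]
  · rw [← map_pow, ← map_pow, hα]; simp

/-- If `p ≡ 1 [MOD m]` and `g` is an `N`-th power modulo `p`, the decomposition groups at `p` of a
field generated by `ζ` and `α` are trivial. -/
lemma stabilizer_eq_bot_of_exists_root (hp : p.Prime) (hm : 2 ≤ m) (hNm : N ∣ m)
    (hpm : ¬ p ∣ m) (hpg : ¬ (p : ℤ) ∣ g) (hζ : IsPrimitiveRoot ζ m) (hα : α ^ N = g)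
    (hfix : ∀ σ : L ≃ₐ[ℚ] L, σ (ζ : L) = ζ → σ (α : L) = α → σ = 1)
    (hmod : p % m = 1) (hroot : ∃ y : ZMod p, y ^ N = (g : ZMod p))
    {Q : Ideal (𝓞 L)} (hQ : Q.IsPrime) (hpQ : (p : 𝓞 L) ∈ Q) :
    MulAction.stabilizer (L ≃ₐ[ℚ] L) Q = ⊥ := by
  have : Fact p.Prime := ⟨hp⟩
  have : NeZero m := ⟨by omega⟩
  have hQb : Q ≠ ⊥ := by
    rintro rfl
    exact hp.ne_zero (by exact_mod_cast (Ideal.mem_bot.1 hpQ))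
  have hQm : Q.IsMaximal := hQ.isMaximal hQb
  let _ : Field (𝓞 L ⧸ Q) := Ideal.Quotient.field Q
  have hch0 : ((p : ℕ) : 𝓞 L ⧸ Q) = 0 := by
    rw [← map_natCast (Ideal.Quotient.mk Q)]
    exact Ideal.Quotient.eq_zero_iff_mem.2 hpQ
  have : CharP (𝓞 L ⧸ Q) p := by
    refine (CharP.charP_iff_prime_eq_zero hp).2 hch0
  have hover := liesOver_span_of_natCast_mem hp hQ hpQ
  have hQn : absNorm Q = p ^ ((span {(p : ℤ)}).inertiaDeg' Q) := absNorm_eq_pow_inertiaDeg' Q hp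
  have hprim : IsPrimitiveRoot (Ideal.Quotient.mk Q ζ) m :=
    hζ.idealQuotient_mk (fun h => hQ.ne_top (absNorm_eq_one_iff.1 h))
      (by rw [hQn]; exact ((Nat.Prime.coprime_iff_not_dvd hp).2 hpm).pow_left _)
  obtain ⟨k, hk⟩ : m ∣ p - 1 := (Nat.modEq_iff_dvd' hp.one_lt.le).1
    (by rw [Nat.ModEq, hmod, Nat.mod_eq_of_lt (by omega)])
  have hpk : p = m * k + 1 := by have := hp.one_lt; omega
  have hgQ : ((g : ℤ) : 𝓞 L ⧸ Q) ≠ 0 := fun h => hpg ((CharP.intCast_eq_zero_iff _ p g).1 h)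
  have hαN : (Ideal.Quotient.mk Q α) ^ N = (g : 𝓞 L ⧸ Q) := by
    rw [← map_pow, hα, map_intCast]
  have hm0 : m ≠ 0 := by omega
  have hN0 : N ≠ 0 := fun h => hm0 (Nat.eq_zero_of_zero_dvd (h ▸ hNm))
  have hα0 : Ideal.Quotient.mk Q α ≠ 0 := fun h => hgQ (by rw [← hαN, h, zero_pow hN0])
  have hζp : (Ideal.Quotient.mk Q ζ) ^ p = Ideal.Quotient.mk Q ζ := by
    conv_lhs => rw [hpk]
    rw [pow_succ, pow_mul, hprim.pow_eq_one, one_pow, one_mul]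
  have hαp : (Ideal.Quotient.mk Q α) ^ p = Ideal.Quotient.mk Q α := by
    obtain ⟨d, rfl⟩ := hNm
    obtain ⟨y, hy⟩ := hroot
    have hy0 : y ≠ 0 := by
      rintro rfl
      rw [zero_pow hN0] at hy
      exact hpg ((ZMod.intCast_zmod_eq_zero_iff_dvd g p).1 hy.symm)
    have h1 : ((g : ℤ) : ZMod p) ^ (d * k) = 1 := by
      rw [← hy, ← pow_mul, ← mul_assoc, show N * d * k = p - 1 by omega]
      exact ZMod.pow_card_sub_one_eq_one hy0
    have h2 := congrArg (ZMod.castHom (m := p) dvd_rfl (𝓞 L ⧸ Q)) h1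
    rw [map_pow, map_intCast, map_one] at h2
    conv_lhs => rw [hpk]
    rw [pow_succ, mul_assoc, pow_mul, hαN, h2, one_mul]
  have hres : ∀ {x : 𝓞 L}, (Ideal.Quotient.mk Q x) ^ p = Ideal.Quotient.mk Q x →
      ∀ σ ∈ MulAction.stabilizer (L ≃ₐ[ℚ] L) Q,
        Ideal.Quotient.mk Q (σ • x) = Ideal.Quotient.mk Q x := by
    intro x hx σ hσ
    obtain ⟨y, hy⟩ := exists_intCast_eq_of_pow_char_eq hx
    rw [← map_intCast (Ideal.Quotient.mk Q), Ideal.Quotient.eq] at hy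
    have h1 : σ • ((y : 𝓞 L) - x) ∈ σ • Q := Ideal.smul_mem_pointwise_smul_iff.2 hy
    rw [MulAction.mem_stabilizer_iff.1 hσ, smul_sub,
      show σ • ((y : ℤ) : 𝓞 L) = y from map_intCast (MulSemiringAction.toRingHom _ (𝓞 L) σ) y] at h1
    rw [Ideal.Quotient.eq]
    simpa using sub_mem hy h1
  rw [eq_bot_iff]
  intro σ hσ
  rw [Subgroup.mem_bot]
  have hσpow : ∀ (x : 𝓞 L) (n : ℕ), σ • x ^ n = (σ • x) ^ n := fun x n => smul_pow' σ x n
  refine hfix σ ?_ ?_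
  · have h1 : (σ • ζ) ^ m = 1 := by rw [← hσpow, hζ.pow_eq_one, smul_one]
    obtain ⟨i, him, hi⟩ := hζ.eq_pow_of_pow_eq_one h1
    have h2 := hres hζp σ hσ
    rw [← hi, map_pow] at h2
    have hi1 : i = 1 := hprim.pow_inj him (by omega) (by rw [h2, pow_one])
    rw [hi1, pow_one] at hi
    rw [← coe_galois_smul_integers, ← hi]
  · have hg0 : g ≠ 0 := fun h => hpg (h ▸ dvd_zero _)
    have hαL : (α : L) ≠ 0 := by
      intro h
      have : α = 0 := by exact_mod_cast h
      rw [this, zero_pow hN0] at hα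
      exact hg0 (by exact_mod_cast hα.symm)
    have hζL : IsPrimitiveRoot (ζ : L) m :=
      hζ.map_of_injective (f := algebraMap (𝓞 L) L) RingOfIntegers.coe_injective
    have h1 : ((σ • α : 𝓞 L) : L) ^ N = (α : L) ^ N := by
      have : (σ • α) ^ N = α ^ N := by
        rw [← hσpow, hα]
        exact map_intCast (MulSemiringAction.toRingHom _ (𝓞 L) σ) g
      exact_mod_cast congrArg (algebraMap (𝓞 L) L) this
    have h2 : (((σ • α : 𝓞 L) : L) / α) ^ m = 1 := by
      obtain ⟨d, rfl⟩ := hNm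
      rw [pow_mul, div_pow, h1, div_self (pow_ne_zero _ hαL), one_pow]
    obtain ⟨i, him, hi⟩ := hζL.eq_pow_of_pow_eq_one h2
    rw [eq_div_iff hαL] at hi
    have h3 : ζ ^ i * α = σ • α := RingOfIntegers.ext (by simpa using hi)
    have h4 := hres hαp σ hσ
    rw [← h3, map_mul, map_pow] at h4
    have h5 : Ideal.Quotient.mk Q ζ ^ i = 1 := mul_right_cancel₀ hα0 (by rw [h4, one_mul])
    have hi0 : i = 0 := Nat.eq_zero_of_dvd_of_lt ((hprim.pow_eq_one_iff_dvd i).1 h5) him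
    rw [← coe_galois_smul_integers, ← h3, hi0, pow_zero, one_mul]

/-- The number of ideals of norm `p` in a Galois field generated by a primitive `m`-th root of
unity and an `N`-th root of `g`. -/
theorem idealCount_prime_eq [IsGalois ℚ L] (hp : p.Prime) (hm : 2 ≤ m) (hNm : N ∣ m)
    (hpm : ¬ p ∣ m) (hpg : ¬ (p : ℤ) ∣ g) (hζ : IsPrimitiveRoot ζ m) (hα : α ^ N = g)
    (hfix : ∀ σ : L ≃ₐ[ℚ] L, σ (ζ : L) = ζ → σ (α : L) = α → σ = 1) :
    idealCount L p = if p % m = 1 ∧ ∃ y : ZMod p, y ^ N = (g : ZMod p)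
      then (Module.finrank ℚ L : ℝ) else 0 := by
  rw [idealCount, if_neg hp.ne_zero]
  split_ifs with hcond
  · obtain ⟨hmod, hroot⟩ := hcond
    have hmax := isMaximal_span_natCast hp
    have hstab : ∀ Q ∈ (span {(p : ℤ)}).primesOver (𝓞 L),
        MulAction.stabilizer (L ≃ₐ[ℚ] L) Q = ⊥ := fun Q hQ =>
      stabilizer_eq_bot_of_exists_root hp hm hNm hpm hpg hζ hα hfix hmod hroot hQ.1 (by
        have := hQ.2
        have h : (p : ℤ) ∈ Q.under ℤ := this.over ▸ mem_span_singleton_self _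
        simpa [Ideal.mem_comap, under_def] using h)
    have hset : {I : Ideal (𝓞 L) | absNorm I = p} = (span {(p : ℤ)}).primesOver (𝓞 L) := by
      ext Q
      constructor
      · intro hQ
        have hQ' : absNorm Q = p := hQ
        have hprime : Q.IsPrime := isPrime_of_irreducible_absNorm (by rw [hQ']; exact hp)
        exact ⟨hprime, liesOver_span_of_natCast_mem hp hprime (hQ' ▸ absNorm_mem Q)⟩
      · intro hQ
        have hQ1 := hQ.1
        have hQ2 := hQ.2
        have hcard := card_stabilizer_eq (G := L ≃ₐ[ℚ] L) (span {(p : ℤ)}) Q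
        rw [hstab Q hQ, Subgroup.card_bot] at hcard
        have hf : (span {(p : ℤ)}).inertiaDegIn (𝓞 L) = 1 :=
          Nat.eq_one_of_mul_eq_one_left hcard.symm
        rw [inertiaDegIn_eq_inertiaDeg _ Q (L ≃ₐ[ℚ] L)] at hf
        have hQm : Q.IsMaximal := IsMaximal.of_liesOver_isMaximal Q (span {(p : ℤ)})
        change absNorm Q = p
        rw [absNorm_eq_pow_inertiaDeg' Q hp, inertiaDeg'_eq_inertiaDeg, hf, pow_one]
    obtain ⟨Q, hQ⟩ : ((span {(p : ℤ)}).primesOver (𝓞 L)).Nonempty :=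
      (inferInstance : Nonempty ((span {(p : ℤ)}).primesOver (𝓞 L))).elim fun Q => ⟨Q.1, Q.2⟩
    have hQ1 := hQ.1
    have hQ2 := hQ.2
    have hcard := card_stabilizer_eq (G := L ≃ₐ[ℚ] L) (span {(p : ℤ)}) Q
    rw [hstab Q hQ, Subgroup.card_bot] at hcard
    have hmain := ncard_primesOver_mul_ramificationIdxIn_mul_inertiaDegIn
      (span {(p : ℤ)}) (𝓞 L) (L ≃ₐ[ℚ] L)
    rw [← hcard, mul_one, IsGaloisGroup.card_eq_finrank (L ≃ₐ[ℚ] L) ℚ L, ← hset] at hmain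
    rw [← hmain]
    rfl
  · rw [Nat.cast_eq_zero, Nat.card_eq_zero]
    left
    exact ⟨fun I => hcond (mod_eq_one_and_exists_root_of_absNorm_eq hp hm hpm hζ hα I.2)⟩

end Splitting

section SplittingField

open NumberField

variable {L : Type*} [Field L] [NumberField L] {m N : ℕ} {g : ℤ}

lemma exists_generators_of_isSplittingField (hm : m ≠ 0) (hN : N ≠ 0) (hNm : N ∣ m) (hg : g ≠ 0)
    (hL : IsSplittingField ℚ L ((X ^ N - C (g : ℚ)) * (X ^ m - 1))) :
    ∃ ζ α : 𝓞 L, IsPrimitiveRoot ζ m ∧ α ^ N = g ∧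
      ∀ σ : L ≃ₐ[ℚ] L, σ (ζ : L) = ζ → σ (α : L) = α → σ = 1 := by
  have hsplit := hL.splits'
  have hne1 : (X ^ N - C (g : ℚ)) ≠ 0 := X_pow_sub_C_ne_zero (Nat.pos_of_ne_zero hN) _
  have hne2 : (X ^ m - 1 : ℚ[X]) ≠ 0 := by
    simpa using X_pow_sub_C_ne_zero (Nat.pos_of_ne_zero hm) (1 : ℚ)
  have hne : ((X ^ N - C (g : ℚ)) * (X ^ m - 1)).map (algebraMap ℚ L) ≠ 0 :=
    (Polynomial.map_ne_zero_iff (algebraMap ℚ L).injective).2 (mul_ne_zero hne1 hne2)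
  have : NeZero m := ⟨hm⟩
  have : NeZero ((m : ℕ) : L) := ⟨by exact_mod_cast hm⟩
  have hcyc : ((cyclotomic m ℚ).map (algebraMap ℚ L)).Splits := by
    refine hsplit.of_dvd hne (Polynomial.map_dvd _ ?_)
    exact (cyclotomic.dvd_X_pow_sub_one m ℚ).mul_left _
  obtain ⟨z, hz⟩ := hcyc.exists_eval_eq_zero (by
    rw [map_cyclotomic, degree_cyclotomic]
    exact_mod_cast (Nat.totient_pos.2 (Nat.pos_of_ne_zero hm)).ne')
  rw [map_cyclotomic] at hz
  have hzprim : IsPrimitiveRoot z m := isRoot_cyclotomic_iff.1 hz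
  obtain ⟨a, ha⟩ := (hsplit.of_dvd hne (Polynomial.map_dvd (algebraMap ℚ L)
    (dvd_mul_right (X ^ N - C (g : ℚ)) (X ^ m - 1)))).exists_eval_eq_zero (by
      rw [degree_map, degree_X_pow_sub_C (Nat.pos_of_ne_zero hN)]
      exact_mod_cast hN)
  have haN : a ^ N = (g : L) := by simpa [sub_eq_zero] using ha
  have haint : IsIntegral ℤ a := by
    refine ⟨X ^ N - C g, monic_X_pow_sub_C g hN, ?_⟩
    rw [eval₂_sub, eval₂_C, eval₂_X_pow, haN]
    simp
  have ha0 : a ≠ 0 := by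
    rintro rfl
    rw [zero_pow hN] at haN
    exact hg (by exact_mod_cast haN.symm)
  obtain ⟨b, hb⟩ : ∃ b : 𝓞 L, algebraMap (𝓞 L) L b = a := ⟨⟨a, haint⟩, rfl⟩
  refine ⟨hzprim.toInteger, b, hzprim.toInteger_isPrimitiveRoot,
    RingOfIntegers.coe_injective (by rw [map_pow, map_intCast, hb, haN]), fun σ hσz hσa => ?_⟩
  have hσz' : σ z = z := hσz
  have hσa' : σ a = a := by rw [← hb]; exact hσa
  have hunit : ∀ x : L, x ^ m = 1 → σ x = x := by
    intro x hx
    obtain ⟨i, -, rfl⟩ := hzprim.eq_pow_of_pow_eq_one hx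
    rw [map_pow, hσz']
  have hhom : (σ : L →ₐ[ℚ] L) = AlgHom.id ℚ L := by
    refine AlgHom.ext_of_adjoin_eq_top hL.adjoin_rootSet' fun x hx => ?_
    change σ x = x
    rw [mem_rootSet] at hx
    have hx2 := hx.2
    rw [map_mul, mul_eq_zero] at hx2
    rcases hx2 with h | h
    · have hxN : x ^ N = (g : L) := by simpa [sub_eq_zero] using h
      have h1 : (x / a) ^ m = 1 := by
        obtain ⟨d, rfl⟩ := hNm
        rw [pow_mul, div_pow, hxN, haN, div_self (by exact_mod_cast hg), one_pow]
      have h2 := hunit _ h1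
      rwa [map_div₀, hσa', div_left_inj' ha0] at h2
    · exact hunit x (by simpa [sub_eq_zero] using h)
  ext x
  exact DFunLike.congr_fun hhom x

lemma idealCount_cyclotomic_prime_eq [NeZero m] (K : Type*) [Field K] [NumberField K]
    [IsCyclotomicExtension {m} ℚ K] {p : ℕ} (hp : p.Prime) (hm : 2 ≤ m) (hpm : ¬ p ∣ m) :
    idealCount K p = if p % m = 1 then (m.totient : ℝ) else 0 := by
  have hz := IsCyclotomicExtension.zeta_spec m ℚ K
  have : IsGalois ℚ K := IsCyclotomicExtension.isGalois {m} ℚ K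
  have h := idealCount_prime_eq (L := K) (N := 1) (g := 1) (α := 1) hp hm (one_dvd m) hpm
    (fun h => hp.one_lt.ne' (by exact_mod_cast Int.eq_one_of_dvd_one (by positivity) h))
    hz.toInteger_isPrimitiveRoot (by simp) (fun σ hσ _ => by
      have hhom : (σ : K →ₐ[ℚ] K) = AlgHom.id ℚ K := by
        refine AlgHom.ext_of_adjoin_eq_top
          (IsCyclotomicExtension.adjoin_primitive_root_eq_top hz) fun x hx => ?_
        rw [Set.mem_singleton_iff.1 hx]
        exact hσ
      ext x
      exact DFunLike.congr_fun hhom x)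
  rw [h, IsCyclotomicExtension.finrank K (cyclotomic.irreducible_rat (by omega : 0 < m))]
  congr 1
  simp

lemma abs_mul_idealCount_prime_le (K : Type*) [Field K] [NumberField K] {c : ℝ} (hc : 0 < c)
    (p : Nat.Primes) : |1 / c * idealCount K p| ≤ 1 / c * 2 ^ Module.finrank ℚ K := by
  rw [abs_of_nonneg (mul_nonneg (by positivity) (idealCount_nonneg K p))]
  refine mul_le_mul_of_nonneg_left ?_ (by positivity)
  have := idealCount_prime_pow_le (K := K) p.2 1
  norm_num at this
  exact this

/-- The logarithmic density of the primes `p ≡ 1 [MOD m]` modulo which `g` is not an `N`-th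
power. -/
theorem hasLogDensity_not_power (hm : 2 ≤ m) (hN : N ≠ 0) (hNm : N ∣ m) (hg : g ≠ 0)
    (hL : IsSplittingField ℚ L ((X ^ N - C (g : ℚ)) * (X ^ m - 1))) {P : Set ℕ}
    (hP : P = {q : ℕ | q.Prime ∧ ¬ ((q : ℤ) ∣ m * g) ∧ q % m = 1 ∧
        ¬ ∃ y : ZMod q, y ^ N = (g : ZMod q)}) :
    HasLogDensity (fun p => if (p : ℕ) ∈ P then 1 else 0)
      (1 / (m.totient : ℝ) - 1 / (Module.finrank ℚ L : ℝ)) := by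
  have : NeZero m := ⟨by omega⟩
  have : IsCyclotomicExtension {m} ℚ (CyclotomicField m ℚ) := by
    convert CyclotomicField.isCyclotomicExtension m ℚ
    · rfl
    · exact Subsingleton.elim _ _
  have : Normal ℚ L := Normal.of_isSplittingField ((X ^ N - C (g : ℚ)) * (X ^ m - 1))
  have : IsGalois ℚ L := ⟨⟩
  obtain ⟨ζ, α, hζ, hα, hfix⟩ := exists_generators_of_isSplittingField (by omega) hN hNm hg hL
  have hφ : (0 : ℝ) < m.totient := by exact_mod_cast Nat.totient_pos.2 (by omega)
  have hn : (0 : ℝ) < Module.finrank ℚ L := by exact_mod_cast Module.finrank_pos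
  set B := 1 / (m.totient : ℝ) * 2 ^ Module.finrank ℚ (CyclotomicField m ℚ)
    + 1 / (Module.finrank ℚ L : ℝ) * 2 ^ Module.finrank ℚ L with hB
  have hB1 : 0 ≤ 1 / (m.totient : ℝ) * 2 ^ Module.finrank ℚ (CyclotomicField m ℚ) := by positivity
  have hB2 : 0 ≤ 1 / (Module.finrank ℚ L : ℝ) * 2 ^ Module.finrank ℚ L := by positivity
  have hK1 : ∀ p : Nat.Primes,
      |1 / (m.totient : ℝ) * idealCount (CyclotomicField m ℚ) p| ≤ B := fun p =>
    (abs_mul_idealCount_prime_le (CyclotomicField m ℚ) hφ p).trans (by linarith)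
  have hK2 : ∀ p : Nat.Primes, |1 / (Module.finrank ℚ L : ℝ) * idealCount L p| ≤ B := fun p =>
    (abs_mul_idealCount_prime_le L hn p).trans (by linarith)
  have h1 := (hasLogDensity_idealCount (CyclotomicField m ℚ)).const_mul (1 / (m.totient : ℝ))
  have h2 := (hasLogDensity_idealCount L).const_mul (1 / (Module.finrank ℚ L : ℝ))
  rw [mul_one] at h1 h2
  have hfin : {p : Nat.Primes | ((p : ℕ) : ℤ) ∣ m * g}.Finite := by
    have hmg : (m * g : ℤ) ≠ 0 := mul_ne_zero (by exact_mod_cast (by omega : m ≠ 0)) hg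
    refine Set.Finite.of_finite_image (f := fun p : Nat.Primes => (p : ℕ)) ?_
      (Subtype.val_injective.injOn)
    refine (Set.finite_Iic (m * g : ℤ).natAbs).subset ?_
    rintro _ ⟨p, hp, rfl⟩
    exact Nat.le_of_dvd (Int.natAbs_pos.2 hmg) (Int.natCast_dvd.1 hp)
  refine (h1.sub h2 hK1 hK2).congr_cofinite (B := 2 * B + 1)
    (fun p => (abs_sub _ _).trans (by linarith [hK1 p, hK2 p])) (fun p => ?_) hfin fun p hp => ?_
  · split_ifs <;> simp <;> linarith
  · have hp' : ¬ ((p : ℕ) : ℤ) ∣ m * g := hp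
    have hpm : ¬ (p : ℕ) ∣ m := fun h => hp' ((Int.natCast_dvd_natCast.2 h).mul_right g)
    have hpg : ¬ ((p : ℕ) : ℤ) ∣ g := fun h => hp' (h.mul_left _)
    rw [idealCount_cyclotomic_prime_eq (CyclotomicField m ℚ) p.2 hm hpm,
      idealCount_prime_eq p.2 hm hNm hpm hpg hζ hα hfix, hP]
    by_cases hmod : (p : ℕ) % m = 1
    · by_cases hy : ∃ y : ZMod p, y ^ N = (g : ZMod p)
      · simp [hmod, hy, hφ.ne', hn.ne']
      · simp only [hmod, hy, Set.mem_ofPred_eq, p.2, hp']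
        simp [hφ.ne']
    · simp [hmod]

end SplittingField

section Karamata

open MeasureTheory Set Topology

/-- The normalised Laplace-type sum `σ^ρ ∑ aₙ e^{-σ lₙ} q(e^{-σ lₙ})`. -/
noncomputable def laplaceSum (a l : ℕ → ℝ) (ρ : ℝ) (q : ℝ → ℝ) (σ : ℝ) : ℝ :=
  σ ^ ρ * ∑' n, a n * Real.exp (-(σ * l n)) * q (Real.exp (-(σ * l n)))

/-- The limit functional attached to `laplaceSum` by Karamata's theorem. -/
noncomputable def gammaFunctional (ρ : ℝ) (q : ℝ → ℝ) : ℝ :=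
  ∫ t in Ioi (0 : ℝ), Real.exp (-t) * t ^ (ρ - 1) * q (Real.exp (-t))

lemma integrableOn_gammaFunctional {ρ : ℝ} (hρ : 0 < ρ) {q : ℝ → ℝ} (hq : Measurable q) {S : ℝ}
    (hS : ∀ y ∈ Icc (0 : ℝ) 1, |q y| ≤ S) :
    IntegrableOn (fun t : ℝ => Real.exp (-t) * t ^ (ρ - 1) * q (Real.exp (-t))) (Ioi 0) := by
  refine Integrable.mul_bdd (c := S) (Real.GammaIntegral_convergent hρ)
    (hq.comp (by fun_prop)).aestronglyMeasurable ?_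
  filter_upwards [ae_restrict_mem measurableSet_Ioi] with t ht
  exact hS _ ⟨(Real.exp_pos _).le, Real.exp_le_one_iff.mpr (by simpa using le_of_lt ht)⟩

lemma abs_gammaFunctional_sub_le {ρ : ℝ} (hρ : 0 < ρ) {q r w : ℝ → ℝ}
    (hq : Measurable q) (hr : Measurable r) (hw : Measurable w) {S T U : ℝ}
    (hS : ∀ y ∈ Icc (0 : ℝ) 1, |q y| ≤ S) (hT : ∀ y ∈ Icc (0 : ℝ) 1, |r y| ≤ T)
    (hU : ∀ y ∈ Icc (0 : ℝ) 1, |w y| ≤ U) (h : ∀ y ∈ Icc (0 : ℝ) 1, |q y - r y| ≤ w y) :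
    |gammaFunctional ρ q - gammaFunctional ρ r| ≤ gammaFunctional ρ w := by
  unfold gammaFunctional
  rw [← integral_sub (integrableOn_gammaFunctional hρ hq hS)
    (integrableOn_gammaFunctional hρ hr hT)]
  rw [← Real.norm_eq_abs]
  refine norm_integral_le_of_norm_le (integrableOn_gammaFunctional hρ hw hU) ?_
  filter_upwards [ae_restrict_mem measurableSet_Ioi] with t ht
  have hy : Real.exp (-t) ∈ Icc (0 : ℝ) 1 :=
    ⟨(Real.exp_pos _).le, Real.exp_le_one_iff.mpr (by simpa using le_of_lt ht)⟩
  have h0 : 0 ≤ Real.exp (-t) * t ^ (ρ - 1) :=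
    mul_nonneg (Real.exp_pos _).le (Real.rpow_nonneg (le_of_lt ht) _)
  rw [← mul_sub, Real.norm_eq_abs, abs_mul, abs_of_nonneg h0]
  exact mul_le_mul_of_nonneg_left (h _ hy) h0

variable {a l : ℕ → ℝ} {ρ C : ℝ}

lemma summable_laplaceSum (ha : ∀ n, 0 ≤ a n) (hl : ∀ n, 0 ≤ l n)
    (hs : ∀ σ > 0, Summable fun n => a n * Real.exp (-(σ * l n))) {q : ℝ → ℝ} {S : ℝ}
    (hS : ∀ y ∈ Icc (0 : ℝ) 1, |q y| ≤ S) {σ : ℝ} (hσ : 0 < σ) :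
    Summable fun n => a n * Real.exp (-(σ * l n)) * q (Real.exp (-(σ * l n))) := by
  refine Summable.of_norm_bounded ((hs σ hσ).mul_right S) fun n => ?_
  have hy : Real.exp (-(σ * l n)) ∈ Icc (0 : ℝ) 1 :=
    ⟨(Real.exp_pos _).le, Real.exp_le_one_iff.mpr (by have := mul_nonneg hσ.le (hl n); linarith)⟩
  have h0 : 0 ≤ a n * Real.exp (-(σ * l n)) := mul_nonneg (ha n) (Real.exp_pos _).le
  rw [norm_mul, Real.norm_of_nonneg h0]
  exact mul_le_mul_of_nonneg_left (hS _ hy) h0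

lemma abs_laplaceSum_sub_le (ha : ∀ n, 0 ≤ a n) (hl : ∀ n, 0 ≤ l n)
    (hs : ∀ σ > 0, Summable fun n => a n * Real.exp (-(σ * l n))) {q r w : ℝ → ℝ} {S T U : ℝ}
    (hS : ∀ y ∈ Icc (0 : ℝ) 1, |q y| ≤ S) (hT : ∀ y ∈ Icc (0 : ℝ) 1, |r y| ≤ T)
    (hU : ∀ y ∈ Icc (0 : ℝ) 1, |w y| ≤ U) (h : ∀ y ∈ Icc (0 : ℝ) 1, |q y - r y| ≤ w y)
    {σ : ℝ} (hσ : 0 < σ) :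
    |laplaceSum a l ρ q σ - laplaceSum a l ρ r σ| ≤ laplaceSum a l ρ w σ := by
  unfold laplaceSum
  rw [← mul_sub, abs_mul, abs_of_nonneg (Real.rpow_nonneg hσ.le _)]
  refine mul_le_mul_of_nonneg_left ?_ (Real.rpow_nonneg hσ.le _)
  rw [← (summable_laplaceSum ha hl hs hS hσ).tsum_sub (summable_laplaceSum ha hl hs hT hσ),
    ← Real.norm_eq_abs]
  refine tsum_of_norm_bounded (summable_laplaceSum ha hl hs hU hσ).hasSum fun n => ?_
  have hy : Real.exp (-(σ * l n)) ∈ Icc (0 : ℝ) 1 :=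
    ⟨(Real.exp_pos _).le, Real.exp_le_one_iff.mpr (by have := mul_nonneg hσ.le (hl n); linarith)⟩
  have h0 : 0 ≤ a n * Real.exp (-(σ * l n)) := mul_nonneg (ha n) (Real.exp_pos _).le
  rw [← mul_sub, Real.norm_eq_abs, abs_mul, abs_of_nonneg h0]
  exact mul_le_mul_of_nonneg_left (h _ hy) h0

/-- Convergence of `laplaceSum` passes to functions that can be approximated in the limit
functional. -/
lemma tendsto_laplaceSum_of_approx (hρ : 0 < ρ) (ha : ∀ n, 0 ≤ a n) (hl : ∀ n, 0 ≤ l n)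
    (hs : ∀ σ > 0, Summable fun n => a n * Real.exp (-(σ * l n))) (c : ℝ) (hc : 0 ≤ c)
    {q : ℝ → ℝ} (hq : Measurable q) {S : ℝ} (hS : ∀ y ∈ Icc (0 : ℝ) 1, |q y| ≤ S)
    (happ : ∀ ε > 0, ∃ r w : ℝ → ℝ, ∃ T U : ℝ, Measurable r ∧ Measurable w ∧
      (∀ y ∈ Icc (0 : ℝ) 1, |r y| ≤ T) ∧ (∀ y ∈ Icc (0 : ℝ) 1, |w y| ≤ U) ∧
      (∀ y ∈ Icc (0 : ℝ) 1, |q y - r y| ≤ w y) ∧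
      c * gammaFunctional ρ w < ε ∧
      Tendsto (laplaceSum a l ρ r) (𝓝[>] 0) (𝓝 (c * gammaFunctional ρ r)) ∧
      Tendsto (laplaceSum a l ρ w) (𝓝[>] 0) (𝓝 (c * gammaFunctional ρ w))) :
    Tendsto (laplaceSum a l ρ q) (𝓝[>] 0) (𝓝 (c * gammaFunctional ρ q)) := by
  rw [Metric.tendsto_nhds]
  intro ε hε
  obtain ⟨r, w, T, U, hr, hw, hT, hU, h, hwε, h1, h2⟩ := happ (ε / 3) (by positivity)
  have h1' := (Metric.tendsto_nhds.mp h1) (ε / 3) (by positivity)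
  have h2' := h2.eventually_lt_const hwε
  filter_upwards [h1', h2', self_mem_nhdsWithin] with σ e1 e2 hσ
  have e3 := abs_laplaceSum_sub_le (ρ := ρ) ha hl hs hS hT hU h hσ
  have e4 := abs_gammaFunctional_sub_le hρ hq hr hw hS hT hU h
  have e5 := mul_le_mul_of_nonneg_left e4 hc
  rw [← abs_of_nonneg hc, ← abs_mul, mul_sub, abs_of_nonneg hc] at e5
  rw [Real.dist_eq] at e1 ⊢
  rw [abs_le] at e3 e5
  rw [abs_lt] at e1 ⊢
  constructor <;> linarith

lemma tendsto_laplaceSum_pow (hρ : 0 < ρ)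
    (hlim : Tendsto (fun σ => σ ^ ρ * ∑' n, a n * Real.exp (-(σ * l n))) (𝓝[>] 0) (𝓝 C)) (k : ℕ) :
    Tendsto (laplaceSum a l ρ fun y => y ^ k) (𝓝[>] 0)
      (𝓝 (C / Real.Gamma ρ * gammaFunctional ρ fun y => y ^ k)) := by
  have hk : (0 : ℝ) < k + 1 := by positivity
  have hval : (gammaFunctional ρ fun y => y ^ k) = (1 / ((k : ℝ) + 1)) ^ ρ * Real.Gamma ρ := by
    rw [← Real.integral_rpow_mul_exp_neg_mul_Ioi hρ hk]
    refine integral_congr_ae (Eventually.of_forall fun t => ?_)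
    simp only
    rw [← Real.exp_nat_mul, mul_comm (Real.exp (-t)), mul_assoc, ← Real.exp_add]
    ring_nf
  have hG := (Real.Gamma_pos_of_pos hρ).ne'
  rw [hval, show C / Real.Gamma ρ * ((1 / ((k : ℝ) + 1)) ^ ρ * Real.Gamma ρ)
    = (1 / ((k : ℝ) + 1)) ^ ρ * C by field_simp]
  have hmul : Tendsto (fun σ : ℝ => ((k : ℝ) + 1) * σ) (𝓝[>] 0) (𝓝[>] 0) := by
    refine tendsto_nhdsWithin_iff.mpr ⟨?_, ?_⟩
    · have : Tendsto (fun σ : ℝ => ((k : ℝ) + 1) * σ) (𝓝 0) (𝓝 (((k : ℝ) + 1) * 0)) :=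
        tendsto_id.const_mul _
      rw [mul_zero] at this
      exact this.mono_left nhdsWithin_le_nhds
    · filter_upwards [self_mem_nhdsWithin] with σ hσ
      exact mul_pos hk hσ
  refine ((hlim.comp hmul).const_mul ((1 / ((k : ℝ) + 1)) ^ ρ)).congr' ?_
  filter_upwards [self_mem_nhdsWithin] with σ hσ
  have hσ' : (0 : ℝ) < σ := hσ
  simp only [Function.comp_apply, laplaceSum]
  rw [← mul_assoc, ← Real.mul_rpow (by positivity) (by positivity),
    show 1 / ((k : ℝ) + 1) * ((k + 1) * σ) = σ by field_simp]
  congr 1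
  refine tsum_congr fun n => ?_
  rw [mul_assoc (a n), ← Real.exp_nat_mul, ← Real.exp_add]
  congr 2
  ring

lemma tendsto_laplaceSum_polynomial (hρ : 0 < ρ) (ha : ∀ n, 0 ≤ a n) (hl : ∀ n, 0 ≤ l n)
    (hs : ∀ σ > 0, Summable fun n => a n * Real.exp (-(σ * l n)))
    (hlim : Tendsto (fun σ => σ ^ ρ * ∑' n, a n * Real.exp (-(σ * l n))) (𝓝[>] 0) (𝓝 C))
    (p : ℝ[X]) :
    Tendsto (laplaceSum a l ρ fun y => p.eval y) (𝓝[>] 0)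
      (𝓝 (C / Real.Gamma ρ * gammaFunctional ρ fun y => p.eval y)) := by
  have hpow : ∀ k : ℕ, ∀ y ∈ Icc (0 : ℝ) 1, |y ^ k| ≤ 1 := fun k y hy => by
    rw [abs_of_nonneg (pow_nonneg hy.1 k)]
    exact pow_le_one₀ hy.1 hy.2
  have h1 : (gammaFunctional ρ fun y => p.eval y) =
      ∑ i ∈ Finset.range (p.natDegree + 1), p.coeff i * gammaFunctional ρ fun y => y ^ i := by
    unfold gammaFunctional
    simp_rw [← integral_const_mul]
    rw [← integral_finsetSum]
    · refine integral_congr_ae (Eventually.of_forall fun t => ?_)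
      simp only [Polynomial.eval_eq_sum_range, Finset.mul_sum]
      exact Finset.sum_congr rfl fun i _ => by ring
    · exact fun i _ => (integrableOn_gammaFunctional hρ (by fun_prop) (hpow i)).const_mul _
  rw [h1, Finset.mul_sum]
  have h2 : Tendsto (fun σ => ∑ i ∈ Finset.range (p.natDegree + 1),
      p.coeff i * laplaceSum a l ρ (fun y => y ^ i) σ) (𝓝[>] 0)
      (𝓝 (∑ i ∈ Finset.range (p.natDegree + 1),
        p.coeff i * (C / Real.Gamma ρ * gammaFunctional ρ fun y => y ^ i))) :=
    tendsto_finsetSum _ fun i _ => (tendsto_laplaceSum_pow hρ hlim i).const_mul _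
  refine (h2.congr' ?_).trans (le_of_eq ?_)
  · filter_upwards [self_mem_nhdsWithin] with σ hσ
    unfold laplaceSum
    simp_rw [mul_left_comm _ (σ ^ ρ)]
    rw [← Finset.mul_sum]
    congr 1
    simp_rw [← tsum_mul_left]
    rw [← Summable.tsum_finsetSum fun i _ =>
      ((summable_laplaceSum ha hl hs (hpow i) hσ).mul_left _)]
    refine tsum_congr fun n => ?_
    simp only [Polynomial.eval_eq_sum_range, Finset.mul_sum]
    exact Finset.sum_congr rfl fun i _ => by ring
  · congr 1
    exact Finset.sum_congr rfl fun i _ => by ring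

lemma nonneg_of_tendsto_laplace (ha : ∀ n, 0 ≤ a n)
    (hlim : Tendsto (fun σ => σ ^ ρ * ∑' n, a n * Real.exp (-(σ * l n))) (𝓝[>] 0) (𝓝 C)) :
    0 ≤ C := by
  refine ge_of_tendsto hlim ?_
  filter_upwards [self_mem_nhdsWithin] with σ hσ
  exact mul_nonneg (Real.rpow_nonneg (le_of_lt hσ) _)
    (tsum_nonneg fun n => mul_nonneg (ha n) (Real.exp_pos _).le)

lemma tendsto_laplaceSum_continuous (hρ : 0 < ρ) (ha : ∀ n, 0 ≤ a n) (hl : ∀ n, 0 ≤ l n)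
    (hs : ∀ σ > 0, Summable fun n => a n * Real.exp (-(σ * l n)))
    (hlim : Tendsto (fun σ => σ ^ ρ * ∑' n, a n * Real.exp (-(σ * l n))) (𝓝[>] 0) (𝓝 C))
    {q : ℝ → ℝ} (hq : Continuous q) :
    Tendsto (laplaceSum a l ρ q) (𝓝[>] 0) (𝓝 (C / Real.Gamma ρ * gammaFunctional ρ q)) := by
  have hbdd : ∀ r : ℝ → ℝ, Continuous r → ∃ S, ∀ y ∈ Icc (0 : ℝ) 1, |r y| ≤ S := fun r hr => by
    obtain ⟨S, hS⟩ := isCompact_Icc.exists_bound_of_continuousOn (hr.continuousOn (s := Icc 0 1))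
    exact ⟨S, hS⟩
  have hC := nonneg_of_tendsto_laplace ha hlim
  have hG := Real.Gamma_pos_of_pos hρ
  have hc : 0 ≤ C / Real.Gamma ρ := div_nonneg hC hG.le
  obtain ⟨S, hS⟩ := hbdd q hq
  refine tendsto_laplaceSum_of_approx hρ ha hl hs _ hc hq.measurable hS fun ε hε => ?_
  have hη : 0 < ε / (C + 1) := by positivity
  obtain ⟨p, hp⟩ := exists_polynomial_near_of_continuousOn 0 1 q hq.continuousOn _ hη
  obtain ⟨T, hT⟩ := hbdd (fun y => p.eval y) p.continuous
  have hconst : (gammaFunctional ρ fun _ => ε / (C + 1)) = ε / (C + 1) * Real.Gamma ρ := by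
    unfold gammaFunctional
    rw [integral_mul_const, mul_comm, Real.Gamma_eq_integral hρ]
  refine ⟨fun y => p.eval y, fun _ => ε / (C + 1), T, ε / (C + 1), p.continuous.measurable,
    measurable_const, hT, fun y _ => (abs_of_pos hη).le, fun y hy => ?_, ?_,
    tendsto_laplaceSum_polynomial hρ ha hl hs hlim p, ?_⟩
  · rw [abs_sub_comm]
    exact (hp y hy).le
  · rw [hconst, show C / Real.Gamma ρ * (ε / (C + 1) * Real.Gamma ρ) = ε * (C / (C + 1)) by
      field_simp]
    have : C / (C + 1) < 1 := (div_lt_one (by positivity)).mpr (by linarith)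
    nlinarith
  · simpa using tendsto_laplaceSum_polynomial hρ ha hl hs hlim (Polynomial.C (ε / (C + 1)))

lemma tendsto_laplaceSum_indicator (hρ : 0 < ρ) (ha : ∀ n, 0 ≤ a n) (hl : ∀ n, 0 ≤ l n)
    (hs : ∀ σ > 0, Summable fun n => a n * Real.exp (-(σ * l n)))
    (hlim : Tendsto (fun σ => σ ^ ρ * ∑' n, a n * Real.exp (-(σ * l n))) (𝓝[>] 0) (𝓝 C))
    {q : ℝ → ℝ} (hq : Continuous q) (y₀ : ℝ) :
    Tendsto (laplaceSum a l ρ ((Ici y₀).indicator q)) (𝓝[>] 0)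
      (𝓝 (C / Real.Gamma ρ * gammaFunctional ρ ((Ici y₀).indicator q))) := by
  have hbdd : ∀ r : ℝ → ℝ, Continuous r → ∃ S, ∀ y ∈ Icc (0 : ℝ) 1, |r y| ≤ S := fun r hr => by
    obtain ⟨S, hS⟩ := isCompact_Icc.exists_bound_of_continuousOn (hr.continuousOn (s := Icc 0 1))
    exact ⟨S, hS⟩
  have hc : 0 ≤ C / Real.Gamma ρ :=
    div_nonneg (nonneg_of_tendsto_laplace ha hlim) (Real.Gamma_pos_of_pos hρ).le
  obtain ⟨S, hS⟩ := hbdd q hq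
  have hS0 : 0 ≤ S := (abs_nonneg _).trans (hS 0 ⟨le_rfl, zero_le_one⟩)
  -- the tent function of width `ε`
  let w : ℝ → ℝ → ℝ := fun ε y => S * max 0 (1 - |y - y₀| / ε)
  have hwc : ∀ ε, Continuous (w ε) := fun ε => by fun_prop
  have hw01 : ∀ ε > 0, ∀ y, 0 ≤ max 0 (1 - |y - y₀| / ε) ∧ max 0 (1 - |y - y₀| / ε) ≤ 1 :=
    fun ε hε y => ⟨le_max_left _ _, max_le zero_le_one (by
      have : 0 ≤ |y - y₀| / ε := by positivity
      linarith)⟩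
  have hwlim : Tendsto (fun ε => C / Real.Gamma ρ * gammaFunctional ρ (w ε)) (𝓝[>] 0) (𝓝 0) := by
    have : Tendsto (fun ε => gammaFunctional ρ (w ε)) (𝓝[>] 0)
        (𝓝 (∫ t in Ioi (0 : ℝ), (0 : ℝ))) := by
      refine tendsto_integral_filter_of_dominated_convergence
        (fun t => Real.exp (-t) * t ^ (ρ - 1) * S) ?_ ?_
        ((Real.GammaIntegral_convergent hρ).mul_const S) ?_
      · refine Eventually.of_forall fun ε => ?_
        have : Continuous (w ε) := hwc ε
        exact Measurable.aestronglyMeasurable (by fun_prop)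
      · filter_upwards [self_mem_nhdsWithin] with ε hε
        filter_upwards [ae_restrict_mem measurableSet_Ioi] with t ht
        have h0 : 0 ≤ Real.exp (-t) * t ^ (ρ - 1) :=
          mul_nonneg (Real.exp_pos _).le (Real.rpow_nonneg (le_of_lt ht) _)
        obtain ⟨h1, h2⟩ := hw01 ε hε (Real.exp (-t))
        rw [Real.norm_of_nonneg (mul_nonneg h0 (mul_nonneg hS0 h1))]
        exact mul_le_mul_of_nonneg_left (mul_le_of_le_one_right hS0 h2) h0
      · have hne : ∀ᵐ t : ℝ ∂volume.restrict (Ioi 0), t ≠ -Real.log y₀ :=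
          ae_restrict_of_ae (by simp [ae_iff])
        filter_upwards [hne] with t ht
        have hne' : Real.exp (-t) ≠ y₀ := by
          rintro rfl
          simp at ht
        have hpos : 0 < |Real.exp (-t) - y₀| := abs_pos.mpr (sub_ne_zero.mpr hne')
        refine tendsto_const_nhds.congr' ?_
        filter_upwards [Ioo_mem_nhdsGT hpos] with ε hε
        have : 1 ≤ |Real.exp (-t) - y₀| / ε := (one_le_div hε.1).mpr hε.2.le
        simp only [w]
        rw [max_eq_left (by linarith)]
        simp
    simpa using this.const_mul (C / Real.Gamma ρ)
  refine tendsto_laplaceSum_of_approx hρ ha hl hs _ hc (S := S)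
    (hq.measurable.indicator measurableSet_Ici) (fun y hy => ?_) fun ε hε => ?_
  · by_cases h : y ∈ Ici y₀
    · rw [indicator_of_mem h]
      exact hS y hy
    · rw [indicator_of_notMem h]
      simpa using hS0
  obtain ⟨η, hη, hηpos⟩ := ((hwlim.eventually_lt_const hε).and self_mem_nhdsWithin).exists
  have hηpos' : 0 < η := hηpos
  let r : ℝ → ℝ := fun y => q y * max 0 (min 1 ((y - y₀) / η + 1))
  have hrc : Continuous r := by fun_prop
  obtain ⟨T, hT⟩ := hbdd r hrc
  obtain ⟨U, hU⟩ := hbdd (w η) (hwc η)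
  refine ⟨r, w η, T, U, hrc.measurable, (hwc η).measurable, hT, hU, fun y hy => ?_, hη,
    tendsto_laplaceSum_continuous hρ ha hl hs hlim hrc,
    tendsto_laplaceSum_continuous hρ ha hl hs hlim (hwc η)⟩
  simp only [r, w]
  by_cases h : y₀ ≤ y
  · rw [indicator_of_mem (mem_Ici.mpr h), min_eq_left, max_eq_right zero_le_one, mul_one, sub_self,
      abs_zero]
    · exact mul_nonneg hS0 (hw01 η hηpos y).1
    · have : 0 ≤ (y - y₀) / η := div_nonneg (by linarith) hηpos'.le
      linarith
  · push Not at h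
    rw [indicator_of_notMem (by simpa using h), zero_sub, abs_neg, abs_mul,
      abs_of_neg (by linarith : y - y₀ < 0), min_eq_right,
      abs_of_nonneg (le_max_left 0 ((y - y₀) / η + 1))]
    · rw [show 1 - -(y - y₀) / η = (y - y₀) / η + 1 by ring]
      exact mul_le_mul_of_nonneg_right (hS y hy) (le_max_left _ _)
    · have : (y - y₀) / η ≤ 0 := div_nonpos_of_nonpos_of_nonneg (by linarith) hηpos'.le
      linarith

/-- **Karamata's Tauberian theorem**, with a continuous weight. -/
theorem karamata (hρ : 0 < ρ) (ha : ∀ n, 0 ≤ a n) (hl : ∀ n, 0 ≤ l n)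
    (hs : ∀ σ > 0, Summable fun n => a n * Real.exp (-(σ * l n)))
    (hlim : Tendsto (fun σ => σ ^ ρ * ∑' n, a n * Real.exp (-(σ * l n))) (𝓝[>] 0) (𝓝 C))
    {φ : ℝ → ℝ} (hφ : Continuous φ) {b : ℝ} (hb : 0 < b) :
    Tendsto (fun σ => σ ^ ρ * ∑' n, if σ * l n ≤ b then a n * φ (σ * l n) else 0) (𝓝[>] 0)
      (𝓝 (C / Real.Gamma ρ * ∫ t in (0 : ℝ)..b, t ^ (ρ - 1) * φ t)) := by
  let y₁ : ℝ := Real.exp (-b)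
  have hy₁ : 0 < y₁ := Real.exp_pos _
  let q : ℝ → ℝ := fun y => φ (-Real.log (max y y₁)) / max y y₁
  have hmax : ∀ y, 0 < max y y₁ := fun y => lt_max_of_lt_right hy₁
  have hq : Continuous q := by
    refine Continuous.div (hφ.comp (Continuous.neg (Continuous.log (by fun_prop)
      fun y => (hmax y).ne'))) (by fun_prop) fun y => (hmax y).ne'
  have hqval : ∀ t, Real.exp (-t) * (Ici y₁).indicator q (Real.exp (-t)) =
      if t ≤ b then φ t else 0 := fun t => by
    split_ifs with h
    · have hle : y₁ ≤ Real.exp (-t) := Real.exp_le_exp.mpr (by linarith)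
      rw [indicator_of_mem (mem_Ici.mpr hle)]
      simp only [q]
      rw [max_eq_left hle, Real.log_exp, neg_neg, mul_div_cancel₀ _ (Real.exp_pos _).ne']
    · have hlt : Real.exp (-t) < y₁ := Real.exp_lt_exp.mpr (by linarith)
      rw [indicator_of_notMem (by simpa using hlt), mul_zero]
  have key := tendsto_laplaceSum_indicator hρ ha hl hs hlim hq y₁
  have h1 : gammaFunctional ρ ((Ici y₁).indicator q) = ∫ t in (0 : ℝ)..b, t ^ (ρ - 1) * φ t := by
    unfold gammaFunctional
    rw [intervalIntegral.integral_of_le hb.le, ← Ioi_inter_Iic, ← setIntegral_indicator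
      measurableSet_Iic]
    refine integral_congr_ae (Eventually.of_forall fun t => ?_)
    simp only
    rw [mul_right_comm, hqval]
    by_cases h : t ≤ b
    · rw [if_pos h, indicator_of_mem (mem_Iic.mpr h), mul_comm]
    · rw [if_neg h, indicator_of_notMem (by simpa using h), zero_mul]
  rw [h1] at key
  refine key.congr fun σ => ?_
  unfold laplaceSum
  congr 1
  refine tsum_congr fun n => ?_
  rw [mul_assoc, hqval]
  split_ifs <;> simp

end Karamata

section PrimeSupport

open ArithmeticFunction
open scoped ArithmeticFunction.zeta ArithmeticFunction.Moebius

/-- The indicator function of the positive integers all of whose prime factors lie in `S`. -/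
noncomputable def primeSupport (S : Set ℕ) : ArithmeticFunction ℝ :=
  ⟨fun n => if n ≠ 0 ∧ ∀ q : ℕ, q.Prime → q ∣ n → q ∈ S then 1 else 0, by simp⟩

variable (S : Set ℕ)

lemma primeSupport_apply (n : ℕ) :
    primeSupport S n = if n ≠ 0 ∧ ∀ q : ℕ, q.Prime → q ∣ n → q ∈ S then 1 else 0 := rfl

lemma primeSupport_nonneg (n : ℕ) : 0 ≤ primeSupport S n := by
  rw [primeSupport_apply]; split_ifs <;> norm_num

lemma primeSupport_le_one (n : ℕ) : primeSupport S n ≤ 1 := by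
  rw [primeSupport_apply]; split_ifs <;> norm_num

lemma primeSupport_one : primeSupport S 1 = 1 := by
  rw [primeSupport_apply, if_pos]
  exact ⟨one_ne_zero, fun q hq h => absurd (Nat.dvd_one.1 h) hq.ne_one⟩

lemma primeSupport_mul (m n : ℕ) :
    primeSupport S (m * n) = primeSupport S m * primeSupport S n := by
  simp only [primeSupport_apply]
  rw [ite_zero_mul_ite_zero, mul_one]
  congr 1
  rw [eq_iff_iff]
  constructor
  · rintro ⟨h0, h⟩
    exact ⟨⟨left_ne_zero_of_mul h0, fun q hq hd => h q hq (hd.mul_right n)⟩,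
      right_ne_zero_of_mul h0, fun q hq hd => h q hq (hd.mul_left m)⟩
  · rintro ⟨⟨hm, h1⟩, hn, h2⟩
    exact ⟨mul_ne_zero hm hn, fun q hq hd => ((Nat.Prime.dvd_mul hq).1 hd).elim (h1 q hq) (h2 q hq)⟩

lemma primeSupport_prime_pow {p k : ℕ} (hp : p.Prime) (hk : k ≠ 0) :
    primeSupport S (p ^ k) = if p ∈ S then 1 else 0 := by
  rw [primeSupport_apply]
  congr 1
  rw [eq_iff_iff]
  constructor
  · rintro ⟨-, h⟩
    exact h p hp (dvd_pow_self p hk)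
  · exact fun h => ⟨pow_ne_zero k hp.ne_zero, fun q hq hd =>
      ((Nat.prime_dvd_prime_iff_eq hq hp).1 (hq.dvd_of_dvd_pow hd)) ▸ h⟩

lemma primeSupport_prime {p : ℕ} (hp : p.Prime) : primeSupport S p = if p ∈ S then 1 else 0 := by
  simpa using primeSupport_prime_pow S hp one_ne_zero

lemma pmul_primeSupport_mul (a b : ArithmeticFunction ℝ) :
    (primeSupport S).pmul (a * b) = (primeSupport S).pmul a * (primeSupport S).pmul b := by
  ext n
  rw [pmul_apply, mul_apply, mul_apply, Finset.mul_sum]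
  refine Finset.sum_congr rfl fun x hx => ?_
  rw [← (Nat.mem_divisorsAntidiagonal.1 hx).1, primeSupport_mul, pmul_apply, pmul_apply]
  ring

lemma isMultiplicative_primeSupport : (primeSupport S).IsMultiplicative :=
  ⟨primeSupport_one S, fun _ => primeSupport_mul S _ _⟩

lemma primeSupport_mul_compl : primeSupport S * primeSupport Sᶜ = ζ := by
  refine (((isMultiplicative_primeSupport S).mul (isMultiplicative_primeSupport
    Sᶜ)).eq_iff_eq_on_prime_powers _ _
    isMultiplicative_zeta.natCast).2 fun p k hp => ?_
  rw [mul_apply, Nat.sum_divisorsAntidiagonal (fun a b => primeSupport S a * primeSupport Sᶜ b),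
    Nat.sum_divisors_prime_pow hp]
  have hz : ((ζ : ArithmeticFunction ℝ)) (p ^ k) = 1 := by
    simp [natCoe_apply, zeta_apply, hp.ne_zero]
  rw [hz]
  have hd : ∀ i ∈ Finset.range (k + 1), p ^ k / p ^ i = p ^ (k - i) := fun i hi =>
    Nat.pow_div (by simpa [Nat.lt_succ_iff] using hi) hp.pos
  by_cases h : p ∈ S
  · rw [Finset.sum_eq_single_of_mem k (by simp)]
    · rw [hd k (by simp), Nat.sub_self, pow_zero, primeSupport_one, mul_one]
      rcases eq_or_ne k 0 with rfl | hk
      · simp [primeSupport_one]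
      · simp [primeSupport_prime_pow S hp hk, h]
    · intro i hi hik
      have : k - i ≠ 0 := by have := Finset.mem_range.1 hi; omega
      rw [hd i hi, primeSupport_prime_pow Sᶜ hp this]
      simp [h]
  · rw [Finset.sum_eq_single_of_mem 0 (by simp)]
    · rw [hd 0 (by simp), Nat.sub_zero, pow_zero, primeSupport_one, one_mul]
      rcases eq_or_ne k 0 with rfl | hk
      · simp [primeSupport_one]
      · simp [primeSupport_prime_pow Sᶜ hp hk, h]
    · intro i hi hik
      rw [primeSupport_prime_pow S hp hik]
      simp [h]

lemma primeSupport_mul_pmul_moebius :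
    primeSupport S * (primeSupport S).pmul (μ : ArithmeticFunction ℝ) = 1 := by
  have h := pmul_primeSupport_mul S (ζ : ArithmeticFunction ℝ) (μ : ArithmeticFunction ℝ)
  rw [pmul_zeta, coe_zeta_mul_coe_moebius] at h
  rw [← h]
  ext n
  by_cases hn : n = 1
  · subst hn; simp [primeSupport_one]
  · simp [hn]

lemma primeSupport_compl_eq :
    primeSupport Sᶜ = (primeSupport S).pmul (μ : ArithmeticFunction ℝ) * ζ := by
  rw [← primeSupport_mul_compl S, ← mul_assoc, mul_comm _ (primeSupport S),
    primeSupport_mul_pmul_moebius, one_mul]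

lemma pmul_vonMangoldt_add_compl :
    (primeSupport S).pmul Λ + (primeSupport Sᶜ).pmul Λ = Λ := by
  ext n
  rw [ArithmeticFunction.add_apply, pmul_apply, pmul_apply, ← add_mul]
  by_cases hn : IsPrimePow n
  · obtain ⟨p, k, hp, hk, rfl⟩ := (isPrimePow_nat_iff n).1 hn
    rw [primeSupport_prime_pow S hp hk.ne', primeSupport_prime_pow Sᶜ hp hk.ne']
    by_cases h : p ∈ S <;> simp [h]
  · simp [vonMangoldt_eq_zero_iff.2 hn]

/-- A Chebyshev-type identity for integers without prime factors in `S`. -/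
lemma primeSupport_compl_pmul_log :
    (primeSupport Sᶜ).pmul log =
      (primeSupport S).pmul (μ : ArithmeticFunction ℝ) * (log - ζ * ζ) + primeSupport Sᶜ * ζ
        - (primeSupport S).pmul Λ * primeSupport Sᶜ := by
  have h1 : (primeSupport Sᶜ).pmul log = (primeSupport Sᶜ).pmul Λ * primeSupport Sᶜ := by
    rw [← vonMangoldt_mul_zeta, pmul_primeSupport_mul, pmul_zeta]
  have h2 : (primeSupport Sᶜ).pmul Λ = Λ - (primeSupport S).pmul Λ :=
    eq_sub_of_add_eq' (pmul_vonMangoldt_add_compl S)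
  rw [h1, h2, sub_mul, mul_sub, ← mul_assoc, ← primeSupport_compl_eq, ← zeta_mul_vonMangoldt,
    ← mul_assoc, ← primeSupport_compl_eq]
  ring

end PrimeSupport

section LaplaceDeriv

lemma summable_mul_mul_exp {ι : Type*} {u l : ι → ℝ} (hu : ∀ i, 0 ≤ u i) (hl : ∀ i, 0 ≤ l i)
    (hs : ∀ σ : ℝ, 0 < σ → Summable fun i => u i * Real.exp (-(σ * l i))) {σ : ℝ} (hσ : 0 < σ) :
    Summable fun i => u i * l i * Real.exp (-(σ * l i)) := by
  refine Summable.of_nonneg_of_le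
    (fun i => mul_nonneg (mul_nonneg (hu i) (hl i)) (Real.exp_pos _).le) (fun i => ?_)
    ((hs (σ / 2) (by positivity)).mul_left (2 / σ))
  have h1 : σ / 2 * l i ≤ Real.exp (σ / 2 * l i) := by
    linarith [Real.add_one_le_exp (σ / 2 * l i)]
  have h2 : Real.exp (-(σ / 2 * l i)) = Real.exp (σ / 2 * l i) * Real.exp (-(σ * l i)) := by
    rw [← Real.exp_add]; ring_nf
  have h3 : l i ≤ 2 / σ * Real.exp (σ / 2 * l i) := by
    rw [div_mul_eq_mul_div, le_div_iff₀ hσ]; linarith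
  rw [h2]
  calc u i * l i * Real.exp (-(σ * l i))
      ≤ u i * (2 / σ * Real.exp (σ / 2 * l i)) * Real.exp (-(σ * l i)) :=
        mul_le_mul_of_nonneg_right (mul_le_mul_of_nonneg_left h3 (hu i)) (Real.exp_pos _).le
    _ = _ := by ring

/-- A logarithmic singularity of a positive Laplace sum may be differentiated. -/
theorem tendsto_mul_tsum_mul_exp {ι : Type*} {u l : ι → ℝ} {δ C : ℝ} (hu : ∀ i, 0 ≤ u i)
    (hl : ∀ i, 0 ≤ l i) (hs : ∀ σ : ℝ, 0 < σ → Summable fun i => u i * Real.exp (-(σ * l i)))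
    (hlim : Tendsto (fun σ : ℝ => (∑' i, u i * Real.exp (-(σ * l i))) + δ * Real.log σ)
      (𝓝[>] 0) (𝓝 C)) :
    Tendsto (fun σ : ℝ => σ * ∑' i, u i * l i * Real.exp (-(σ * l i))) (𝓝[>] 0) (𝓝 δ) := by
  set F : ℝ → ℝ := fun σ => ∑' i, u i * Real.exp (-(σ * l i)) with hF
  set G : ℝ → ℝ := fun σ => ∑' i, u i * l i * Real.exp (-(σ * l i)) with hG
  have hineq : ∀ σ : ℝ, 0 < σ → ∀ c : ℝ, 0 < c → F σ - F (c * σ) ≤ (c - 1) * (σ * G σ) := by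
    intro σ hσ c hc
    rw [hF, hG, ← (hs σ hσ).tsum_sub (hs (c * σ) (by positivity)), ← tsum_mul_left, ← tsum_mul_left]
    refine Summable.tsum_le_tsum (fun i => ?_) ((hs σ hσ).sub (hs (c * σ) (by positivity)))
      (((summable_mul_mul_exp hu hl hs hσ).mul_left _).mul_left _)
    have h1 : Real.exp (-(c * σ * l i))
        = Real.exp (-((c - 1) * σ * l i)) * Real.exp (-(σ * l i)) := by
      rw [← Real.exp_add]; ring_nf
    have h2 := Real.add_one_le_exp (-((c - 1) * σ * l i))
    have h3 : 0 ≤ u i * Real.exp (-(σ * l i)) := mul_nonneg (hu i) (Real.exp_pos _).le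
    rw [h1]
    nlinarith [mul_nonneg h3 (sub_nonneg.2 h2)]
  have hdiff : ∀ c : ℝ, 0 < c →
      Tendsto (fun σ => F σ - F (c * σ)) (𝓝[>] 0) (𝓝 (δ * Real.log c)) := by
    intro c hc
    have hc' : Tendsto (fun σ : ℝ => c * σ) (𝓝[>] 0) (𝓝[>] 0) := by
      refine tendsto_nhdsWithin_iff.2 ⟨?_, ?_⟩
      · have : Tendsto (fun σ : ℝ => c * σ) (𝓝 0) (𝓝 (c * 0)) := tendsto_id.const_mul c
        rw [mul_zero] at this
        exact this.mono_left nhdsWithin_le_nhds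
      · filter_upwards [self_mem_nhdsWithin] with σ hσ
        exact mul_pos hc hσ
    have h := (hlim.sub (hlim.comp hc')).add_const (δ * Real.log c)
    rw [sub_self, zero_add] at h
    refine h.congr' ?_
    filter_upwards [self_mem_nhdsWithin] with σ hσ
    simp only [Function.comp_apply]
    rw [Real.log_mul hc.ne' (ne_of_gt hσ)]
    ring
  have hslope : Tendsto (fun c : ℝ => δ * Real.log c / (c - 1)) (𝓝[≠] 1) (𝓝 δ) := by
    have h := (hasDerivAt_iff_tendsto_slope.1 (Real.hasDerivAt_log one_ne_zero)).const_mul δ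
    simp only [inv_one, mul_one] at h
    refine h.congr fun c => ?_
    rw [slope_def_field, Real.log_one, sub_zero, mul_div_assoc]
  rw [tendsto_order]
  constructor
  · intro a ha
    have h1 : ∀ᶠ c in 𝓝[>] (1 : ℝ), a < δ * Real.log c / (c - 1) :=
      (hslope.mono_left (nhdsWithin_mono 1 fun x hx => ne_of_gt hx)).eventually_const_lt ha
    obtain ⟨c, hca, hc⟩ := (h1.and self_mem_nhdsWithin).exists
    have hc1 : (1 : ℝ) < c := hc
    rw [lt_div_iff₀ (by linarith)] at hca
    filter_upwards [(hdiff c (by linarith)).eventually_const_lt hca, self_mem_nhdsWithin] with σ h hσ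
    have := hineq σ hσ c (by linarith)
    nlinarith
  · intro a ha
    have h1 : ∀ᶠ c in 𝓝[<] (1 : ℝ), δ * Real.log c / (c - 1) < a :=
      (hslope.mono_left (nhdsWithin_mono 1 fun x hx => ne_of_lt hx)).eventually_lt_const ha
    obtain ⟨c, ⟨hca, hc⟩, hc0⟩ := ((h1.and self_mem_nhdsWithin).and
      (mem_nhdsWithin_of_mem_nhds (lt_mem_nhds (zero_lt_one' ℝ)))).exists
    have hc1 : c < (1 : ℝ) := hc
    have hc0' : 0 < c := hc0
    rw [div_lt_iff_of_neg (by linarith)] at hca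
    filter_upwards [(hdiff c hc0').eventually_const_lt hca, self_mem_nhdsWithin] with σ h hσ
    have := hineq σ hσ c hc0'
    nlinarith

lemma natCast_rpow_neg_one_add {σ : ℝ} (hσ : 0 < σ) (n : ℕ) :
    (n : ℝ) ^ (-(1 + σ)) = (n : ℝ)⁻¹ * Real.exp (-(σ * Real.log n)) := by
  rcases Nat.eq_zero_or_pos n with rfl | hn
  · rw [Nat.cast_zero, inv_zero, zero_mul]
    exact Real.zero_rpow (by linarith)
  · have hn' : (0 : ℝ) < n := by exact_mod_cast hn
    rw [Real.rpow_def_of_pos hn', ← Real.exp_log (inv_pos.2 hn'), ← Real.exp_add, Real.log_inv]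
    ring_nf

end LaplaceDeriv

section PrimeSupportSeries

open ArithmeticFunction

lemma summable_mul_inv_mul_exp_log {a : ℕ → ℝ} {B : ℝ} (ha : ∀ n, |a n| ≤ B) {σ : ℝ}
    (hσ : 0 < σ) : Summable fun n : ℕ => a n * (n : ℝ)⁻¹ * Real.exp (-(σ * Real.log n)) := by
  have h : Summable fun n : ℕ => B * (n : ℝ) ^ (-(1 + σ)) :=
    (Real.summable_nat_rpow.2 (by linarith : -(1 + σ) < -1)).mul_left B
  refine Summable.of_norm_bounded h fun n => ?_
  rw [natCast_rpow_neg_one_add hσ, mul_assoc, norm_mul, Real.norm_eq_abs,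
    Real.norm_of_nonneg (by positivity)]
  exact mul_le_mul_of_nonneg_right (ha n) (by positivity)

lemma abs_primeSupport_le_one (S : Set ℕ) (n : ℕ) : |primeSupport S n| ≤ 1 := by
  rw [abs_of_nonneg (primeSupport_nonneg S n)]; exact primeSupport_le_one S n

variable {S : Set ℕ} {δ : ℝ}

theorem exists_tendsto_primeSupport
    (hS : HasLogDensity (fun p => if (p : ℕ) ∈ S then 1 else 0) δ) :
    ∃ C : ℝ, 0 < C ∧ Tendsto (fun σ : ℝ => σ ^ δ * ∑' n : ℕ,
      primeSupport S n * (n : ℝ)⁻¹ * Real.exp (-(σ * Real.log n))) (𝓝[>] 0) (𝓝 C) := by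
  have hS' : HasLogDensity (fun p => primeSupport S p) δ := by
    convert hS using 2 with p
    exact primeSupport_prime S p.2
  have hs : ∀ᶠ σ in 𝓝[>] (0 : ℝ),
      Summable fun m : ℕ => primeSupport S m * (m : ℝ) ^ (-(1 + σ)) := by
    filter_upwards [self_mem_nhdsWithin] with σ hσ
    refine (summable_mul_inv_mul_exp_log (abs_primeSupport_le_one S) hσ).congr fun n => ?_
    rw [natCast_rpow_neg_one_add hσ, mul_assoc]
  obtain ⟨C, hC, h⟩ := hS'.exists_tendsto_rpow_mul_tsum (n := 0) (primeSupport_nonneg S) (by simp)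
    (primeSupport_one S) (fun _ => primeSupport_mul S _ _)
    (fun p k _ => by simpa using primeSupport_le_one S _) hs
  refine ⟨C, hC, h.congr' ?_⟩
  filter_upwards [self_mem_nhdsWithin] with σ hσ
  congr 2
  ext n
  rw [natCast_rpow_neg_one_add hσ, mul_assoc]

lemma hasLogDensity_compl (hS : HasLogDensity (fun p => if (p : ℕ) ∈ S then 1 else 0) δ) :
    HasLogDensity (fun p => if (p : ℕ) ∈ Sᶜ then 1 else 0) (1 - δ) := by
  have h := hasLogDensity_one.sub hS (B := 1) (by simp) (fun p => by split_ifs <;> simp)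
  convert h using 2 with p
  by_cases hp : (p : ℕ) ∈ S <;> simp [hp]

lemma HasLogDensity.nonneg {w : Nat.Primes → ℝ} (hw : ∀ p, 0 ≤ w p) (h : HasLogDensity w δ) :
    0 ≤ δ := by
  obtain ⟨C, hC⟩ := h
  by_contra! hδ
  have h1 : Tendsto (fun σ : ℝ => δ * Real.log σ) (𝓝[>] 0) atTop :=
    Real.tendsto_log_nhdsGT_zero.const_mul_atBot_of_neg hδ
  refine not_tendsto_nhds_of_tendsto_atTop (tendsto_atTop_mono (fun σ => ?_) h1) C hC
  have : 0 ≤ ∑' p : Nat.Primes, w p * ((p : ℕ) : ℝ) ^ (-(1 + σ)) :=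
    tsum_nonneg fun p => mul_nonneg (hw p) (by positivity)
  linarith

lemma summable_vonMangoldt_div_of_not_prime :
    Summable fun n : ℕ => (if n.Prime then 0 else Λ n) * (n : ℝ)⁻¹ := by
  have h := vonMangoldt.summable_residueClass_non_primes_div (1 : ZMod 1)
  refine h.congr fun n => ?_
  rw [div_eq_mul_inv, vonMangoldt.residueClass,
    Set.indicator_of_mem (show n ∈ {n : ℕ | (n : ZMod 1) = 1} from Subsingleton.elim _ _)]

lemma vonMangoldt_nonneg_primeSupport (S : Set ℕ) (n : ℕ) : 0 ≤ primeSupport S n * Λ n :=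
  mul_nonneg (primeSupport_nonneg S n) vonMangoldt_nonneg

lemma summable_primeSupport_vonMangoldt (S : Set ℕ) {σ : ℝ} (hσ : 0 < σ) :
    Summable fun n : ℕ => primeSupport S n * Λ n * (n : ℝ)⁻¹ * Real.exp (-(σ * Real.log n)) := by
  have h := summable_mul_mul_exp (u := fun n : ℕ => 1 * (n : ℝ)⁻¹) (l := fun n : ℕ => Real.log n)
    (fun n => by positivity) (fun n => Real.log_natCast_nonneg n)
    (fun σ hσ => summable_mul_inv_mul_exp_log (B := 1) (by simp) hσ) hσ
  refine Summable.of_nonneg_of_le (fun n => mul_nonneg (mul_nonneg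
    (vonMangoldt_nonneg_primeSupport S n) (by positivity)) (Real.exp_pos _).le) (fun n => ?_) h
  refine mul_le_mul_of_nonneg_right ?_ (Real.exp_pos _).le
  rw [one_mul, mul_comm]
  refine mul_le_mul_of_nonneg_left ?_ (by positivity)
  calc primeSupport S n * Λ n ≤ 1 * Λ n :=
        mul_le_mul_of_nonneg_right (primeSupport_le_one S n) vonMangoldt_nonneg
    _ ≤ Real.log n := by rw [one_mul]; exact vonMangoldt_le_log

theorem tendsto_primeSupport_vonMangoldt
    (hS : HasLogDensity (fun p => if (p : ℕ) ∈ S then 1 else 0) δ) :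
    Tendsto (fun σ : ℝ => σ * ∑' n : ℕ,
      primeSupport S n * Λ n * (n : ℝ)⁻¹ * Real.exp (-(σ * Real.log n))) (𝓝[>] 0) (𝓝 δ) := by
  obtain ⟨C, hC⟩ := hS
  set t : ℝ → ℕ → ℝ := fun σ n =>
    primeSupport S n * Λ n * (n : ℝ)⁻¹ * Real.exp (-(σ * Real.log n)) with ht
  have ht0 : ∀ σ n, 0 ≤ t σ n := fun σ n => mul_nonneg (mul_nonneg
    (vonMangoldt_nonneg_primeSupport S n) (by positivity)) (Real.exp_pos _).le
  set u : Nat.Primes → ℝ := fun p => (if (p : ℕ) ∈ S then 1 else 0) * ((p : ℕ) : ℝ)⁻¹ with hu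
  have hu0 : ∀ p, 0 ≤ u p := fun p => mul_nonneg (by split_ifs <;> norm_num) (by positivity)
  have hprime : Tendsto (fun σ : ℝ => σ * ∑' p : Nat.Primes,
      u p * Real.log (p : ℕ) * Real.exp (-(σ * Real.log (p : ℕ)))) (𝓝[>] 0) (𝓝 δ) := by
    refine tendsto_mul_tsum_mul_exp (C := C) hu0 (fun p => Real.log_natCast_nonneg _) ?_ ?_
    · intro σ hσ
      refine (summable_primes_rpow (w := fun p => if (p : ℕ) ∈ S then 1 else 0) (B := 1)
        (fun p => by split_ifs <;> simp) hσ).congr fun p => ?_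
      rw [natCast_rpow_neg_one_add hσ, hu, mul_assoc]
    · refine hC.congr' ?_
      filter_upwards [self_mem_nhdsWithin] with σ hσ
      congr 2
      ext p
      rw [natCast_rpow_neg_one_add hσ, hu, mul_assoc]
  set B := ∑' n : ℕ, (if n.Prime then 0 else Λ n) * (n : ℝ)⁻¹
  have hrest : Tendsto (fun σ : ℝ => σ * ∑' n : ℕ, if n.Prime then 0 else t σ n)
      (𝓝[>] 0) (𝓝 0) := by
    have hB : Tendsto (fun σ : ℝ => σ * B) (𝓝[>] 0) (𝓝 0) := by
      have : Tendsto (fun σ : ℝ => σ * B) (𝓝 0) (𝓝 (0 * B)) := tendsto_id.mul_const B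
      rw [zero_mul] at this
      exact this.mono_left nhdsWithin_le_nhds
    refine squeeze_zero' ?_ ?_ hB
    · filter_upwards [self_mem_nhdsWithin] with σ hσ
      exact mul_nonneg (le_of_lt hσ) (tsum_nonneg fun n => by
        split_ifs
        · exact le_rfl
        · exact ht0 σ n)
    · filter_upwards [self_mem_nhdsWithin] with σ hσ
      have hσ' : 0 < σ := hσ
      refine mul_le_mul_of_nonneg_left ?_ hσ'.le
      have hle : ∀ n : ℕ, (if n.Prime then 0 else t σ n)
          ≤ (if n.Prime then 0 else Λ n) * (n : ℝ)⁻¹ := by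
        intro n
        split_ifs with hn
        · simp
        · have h1 : Real.exp (-(σ * Real.log n)) ≤ 1 :=
            Real.exp_le_one_iff.2 (neg_nonpos.2 (mul_nonneg hσ'.le (Real.log_natCast_nonneg n)))
          calc t σ n ≤ primeSupport S n * Λ n * (n : ℝ)⁻¹ * 1 :=
                mul_le_mul_of_nonneg_left h1
                  (mul_nonneg (vonMangoldt_nonneg_primeSupport S n) (by positivity))
            _ ≤ 1 * Λ n * (n : ℝ)⁻¹ := by
                rw [mul_one]
                exact mul_le_mul_of_nonneg_right (mul_le_mul_of_nonneg_right
                  (primeSupport_le_one S n) vonMangoldt_nonneg) (by positivity)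
            _ = _ := by rw [one_mul]
      refine Summable.tsum_le_tsum hle (Summable.of_nonneg_of_le (fun n => ?_) hle
        summable_vonMangoldt_div_of_not_prime) summable_vonMangoldt_div_of_not_prime
      split_ifs
      · exact le_rfl
      · exact ht0 σ n
  have h := hprime.add hrest
  rw [add_zero] at h
  refine h.congr' ?_
  filter_upwards [self_mem_nhdsWithin] with σ hσ
  rw [← mul_add]
  congr 1
  have hsum := summable_primeSupport_vonMangoldt S hσ
  rw [← hsum.tsum_subtype_add_tsum_subtype_compl {n : ℕ | n.Prime}]
  congr 1
  · refine tsum_congr fun p : Nat.Primes => ?_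
    have hp : (p : ℕ).Prime := p.2
    change _ = t σ p
    simp only [ht, hu]
    rw [primeSupport_prime S hp, vonMangoldt_apply_prime hp]
    ring
  · rw [tsum_subtype {n : ℕ | n.Prime}ᶜ (t σ)]
    refine tsum_congr fun n => ?_
    by_cases hn : n.Prime <;> simp [hn]

end PrimeSupportSeries

section SummatoryFunction

open ArithmeticFunction Finset
open scoped ArithmeticFunction.zeta ArithmeticFunction.Moebius

/-- The sum of `a n` over the positive integers `n ≤ x`. -/
noncomputable def sumUpTo (a : ℕ → ℝ) (x : ℝ) : ℝ := ∑ n ∈ Ioc 0 ⌊x⌋₊, a n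

lemma sumUpTo_nonneg {a : ℕ → ℝ} (ha : ∀ n, 0 ≤ a n) (x : ℝ) : 0 ≤ sumUpTo a x :=
  sum_nonneg fun n _ => ha n

lemma pos_and_le_of_mem_Ioc_floor {x : ℝ} {n : ℕ} (hn : n ∈ Ioc 0 ⌊x⌋₊) :
    (0 : ℝ) < n ∧ (n : ℝ) ≤ x := by
  rw [mem_Ioc] at hn
  exact ⟨by exact_mod_cast hn.1, (Nat.le_floor_iff' hn.1.ne').1 hn.2⟩

lemma sumUpTo_mul (a b : ArithmeticFunction ℝ) (x : ℝ) :
    sumUpTo (a * b : ArithmeticFunction ℝ) x = sumUpTo (fun d => a d * sumUpTo b (x / d)) x := by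
  rw [sumUpTo, sum_Ioc_mul_eq_sum_sum]
  refine sum_congr rfl fun d _ => ?_
  simp only [sumUpTo, Nat.floor_div_natCast]

lemma sumUpTo_zeta {x : ℝ} : sumUpTo (ζ : ArithmeticFunction ℝ) x = ⌊x⌋₊ := by
  rw [sumUpTo, sum_congr rfl fun n hn => show ((ζ : ArithmeticFunction ℝ)) n = 1 by
    have := (mem_Ioc.1 hn).1.ne'
    simp [natCoe_apply, zeta_apply, this]]
  simp

lemma sumUpTo_inv (n : ℕ) : ∑ k ∈ Ioc 0 n, ((k : ℝ))⁻¹ = harmonic n := by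
  rw [harmonic_eq_sum_Icc]
  push_cast
  rfl

lemma sum_log_eq_log_factorial (n : ℕ) :
    ∑ k ∈ Ioc 0 n, Real.log k = Real.log (n.factorial : ℝ) := by
  induction n with
  | zero => simp
  | succ n ih =>
    rw [sum_Ioc_succ_top (Nat.zero_le n), ih, Nat.factorial_succ, Nat.cast_mul,
      Real.log_mul (by positivity) (by positivity), add_comm]

lemma abs_sumUpTo_log_sub_zeta_mul_zeta_le {x : ℝ} (hx : 0 ≤ x) :
    |sumUpTo (log - ζ * ζ : ArithmeticFunction ℝ) x| ≤ 2 * x := by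
  have hsplit : sumUpTo (log - ζ * ζ : ArithmeticFunction ℝ) x
      = Real.log ((⌊x⌋₊).factorial : ℝ) - sumUpTo (ζ * ζ : ArithmeticFunction ℝ) x := by
    rw [← sum_log_eq_log_factorial, sumUpTo, sumUpTo, ← sum_sub_distrib]
    rfl
  have hD : sumUpTo (ζ * ζ : ArithmeticFunction ℝ) x
      = ∑ k ∈ Ioc 0 ⌊x⌋₊, ((⌊x⌋₊ / k : ℕ) : ℝ) := by
    rw [sumUpTo_mul]
    refine sum_congr rfl fun k hk => ?_
    have := (mem_Ioc.1 hk).1.ne'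
    simp [sumUpTo_zeta, Nat.floor_div_natCast, natCoe_apply, zeta_apply, this]
  rw [hsplit, hD]
  have hnx : (⌊x⌋₊ : ℝ) ≤ x := Nat.floor_le hx
  generalize ⌊x⌋₊ = n at hnx
  refine le_trans ?_ (mul_le_mul_of_nonneg_left hnx two_pos.le)
  rcases Nat.eq_zero_or_pos n with rfl | hn
  · simp
  have hn' : (0 : ℝ) < n := by exact_mod_cast hn
  have hT1 : Real.log (n.factorial : ℝ) ≤ n * Real.log n := by
    rw [← Real.log_pow]
    exact Real.log_le_log (by positivity) (by exact_mod_cast Nat.factorial_le_pow n)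
  have hT2 : n * Real.log n - n ≤ Real.log (n.factorial : ℝ) := by
    have h := Real.log_le_log (by positivity) (Real.pow_div_factorial_le_exp (n : ℝ) hn'.le n)
    rw [Real.log_exp, Real.log_div (by positivity) (by positivity), Real.log_pow] at h
    linarith
  have hD1 : ∑ k ∈ Ioc 0 n, ((n / k : ℕ) : ℝ) ≤ n * harmonic n := by
    rw [← sumUpTo_inv, mul_sum]
    exact sum_le_sum fun k _ => Nat.cast_div_le
  have hD2 : n * (harmonic n : ℝ) - n ≤ ∑ k ∈ Ioc 0 n, ((n / k : ℕ) : ℝ) := by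
    have h : ∑ k ∈ Ioc 0 n, ((n : ℝ) * (k : ℝ)⁻¹ - 1) ≤ ∑ k ∈ Ioc 0 n, ((n / k : ℕ) : ℝ) := by
      refine sum_le_sum fun k hk => ?_
      have h1 := Nat.lt_floor_add_one ((n : ℝ) / k)
      rw [Nat.floor_div_eq_div] at h1
      rw [← div_eq_mul_inv]
      linarith
    rw [sum_sub_distrib, ← mul_sum, sumUpTo_inv] at h
    simpa using h
  have hh1 := log_add_one_le_harmonic n
  have hh2 := harmonic_le_one_add_log n
  have hl : Real.log n ≤ Real.log ((n : ℝ) + 1) := Real.log_le_log hn' (by linarith)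
  have hA : (n : ℝ) * Real.log n ≤ n * harmonic n :=
    mul_le_mul_of_nonneg_left (hl.trans (by exact_mod_cast hh1)) hn'.le
  have hB : (n : ℝ) * harmonic n ≤ n * (1 + Real.log n) :=
    mul_le_mul_of_nonneg_left hh2 hn'.le
  rw [abs_le]
  constructor <;> linarith

variable (S : Set ℕ)

lemma primeSupport_inv_nonneg (n : ℕ) : 0 ≤ primeSupport S n * (n : ℝ)⁻¹ :=
  mul_nonneg (primeSupport_nonneg S n) (by positivity)

lemma sumUpTo_primeSupport_nonneg (x : ℝ) : 0 ≤ sumUpTo (primeSupport S) x :=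
  sumUpTo_nonneg (primeSupport_nonneg S) x

lemma sumUpTo_primeSupport_le (x : ℝ) :
    sumUpTo (primeSupport S) x ≤ x * sumUpTo (fun n => primeSupport S n * (n : ℝ)⁻¹) x := by
  rw [sumUpTo, sumUpTo, mul_sum]
  refine sum_le_sum fun n hn => ?_
  obtain ⟨h0, hx⟩ := pos_and_le_of_mem_Ioc_floor hn
  have : 1 ≤ x * (n : ℝ)⁻¹ := by rwa [← div_eq_mul_inv, one_le_div h0]
  nlinarith [primeSupport_nonneg S n]

/-- The weighted sum over divisors supported on `S` that enters Chebyshev's identity. -/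
noncomputable def chebyshevSum (x : ℝ) : ℝ :=
  sumUpTo (fun d => primeSupport S d * Λ d * sumUpTo (primeSupport Sᶜ) (x / d)) x

lemma chebyshevSum_nonneg (x : ℝ) : 0 ≤ chebyshevSum S x :=
  sumUpTo_nonneg (fun n => mul_nonneg (vonMangoldt_nonneg_primeSupport S n)
    (sumUpTo_primeSupport_nonneg _ _)) x

lemma abs_sumUpTo_primeSupport_log_le {x : ℝ} (hx : 0 ≤ x) :
    |sumUpTo (fun n => primeSupport Sᶜ n * Real.log n) x
      - x * sumUpTo (fun n => primeSupport Sᶜ n * (n : ℝ)⁻¹) x + chebyshevSum S x|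
    ≤ sumUpTo (primeSupport Sᶜ) x
      + 2 * x * sumUpTo (fun n => primeSupport S n * (n : ℝ)⁻¹) x := by
  have hid : sumUpTo (fun n => primeSupport Sᶜ n * Real.log n) x
      = sumUpTo ((primeSupport S).pmul μ
          * (log - ζ * ζ) : ArithmeticFunction ℝ) x
        + sumUpTo (primeSupport Sᶜ * ζ : ArithmeticFunction ℝ) x - chebyshevSum S x := by
    have h1 : chebyshevSum S x
        = sumUpTo ((primeSupport S).pmul Λ * primeSupport Sᶜ : ArithmeticFunction ℝ) x := by
      rw [sumUpTo_mul]; rfl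
    rw [h1, sumUpTo, sumUpTo, sumUpTo, sumUpTo, ← sum_add_distrib, ← sum_sub_distrib]
    refine sum_congr rfl fun n _ => ?_
    have := DFunLike.congr_fun (primeSupport_compl_pmul_log S) n
    rw [pmul_apply, log_apply] at this
    rw [this]
    simp only [sub_eq_add_neg, ArithmeticFunction.add_apply, ArithmeticFunction.neg_apply]
  have hE : |sumUpTo ((primeSupport S).pmul μ
      * (log - ζ * ζ) : ArithmeticFunction ℝ) x|
      ≤ 2 * x * sumUpTo (fun n => primeSupport S n * (n : ℝ)⁻¹) x := by
    rw [sumUpTo_mul, sumUpTo, sumUpTo, mul_sum]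
    refine (abs_sum_le_sum_abs _ _).trans (sum_le_sum fun n hn => ?_)
    have h1 := abs_sumUpTo_log_sub_zeta_mul_zeta_le (div_nonneg hx (Nat.cast_nonneg n))
    have h2 : |(primeSupport S).pmul (μ : ArithmeticFunction ℝ) n| ≤ primeSupport S n := by
      rw [pmul_apply, abs_mul, abs_of_nonneg (primeSupport_nonneg S n), intCoe_apply]
      refine mul_le_of_le_one_right (primeSupport_nonneg S n) ?_
      exact_mod_cast abs_moebius_le_one
    rw [abs_mul]
    calc _ ≤ primeSupport S n * (2 * (x / n)) :=
          mul_le_mul h2 h1 (abs_nonneg _) (primeSupport_nonneg S n)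
      _ = _ := by ring
  have hF : |sumUpTo (primeSupport Sᶜ * ζ : ArithmeticFunction ℝ) x
      - x * sumUpTo (fun n => primeSupport Sᶜ n * (n : ℝ)⁻¹) x| ≤ sumUpTo (primeSupport Sᶜ) x := by
    rw [sumUpTo_mul, sumUpTo, sumUpTo, sumUpTo, mul_sum, ← sum_sub_distrib]
    refine (abs_sum_le_sum_abs _ _).trans (sum_le_sum fun n hn => ?_)
    rw [sumUpTo_zeta]
    have h0 : 0 ≤ x / n := div_nonneg hx (Nat.cast_nonneg n)
    have h1 : |(⌊x / n⌋₊ : ℝ) - x / n| ≤ 1 := by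
      rw [abs_le]
      constructor <;> linarith [Nat.floor_le h0, Nat.lt_floor_add_one (x / n)]
    calc _ = primeSupport Sᶜ n * |(⌊x / n⌋₊ : ℝ) - x / n| := by
          rw [← abs_of_nonneg (primeSupport_nonneg Sᶜ n), ← abs_mul,
            abs_of_nonneg (primeSupport_nonneg Sᶜ n)]
          congr 1
          ring
      _ ≤ _ := mul_le_of_le_one_right (primeSupport_nonneg _ n) h1
  rw [hid]
  calc _ = |(sumUpTo (primeSupport Sᶜ * ζ : ArithmeticFunction ℝ) x
      - x * sumUpTo (fun n => primeSupport Sᶜ n * (n : ℝ)⁻¹) x)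
      + sumUpTo ((primeSupport S).pmul μ
      * (log - ζ * ζ) : ArithmeticFunction ℝ) x| := by congr 1; ring
    _ ≤ _ := (abs_add_le _ _).trans (add_le_add hF hE)

/-- Chebyshev's identity with an error term depending on a parameter `ε`. -/
lemma abs_mul_log_sub_add_chebyshevSum_le {x ε : ℝ} (hx : 1 ≤ x) (hε : 0 < ε) (hε1 : ε ≤ 1) :
    |sumUpTo (primeSupport Sᶜ) x * Real.log x
      - x * sumUpTo (fun n => primeSupport Sᶜ n * (n : ℝ)⁻¹) x + chebyshevSum S x|
    ≤ 2 * x * sumUpTo (fun n => primeSupport S n * (n : ℝ)⁻¹) x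
      + ε * (x * sumUpTo (fun n => primeSupport Sᶜ n * (n : ℝ)⁻¹) x)
      + (1 - Real.log ε) * sumUpTo (primeSupport Sᶜ) x := by
  have h := abs_sumUpTo_primeSupport_log_le S (zero_le_one.trans hx)
  have hlogε : Real.log ε ≤ 0 := Real.log_nonpos hε.le hε1
  set M := sumUpTo (primeSupport Sᶜ) x with hM
  set K := sumUpTo (fun n => primeSupport Sᶜ n * (n : ℝ)⁻¹) x with hK
  have h2 : |M * Real.log x - sumUpTo (fun n => primeSupport Sᶜ n * Real.log n) x|
      ≤ ε * (x * K) - Real.log ε * M := by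
    rw [hM, hK, sumUpTo, sumUpTo, sumUpTo, sum_mul, mul_sum, mul_sum, mul_sum,
      ← sum_sub_distrib, ← sum_sub_distrib]
    refine (abs_sum_le_sum_abs _ _).trans (sum_le_sum fun n hn => ?_)
    obtain ⟨h0, hnx⟩ := pos_and_le_of_mem_Ioc_floor hn
    rw [← mul_sub, abs_mul, abs_of_nonneg (primeSupport_nonneg _ n), abs_of_nonneg
      (sub_nonneg.2 (Real.log_le_log h0 hnx))]
    have h3 := Real.log_le_sub_one_of_pos (show 0 < ε * (x / n) by positivity)
    rw [Real.log_mul hε.ne' (by positivity), Real.log_div (by positivity) h0.ne'] at h3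
    calc primeSupport Sᶜ n * (Real.log x - Real.log n)
        ≤ primeSupport Sᶜ n * (ε * (x / n) - Real.log ε) :=
          mul_le_mul_of_nonneg_left (by linarith) (primeSupport_nonneg _ n)
      _ = _ := by ring
  rw [abs_le] at h h2 ⊢
  constructor <;> linarith [h.1, h.2, h2.1, h2.2]

/-- The contribution to `chebyshevSum` of the large divisors. -/
lemma sum_filter_chebyshevSum_le {x y z : ℝ} (hx : 0 ≤ x) (hy : 0 < y) (hyz : x ≤ y * z) :
    ∑ d ∈ (Ioc 0 ⌊x⌋₊).filter (fun d : ℕ => y < d),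
        primeSupport S d * Λ d * sumUpTo (primeSupport Sᶜ) (x / d)
      ≤ (Real.log 4 + 4) * x * sumUpTo (fun n => primeSupport Sᶜ n * (n : ℝ)⁻¹) z := by
  have hz : 0 ≤ z := by
    by_contra! hz
    nlinarith
  calc _ ≤ ∑ d ∈ (Ioc 0 ⌊x⌋₊).filter (fun d : ℕ => y < d), ∑ m ∈ Ioc 0 ⌊z⌋₊,
        if m ∈ Ioc 0 ⌊x / d⌋₊ then Λ d * primeSupport Sᶜ m else 0 := by
        refine sum_le_sum fun d hd => ?_
        rw [mem_filter] at hd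
        obtain ⟨h0, hdx⟩ := pos_and_le_of_mem_Ioc_floor hd.1
        have hsub : Ioc 0 ⌊x / d⌋₊ ⊆ Ioc 0 ⌊z⌋₊ := by
          refine Ioc_subset_Ioc_right (Nat.floor_le_floor ?_)
          rw [div_le_iff₀ h0]
          nlinarith [hd.2]
        rw [← sum_filter, filter_mem_eq_inter, inter_eq_right.2 hsub, ← mul_sum]
        refine mul_le_mul_of_nonneg_right ?_ (sumUpTo_primeSupport_nonneg _ _)
        exact mul_le_of_le_one_left vonMangoldt_nonneg (primeSupport_le_one S d)
    _ = ∑ m ∈ Ioc 0 ⌊z⌋₊, ∑ d ∈ (Ioc 0 ⌊x⌋₊).filter (fun d : ℕ => y < d),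
        if m ∈ Ioc 0 ⌊x / d⌋₊ then Λ d * primeSupport Sᶜ m else 0 := sum_comm
    _ ≤ ∑ m ∈ Ioc 0 ⌊z⌋₊, primeSupport Sᶜ m * Chebyshev.psi (x / m) := by
        refine sum_le_sum fun m hm => ?_
        obtain ⟨h0, -⟩ := pos_and_le_of_mem_Ioc_floor hm
        rw [← sum_filter, Chebyshev.psi, mul_sum]
        refine (sum_le_sum_of_subset_of_nonneg (t := Ioc 0 ⌊x / m⌋₊) ?_ fun d _ _ =>
          mul_nonneg vonMangoldt_nonneg (primeSupport_nonneg _ _)).trans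
          (sum_le_sum fun d _ => (mul_comm _ _).le)
        intro d hd
        rw [mem_filter, mem_filter] at hd
        obtain ⟨hd0, -⟩ := pos_and_le_of_mem_Ioc_floor hd.1.1
        obtain ⟨-, hmd⟩ := pos_and_le_of_mem_Ioc_floor hd.2
        rw [mem_Ioc]
        refine ⟨(mem_Ioc.1 hd.1.1).1, Nat.le_floor ?_⟩
        rw [le_div_iff₀ hd0] at hmd
        rw [le_div_iff₀ h0]
        linarith
    _ ≤ ∑ m ∈ Ioc 0 ⌊z⌋₊, (Real.log 4 + 4) * x * (primeSupport Sᶜ m * (m : ℝ)⁻¹) := by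
        refine sum_le_sum fun m hm => ?_
        have h := Chebyshev.psi_le_const_mul_self (div_nonneg hx (Nat.cast_nonneg m))
        calc _ ≤ primeSupport Sᶜ m * ((Real.log 4 + 4) * (x / m)) :=
              mul_le_mul_of_nonneg_left h (primeSupport_nonneg _ m)
          _ = _ := by ring
    _ = _ := by rw [sumUpTo, mul_sum]

end SummatoryFunction

section Asymptotics

open ArithmeticFunction Finset

lemma tendsto_inv_log_nhdsGT : Tendsto (fun x : ℝ => (Real.log x)⁻¹) atTop (𝓝[>] 0) :=
  tendsto_inv_atTop_nhdsGT_zero.comp Real.tendsto_log_atTop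

lemma tsum_ite_log_le_eq_sumUpTo {a : ℕ → ℝ} (ha0 : a 0 = 0) (φ : ℝ → ℝ) {x b : ℝ} (hx : 1 < x) :
    (∑' n : ℕ, if (Real.log x)⁻¹ * Real.log n ≤ b then a n * φ ((Real.log x)⁻¹ * Real.log n) else 0)
      = sumUpTo (fun n => a n * φ ((Real.log x)⁻¹ * Real.log n)) (x ^ b) := by
  have hl := Real.log_pos hx
  have hx0 : 0 < x := by linarith
  have key : ∀ n : ℕ, 0 < n → ((Real.log x)⁻¹ * Real.log n ≤ b ↔ n ≤ ⌊x ^ b⌋₊) := by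
    intro n hn
    have hn' : (0 : ℝ) < n := by exact_mod_cast hn
    rw [Nat.le_floor_iff (by positivity), inv_mul_le_iff₀ hl, Real.le_rpow_iff_log_le hn' hx0,
      mul_comm]
  rw [tsum_eq_sum (s := Ioc 0 ⌊x ^ b⌋₊)]
  · refine sum_congr rfl fun n hn => ?_
    rw [mem_Ioc] at hn
    rw [if_pos ((key n hn.1).2 hn.2)]
  · intro n hn
    rcases Nat.eq_zero_or_pos n with rfl | h0
    · simp [ha0]
    · rw [if_neg fun h => hn (mem_Ioc.2 ⟨h0, (key n h0).1 h⟩)]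

/-- Karamata's theorem for Dirichlet series with nonnegative coefficients. -/
theorem tendsto_rpow_mul_sumUpTo {a : ℕ → ℝ} {ρ C : ℝ} (hρ : 0 < ρ) (ha : ∀ n, 0 ≤ a n)
    (ha0 : a 0 = 0)
    (hs : ∀ σ : ℝ, 0 < σ → Summable fun n : ℕ => a n * Real.exp (-(σ * Real.log n)))
    (hlim : Tendsto (fun σ : ℝ => σ ^ ρ * ∑' n : ℕ, a n * Real.exp (-(σ * Real.log n)))
      (𝓝[>] 0) (𝓝 C)) {φ : ℝ → ℝ} (hφ : Continuous φ) {b : ℝ} (hb : 0 < b) :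
    Tendsto (fun x : ℝ => (Real.log x)⁻¹ ^ ρ *
      sumUpTo (fun n => a n * φ ((Real.log x)⁻¹ * Real.log n)) (x ^ b)) atTop
      (𝓝 (C / Real.Gamma ρ * ∫ t in (0 : ℝ)..b, t ^ (ρ - 1) * φ t)) := by
  have h := (karamata hρ ha (fun n => Real.log_natCast_nonneg n) hs hlim hφ hb).comp
    tendsto_inv_log_nhdsGT
  refine h.congr' ?_
  filter_upwards [eventually_gt_atTop 1] with x hx
  simp only [Function.comp_apply]
  rw [tsum_ite_log_le_eq_sumUpTo ha0 φ hx]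

variable {S : Set ℕ} {δ : ℝ}

theorem exists_tendsto_sumUpTo_inv (hS : HasLogDensity (fun p => if (p : ℕ) ∈ S then 1 else 0) δ)
    (hδ : 0 < δ) :
    ∃ c : ℝ, 0 < c ∧ Tendsto (fun x : ℝ =>
      sumUpTo (fun n => primeSupport S n * (n : ℝ)⁻¹) x / Real.log x ^ δ) atTop (𝓝 c) := by
  obtain ⟨C, hC, hlim⟩ := exists_tendsto_primeSupport hS
  have h := tendsto_rpow_mul_sumUpTo hδ (primeSupport_inv_nonneg S) (by simp)
    (fun σ hσ => summable_mul_inv_mul_exp_log (abs_primeSupport_le_one S) hσ) hlim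
    (continuous_const (y := (1 : ℝ))) one_pos
  have h_integral : ∫ t in (0 : ℝ)..1, t ^ (δ - 1) * 1 = 1 / δ := by
    simp only [mul_one]
    rw [integral_rpow (Or.inl (by linarith))]
    simp [Real.zero_rpow hδ.ne']
  rw [h_integral] at h
  refine ⟨_, mul_pos (div_pos hC (Real.Gamma_pos_of_pos hδ)) (one_div_pos.2 hδ), h.congr' ?_⟩
  filter_upwards [eventually_gt_atTop 1] with x hx
  simp only [Real.rpow_one, mul_one]
  rw [Real.inv_rpow (Real.log_pos hx).le, div_eq_inv_mul]

theorem tendsto_sumUpTo_inv_div_rpow_zero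
    (hS : HasLogDensity (fun p => if (p : ℕ) ∈ S then 1 else 0) δ) {τ : ℝ} (hτ : δ < τ) :
    Tendsto (fun x : ℝ => sumUpTo (fun n => primeSupport S n * (n : ℝ)⁻¹) x / Real.log x ^ τ)
      atTop (𝓝 0) := by
  obtain ⟨C, hC, hlim⟩ := exists_tendsto_primeSupport hS
  have h1 : Tendsto (fun x : ℝ => (Real.log x)⁻¹ ^ (τ - δ)) atTop (𝓝 0) := by
    have h := (Real.continuousAt_rpow_const 0 (τ - δ) (Or.inr (by linarith))).tendsto
    rw [Real.zero_rpow (by linarith)] at h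
    exact h.comp (tendsto_inv_log_nhdsGT.mono_right nhdsWithin_le_nhds)
  have h2 := ((hlim.comp tendsto_inv_log_nhdsGT).mul h1).const_mul (Real.exp 1)
  rw [mul_zero, mul_zero] at h2
  refine squeeze_zero' ?_ ?_ h2
  · filter_upwards [eventually_gt_atTop 1] with x hx
    exact div_nonneg (sumUpTo_nonneg (primeSupport_inv_nonneg S) x)
      (Real.rpow_nonneg (Real.log_pos hx).le _)
  · filter_upwards [eventually_gt_atTop 1] with x hx
    have hl := Real.log_pos hx
    have hσ : 0 < (Real.log x)⁻¹ := inv_pos.2 hl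
    have hle : sumUpTo (fun n => primeSupport S n * (n : ℝ)⁻¹) x
        ≤ Real.exp 1 * ∑' n : ℕ, primeSupport S n * (n : ℝ)⁻¹
          * Real.exp (-((Real.log x)⁻¹ * Real.log n)) := by
      have hsum := summable_mul_inv_mul_exp_log (abs_primeSupport_le_one S) hσ
      refine le_trans ?_ (mul_le_mul_of_nonneg_left (hsum.sum_le_tsum (Ioc 0 ⌊x⌋₊)
        fun n _ => mul_nonneg (primeSupport_inv_nonneg S n) (Real.exp_pos _).le)
        (Real.exp_pos 1).le)
      rw [mul_sum, sumUpTo]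
      refine sum_le_sum fun n hn => ?_
      obtain ⟨h0, hnx⟩ := pos_and_le_of_mem_Ioc_floor hn
      have h3 : 1 ≤ Real.exp 1 * Real.exp (-((Real.log x)⁻¹ * Real.log n)) := by
        rw [← Real.exp_add]
        refine Real.one_le_exp ?_
        have : (Real.log x)⁻¹ * Real.log n ≤ 1 := by
          rw [inv_mul_le_iff₀ hl, mul_one]
          exact Real.log_le_log h0 hnx
        linarith
      nlinarith [primeSupport_inv_nonneg S n]
    simp only [Function.comp_apply]
    have h4 : (Real.log x ^ τ)⁻¹ = (Real.log x)⁻¹ ^ δ * (Real.log x)⁻¹ ^ (τ - δ) := by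
      rw [← Real.rpow_add hσ, Real.inv_rpow hl.le]; ring_nf
    rw [div_eq_mul_inv, h4]
    calc _ ≤ _ := mul_le_mul_of_nonneg_right hle (by positivity)
      _ = _ := by ring

lemma integral_max_rpow {η : ℝ} (hη1 : η < 1) (hδ1 : δ < 1) :
    ∫ t in (0 : ℝ)..(1 - η), t ^ ((1 : ℝ) - 1) * max (1 - t) η ^ (-δ)
      = (1 - η ^ (1 - δ)) / (1 - δ) := by
  have h1 : ∫ t in (0 : ℝ)..(1 - η), t ^ ((1 : ℝ) - 1) * max (1 - t) η ^ (-δ)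
      = ∫ t in (0 : ℝ)..(1 - η), (1 - t) ^ (-δ) := by
    refine intervalIntegral.integral_congr fun t ht => ?_
    rw [Set.uIcc_of_le (by linarith)] at ht
    simp only [sub_self, Real.rpow_zero, one_mul]
    rw [max_eq_left (by linarith [ht.2])]
  rw [h1, intervalIntegral.integral_comp_sub_left (fun t => t ^ (-δ)) 1, sub_sub_cancel, sub_zero,
    integral_rpow (Or.inl (by linarith)), Real.one_rpow]
  ring_nf

theorem tendsto_sumUpTo_vonMangoldt
    (hS : HasLogDensity (fun p => if (p : ℕ) ∈ S then 1 else 0) δ) (hδ1 : δ < 1) {η : ℝ}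
    (hη : 0 < η) (hη1 : η < 1) :
    Tendsto (fun x : ℝ => (Real.log x)⁻¹ * sumUpTo (fun d => primeSupport S d * Λ d * (d : ℝ)⁻¹
      * max (1 - (Real.log x)⁻¹ * Real.log d) η ^ (-δ)) (x ^ (1 - η))) atTop
      (𝓝 (δ / (1 - δ) * (1 - η ^ (1 - δ)))) := by
  have hφ : Continuous fun t : ℝ => max (1 - t) η ^ (-δ) :=
    Continuous.rpow_const (by fun_prop) fun t => Or.inl (ne_of_gt (lt_max_of_lt_right hη))
  have h := tendsto_rpow_mul_sumUpTo one_pos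
    (a := fun d => primeSupport S d * Λ d * (d : ℝ)⁻¹)
    (fun d => mul_nonneg (vonMangoldt_nonneg_primeSupport S d) (by positivity)) (by simp)
    (fun σ hσ => summable_primeSupport_vonMangoldt S hσ)
    (by simpa only [Real.rpow_one] using tendsto_primeSupport_vonMangoldt hS) hφ
    (b := 1 - η) (by linarith)
  rw [integral_max_rpow hη1 hδ1, Real.Gamma_one, div_one] at h
  simp only [Real.rpow_one] at h
  convert h using 2
  ring

end Asymptotics

section Contraction

open ArithmeticFunction Finset

/-- A self-improving bound with contraction factor `θ < 1` forces convergence to zero. -/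
lemma tendsto_zero_of_contraction {α : Type*} {l : Filter α} {h : α → ℝ} {θ B : ℝ} (hθ : θ < 1)
    (hθ0 : 0 ≤ θ) (hB : ∀ᶠ x in l, |h x| ≤ B)
    (hc : ∀ e : ℝ, 0 ≤ e → (∀ᶠ x in l, |h x| ≤ e) → ∀ ε : ℝ, 0 < ε → ∀ᶠ x in l, |h x| ≤ θ * e + ε) :
    Tendsto h l (𝓝 0) := by
  set q := (1 + θ) / 2 with hq
  have hiter : ∀ n : ℕ, ∀ᶠ x in l, |h x| ≤ q ^ n * (|B| + 1) := by
    intro n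
    induction n with
    | zero =>
      filter_upwards [hB] with x hx
      rw [pow_zero, one_mul]
      linarith [le_abs_self B]
    | succ n ih =>
      have hpos : 0 < q ^ n * (|B| + 1) := by positivity
      filter_upwards [hc _ hpos.le ih ((1 - θ) / 2 * (q ^ n * (|B| + 1)))
        (mul_pos (by linarith) hpos)] with x hx
      refine hx.trans_eq ?_
      rw [pow_succ, hq]
      ring
  have hq0 : Tendsto (fun n : ℕ => q ^ n * (|B| + 1)) atTop (𝓝 0) := by
    have := (tendsto_pow_atTop_nhds_zero_of_lt_one (by positivity : 0 ≤ q)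
      (by linarith : q < 1)).mul_const (|B| + 1)
    rwa [zero_mul] at this
  rw [Metric.tendsto_nhds]
  intro ε hε
  obtain ⟨n, hn⟩ := (hq0.eventually_lt_const hε).exists
  filter_upwards [hiter n] with x hx
  rw [Real.dist_eq, sub_zero]
  exact hx.trans_lt hn

variable (S : Set ℕ) (δ : ℝ)

/-- The number of `n ≤ x` without prime factors in `S`, relative to `x / (log x) ^ δ`. -/
noncomputable def countRatio (x : ℝ) : ℝ := sumUpTo (primeSupport Sᶜ) x * Real.log x ^ δ / x

/-- The normalized value of `chebyshevSum`. -/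
noncomputable def chebyshevRatio (x : ℝ) : ℝ := chebyshevSum S x / (x * Real.log x ^ (1 - δ))

lemma countRatio_nonneg {x : ℝ} (hx : 1 ≤ x) : 0 ≤ countRatio S δ x :=
  div_nonneg (mul_nonneg (sumUpTo_primeSupport_nonneg _ _)
    (Real.rpow_nonneg (Real.log_nonneg hx) _)) (by linarith)

lemma chebyshevRatio_nonneg {x : ℝ} (hx : 1 ≤ x) : 0 ≤ chebyshevRatio S δ x :=
  div_nonneg (chebyshevSum_nonneg S x) (mul_nonneg (by linarith)
    (Real.rpow_nonneg (Real.log_nonneg hx) _))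

lemma log_rpow_mul_log_rpow {x : ℝ} (hx : 1 < x) :
    Real.log x ^ δ * Real.log x ^ (1 - δ) = Real.log x := by
  rw [← Real.rpow_add (Real.log_pos hx), add_sub_cancel, Real.rpow_one]

lemma abs_countRatio_sub_add_le {x ε : ℝ} (hx : 1 < x) (hε : 0 < ε) (hε1 : ε ≤ 1) :
    |countRatio S δ x
        - sumUpTo (fun n => primeSupport Sᶜ n * (n : ℝ)⁻¹) x / Real.log x ^ (1 - δ)
        + chebyshevRatio S δ x|
      ≤ 2 * (sumUpTo (fun n => primeSupport S n * (n : ℝ)⁻¹) x / Real.log x ^ (1 - δ))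
        + ε * (sumUpTo (fun n => primeSupport Sᶜ n * (n : ℝ)⁻¹) x / Real.log x ^ (1 - δ))
        + (1 - Real.log ε) * (countRatio S δ x * (Real.log x)⁻¹) := by
  have hl := Real.log_pos hx
  have hx0 : 0 < x := by linarith
  have hτ : 0 < Real.log x ^ (1 - δ) := Real.rpow_pos_of_pos hl _
  have hδ' : 0 < Real.log x ^ δ := Real.rpow_pos_of_pos hl _
  have hmul := log_rpow_mul_log_rpow δ hx
  have h := abs_mul_log_sub_add_chebyshevSum_le S hx.le hε hε1
  have hD : 0 < x * Real.log x ^ (1 - δ) := by positivity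
  set A := Real.log x ^ δ
  set T := Real.log x ^ (1 - δ)
  have hcr : countRatio S δ x = sumUpTo (primeSupport Sᶜ) x * Real.log x / (x * T) := by
    rw [countRatio, div_eq_div_iff hx0.ne' hD.ne']
    linear_combination (sumUpTo (primeSupport Sᶜ) x * x) * hmul
  have hcr2 : countRatio S δ x * (Real.log x)⁻¹ = sumUpTo (primeSupport Sᶜ) x / (x * T) := by
    rw [hcr]
    field_simp
  rw [hcr2, hcr, chebyshevRatio]
  generalize sumUpTo (fun n => primeSupport Sᶜ n * (n : ℝ)⁻¹) x = K at *
  generalize sumUpTo (fun n => primeSupport S n * (n : ℝ)⁻¹) x = H at *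
  have e1 : K / T = x * K / (x * T) := by field_simp
  have e2 : H / T = x * H / (x * T) := by field_simp
  rw [e1, e2, ← sub_div, ← add_div, abs_div, abs_of_pos hD, ← mul_div_assoc, ← mul_div_assoc,
    ← mul_div_assoc, ← add_div, ← add_div]
  refine div_le_div_of_nonneg_right (h.trans_eq ?_) hD.le
  ring

variable {S δ}

lemma countRatio_mul_inv_log_le {x : ℝ} (hx : 1 < x) : countRatio S δ x * (Real.log x)⁻¹
    ≤ sumUpTo (fun n => primeSupport Sᶜ n * (n : ℝ)⁻¹) x / Real.log x ^ (1 - δ) := by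
  have hl := Real.log_pos hx
  have hx0 : 0 < x := by linarith
  have hτ : 0 < Real.log x ^ (1 - δ) := Real.rpow_pos_of_pos hl _
  have hδ' : 0 < Real.log x ^ δ := Real.rpow_pos_of_pos hl _
  have h1 : countRatio S δ x * (Real.log x)⁻¹
      = sumUpTo (primeSupport Sᶜ) x / x / Real.log x ^ (1 - δ) := by
    rw [countRatio]
    nth_rewrite 2 [← log_rpow_mul_log_rpow δ hx]
    field_simp
  rw [h1]
  refine div_le_div_of_nonneg_right ?_ hτ.le
  rw [div_le_iff₀ hx0, mul_comm]
  exact sumUpTo_primeSupport_le _ x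

variable {c : ℝ}

lemma countRatio_eventually_le
    (hL : Tendsto (fun x : ℝ => sumUpTo (fun n => primeSupport Sᶜ n * (n : ℝ)⁻¹) x
      / Real.log x ^ (1 - δ)) atTop (𝓝 c))
    (hH : Tendsto (fun x : ℝ => sumUpTo (fun n => primeSupport S n * (n : ℝ)⁻¹) x
      / Real.log x ^ (1 - δ)) atTop (𝓝 0)) :
    ∀ᶠ x in atTop, countRatio S δ x ≤ 3 * c + 1 := by
  have h := ((hL.const_mul 3).add (hH.const_mul 2)).eventually_lt_const
    (show 3 * c + 2 * 0 < 3 * c + 1 by linarith)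
  filter_upwards [h, eventually_gt_atTop 1] with x hx hx1
  have h1 := (abs_le.1 (abs_countRatio_sub_add_le S δ hx1 one_pos le_rfl)).2
  have h2 := chebyshevRatio_nonneg S δ hx1.le
  have h3 := countRatio_mul_inv_log_le (S := S) (δ := δ) hx1
  rw [Real.log_one] at h1
  linarith

lemma tendsto_countRatio_add_chebyshevRatio
    (hL : Tendsto (fun x : ℝ => sumUpTo (fun n => primeSupport Sᶜ n * (n : ℝ)⁻¹) x
      / Real.log x ^ (1 - δ)) atTop (𝓝 c))
    (hH : Tendsto (fun x : ℝ => sumUpTo (fun n => primeSupport S n * (n : ℝ)⁻¹) x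
      / Real.log x ^ (1 - δ)) atTop (𝓝 0)) :
    Tendsto (fun x => countRatio S δ x + chebyshevRatio S δ x) atTop (𝓝 c) := by
  have hsmall : Tendsto (fun x => countRatio S δ x * (Real.log x)⁻¹) atTop (𝓝 0) := by
    have hinv : Tendsto (fun x : ℝ => (3 * c + 1) * (Real.log x)⁻¹) atTop (𝓝 0) := by
      have := (tendsto_inv_log_nhdsGT.mono_right nhdsWithin_le_nhds).const_mul (3 * c + 1)
      rwa [mul_zero] at this
    refine squeeze_zero' ?_ ?_ hinv
    · filter_upwards [eventually_gt_atTop 1] with x hx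
      exact mul_nonneg (countRatio_nonneg S δ hx.le) (inv_nonneg.2 (Real.log_pos hx).le)
    · filter_upwards [eventually_gt_atTop 1, countRatio_eventually_le hL hH] with x hx h
      exact mul_le_mul_of_nonneg_right h (inv_nonneg.2 (Real.log_pos hx).le)
  have hdiff : Tendsto (fun x => countRatio S δ x
      - sumUpTo (fun n => primeSupport Sᶜ n * (n : ℝ)⁻¹) x / Real.log x ^ (1 - δ)
      + chebyshevRatio S δ x) atTop (𝓝 0) := by
    rw [Metric.tendsto_nhds]
    intro ε hε
    have hc' : 0 < |c| + 1 := by positivity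
    set e := min 1 (ε / (2 * (|c| + 1))) with he
    have he0 : 0 < e := lt_min one_pos (by positivity)
    have hlim := ((hH.const_mul 2).add (hL.const_mul e)).add (hsmall.const_mul (1 - Real.log e))
    have hlt : 2 * 0 + e * c + (1 - Real.log e) * 0 < ε := by
      have h1 : e * c ≤ ε / (2 * (|c| + 1)) * |c| :=
        (mul_le_mul_of_nonneg_left (le_abs_self c) he0.le).trans
          (mul_le_mul_of_nonneg_right (min_le_right _ _) (abs_nonneg c))
      have h2 : ε / (2 * (|c| + 1)) * |c| < ε := by
        rw [div_mul_eq_mul_div, div_lt_iff₀ (by positivity)]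
        nlinarith [abs_nonneg c]
      linarith
    filter_upwards [hlim.eventually_lt_const hlt, eventually_gt_atTop 1] with x hx hx1
    rw [Real.dist_eq, sub_zero]
    exact (abs_countRatio_sub_add_le S δ hx1 he0 (min_le_left _ _)).trans_lt hx
  have h := hdiff.add hL
  rw [zero_add] at h
  refine h.congr fun x => ?_
  ring

lemma sum_filter_le_eq_sumUpTo (a : ℕ → ℝ) {x y : ℝ} (hyx : y ≤ x) (hy : 0 ≤ y) :
    ∑ d ∈ (Ioc 0 ⌊x⌋₊).filter (fun d : ℕ => ¬ y < d), a d = sumUpTo a y := by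
  rw [sumUpTo]
  refine sum_congr ?_ fun _ _ => rfl
  ext d
  rw [mem_filter, mem_Ioc, mem_Ioc, not_lt, Nat.le_floor_iff hy]
  constructor
  · rintro ⟨⟨h0, -⟩, h⟩
    exact ⟨h0, h⟩
  · rintro ⟨h0, h⟩
    exact ⟨⟨h0, Nat.le_floor (h.trans hyx)⟩, h⟩

lemma sumUpTo_primeSupport_div_eq {x η : ℝ} {d : ℕ} (hx : 1 < x) (hη : 0 < η)
    (hd : 0 < d) (hdx : (d : ℝ) ≤ x ^ (1 - η)) :
    sumUpTo (primeSupport Sᶜ) (x / d) / (x * Real.log x ^ (1 - δ))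
      = (Real.log x)⁻¹ * ((d : ℝ)⁻¹ * max (1 - (Real.log x)⁻¹ * Real.log d) η ^ (-δ))
        * countRatio S δ (x / d) := by
  have hl := Real.log_pos hx
  have hx0 : 0 < x := by linarith
  have hd' : (0 : ℝ) < d := by exact_mod_cast hd
  have hlogd : Real.log d ≤ (1 - η) * Real.log x := by
    rwa [Real.le_rpow_iff_log_le hd' hx0] at hdx
  have hv : η ≤ 1 - (Real.log x)⁻¹ * Real.log d := by
    have : (Real.log x)⁻¹ * Real.log d ≤ 1 - η := by
      rw [inv_mul_le_iff₀ hl]; linarith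
    linarith
  set v := 1 - (Real.log x)⁻¹ * Real.log d with hvdef
  have hv0 : 0 < v := hη.trans_le hv
  have hlog : Real.log (x / d) = Real.log x * v := by
    rw [Real.log_div hx0.ne' hd'.ne', hvdef]
    field_simp
  rw [max_eq_left hv, countRatio, hlog, Real.mul_rpow hl.le hv0.le, Real.rpow_neg hv0.le]
  have h1 := (Real.rpow_pos_of_pos hv0 δ).ne'
  have h2 := (Real.rpow_pos_of_pos hl δ).ne'
  have h3 := (Real.rpow_pos_of_pos hl (1 - δ)).ne'
  nth_rewrite 2 [← log_rpow_mul_log_rpow δ hx]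
  field_simp

/-- Contribution of the divisors `d ≤ x ^ (1 - η)` to `chebyshevRatio`. -/
lemma eventually_abs_sumUpTo_sub_le {η r e : ℝ} (hη : 0 < η)
    (hr : ∀ᶠ y in atTop, |countRatio S δ y - r| ≤ e) :
    ∀ᶠ x : ℝ in atTop,
      |sumUpTo (fun d => primeSupport S d * Λ d * sumUpTo (primeSupport Sᶜ) (x / d)) (x ^ (1 - η))
          / (x * Real.log x ^ (1 - δ))
        - r * ((Real.log x)⁻¹ * sumUpTo (fun d => primeSupport S d * Λ d * (d : ℝ)⁻¹
            * max (1 - (Real.log x)⁻¹ * Real.log d) η ^ (-δ)) (x ^ (1 - η)))|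
      ≤ e * ((Real.log x)⁻¹ * sumUpTo (fun d => primeSupport S d * Λ d * (d : ℝ)⁻¹
            * max (1 - (Real.log x)⁻¹ * Real.log d) η ^ (-δ)) (x ^ (1 - η))) := by
  obtain ⟨y₀, hy₀⟩ := eventually_atTop.1 hr
  filter_upwards [eventually_gt_atTop 1, (tendsto_rpow_atTop hη).eventually_ge_atTop y₀]
    with x hx hxy
  have hl := Real.log_pos hx
  have hx0 : 0 < x := by linarith
  rw [sumUpTo.eq_def _ (x ^ (1 - η)), sumUpTo.eq_def _ (x ^ (1 - η)), sum_div, mul_sum, mul_sum,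
    mul_sum, ← sum_sub_distrib]
  refine (abs_sum_le_sum_abs _ _).trans (sum_le_sum fun d hd => ?_)
  obtain ⟨hd0, hdx⟩ := pos_and_le_of_mem_Ioc_floor hd
  have hy : y₀ ≤ x / d := by
    refine hxy.trans ?_
    rw [le_div_iff₀ hd0]
    calc x ^ η * d ≤ x ^ η * x ^ (1 - η) := by gcongr
      _ = x := by rw [← Real.rpow_add hx0, add_sub_cancel, Real.rpow_one]
  have h1 := hy₀ _ hy
  have hw : 0 ≤ primeSupport S d * Λ d * ((Real.log x)⁻¹ *
      ((d : ℝ)⁻¹ * max (1 - (Real.log x)⁻¹ * Real.log d) η ^ (-δ))) := by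
    have : 0 ≤ max (1 - (Real.log x)⁻¹ * Real.log d) η := le_max_of_le_right hη.le
    exact mul_nonneg (vonMangoldt_nonneg_primeSupport S d) (by positivity)
  rw [mul_div_assoc, sumUpTo_primeSupport_div_eq hx hη (mem_Ioc.1 hd).1 hdx]
  calc _ = |primeSupport S d * Λ d * ((Real.log x)⁻¹ *
      ((d : ℝ)⁻¹ * max (1 - (Real.log x)⁻¹ * Real.log d) η ^ (-δ)))
        * (countRatio S δ (x / d) - r)| := by congr 1; ring
    _ ≤ primeSupport S d * Λ d * ((Real.log x)⁻¹ *
      ((d : ℝ)⁻¹ * max (1 - (Real.log x)⁻¹ * Real.log d) η ^ (-δ))) * e := by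
        rw [abs_mul, abs_of_nonneg hw]
        exact mul_le_mul_of_nonneg_left h1 hw
    _ = _ := by ring

/-- Contribution of the divisors `d > x ^ (1 - η)` to `chebyshevRatio`. -/
lemma eventually_sum_filter_div_le {η ε : ℝ} (hη : 0 < η) (hη1 : η < 1) (hε : 0 < ε)
    (hL : Tendsto (fun x : ℝ => sumUpTo (fun n => primeSupport Sᶜ n * (n : ℝ)⁻¹) x
      / Real.log x ^ (1 - δ)) atTop (𝓝 c)) :
    ∀ᶠ x : ℝ in atTop,
      (∑ d ∈ (Ioc 0 ⌊x⌋₊).filter (fun d : ℕ => x ^ (1 - η) < d),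
        primeSupport S d * Λ d * sumUpTo (primeSupport Sᶜ) (x / d)) / (x * Real.log x ^ (1 - δ))
      ≤ (Real.log 4 + 4) * c * η ^ (1 - δ) + ε := by
  have hlim := ((hL.comp (tendsto_rpow_atTop hη)).mul_const (η ^ (1 - δ))).const_mul
    (Real.log 4 + 4)
  have hlt : (Real.log 4 + 4) * (c * η ^ (1 - δ)) < (Real.log 4 + 4) * c * η ^ (1 - δ) + ε := by
    linarith
  filter_upwards [hlim.eventually_lt_const hlt, eventually_gt_atTop 1] with x hx hx1
  have hl := Real.log_pos hx1
  have hx0 : 0 < x := by linarith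
  have hτ : 0 < Real.log x ^ (1 - δ) := Real.rpow_pos_of_pos hl _
  have hητ : 0 < η ^ (1 - δ) := Real.rpow_pos_of_pos hη _
  have hb := sum_filter_chebyshevSum_le S (x := x) (y := x ^ (1 - η)) (z := x ^ η) hx0.le
    (by positivity) (by rw [← Real.rpow_add hx0, sub_add_cancel, Real.rpow_one])
  refine (div_le_div_of_nonneg_right hb (by positivity)).trans (le_trans (le_of_eq ?_) hx.le)
  simp only [Function.comp_apply]
  rw [Real.log_rpow hx0, Real.mul_rpow hη.le hl.le]
  field_simp

/-- The key estimate: `chebyshevRatio` depends on `countRatio` in a contracting way. -/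
lemma eventually_abs_chebyshevRatio_sub_le
    (hS : HasLogDensity (fun p => if (p : ℕ) ∈ S then 1 else 0) δ) (hδ0 : 0 ≤ δ) (hδ1 : δ < 1)
    (hL : Tendsto (fun x : ℝ => sumUpTo (fun n => primeSupport Sᶜ n * (n : ℝ)⁻¹) x
      / Real.log x ^ (1 - δ)) atTop (𝓝 c)) (hc : 0 ≤ c) {r e ε : ℝ} (he : 0 ≤ e) (hε : 0 < ε)
    (hr : ∀ᶠ y in atTop, |countRatio S δ y - r| ≤ e) :
    ∀ᶠ x in atTop, |chebyshevRatio S δ x - r * (δ / (1 - δ))| ≤ δ / (1 - δ) * e + ε := by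
  set θ := δ / (1 - δ) with hθ
  have hθ0 : 0 ≤ θ := div_nonneg hδ0 (by linarith)
  have hsmall : Tendsto (fun η : ℝ => (|r| * θ + (Real.log 4 + 4) * c) * η ^ (1 - δ))
      (𝓝[>] 0) (𝓝 0) := by
    have h := (Real.continuousAt_rpow_const 0 (1 - δ) (Or.inr (by linarith))).tendsto.const_mul
      (|r| * θ + (Real.log 4 + 4) * c)
    rw [Real.zero_rpow (by linarith), mul_zero] at h
    exact h.mono_left nhdsWithin_le_nhds
  obtain ⟨η, ⟨hηε, hη⟩, hη1⟩ := ((hsmall.eventually_lt_const (show 0 < ε / 4 by positivity)).and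
    self_mem_nhdsWithin |>.and (mem_nhdsWithin_of_mem_nhds (gt_mem_nhds (zero_lt_one' ℝ)))).exists
  have hη0 : 0 < η := hη
  have hη1' : η < 1 := hη1
  have hητ : 0 < η ^ (1 - δ) := Real.rpow_pos_of_pos hη0 _
  have hW := tendsto_sumUpTo_vonMangoldt hS hδ1 hη0 hη1'
  set W : ℝ → ℝ := fun x => (Real.log x)⁻¹ * sumUpTo (fun d => primeSupport S d * Λ d * (d : ℝ)⁻¹
      * max (1 - (Real.log x)⁻¹ * Real.log d) η ^ (-δ)) (x ^ (1 - η)) with hWdef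
  have hW1 := (hW.const_mul e).eventually_lt_const
    (show e * (θ * (1 - η ^ (1 - δ))) < θ * e + ε / 4 by
      nlinarith [mul_nonneg (mul_nonneg he hθ0) hητ.le])
  have hW2 : ∀ᶠ x in atTop, |r * W x - r * (θ * (1 - η ^ (1 - δ)))| < ε / 4 := by
    have h := Metric.tendsto_nhds.1 (hW.const_mul r) (ε / 4) (by positivity)
    simpa only [Real.dist_eq] using h
  filter_upwards [eventually_abs_sumUpTo_sub_le hη0 hr,
    eventually_sum_filter_div_le hη0 hη1' (show 0 < ε / 4 by positivity) hL, hW1, hW2,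
    eventually_gt_atTop 1] with x h1 h2 h3 h4 hx
  have hl := Real.log_pos hx
  have hx0 : 0 < x := by linarith
  have hτ : 0 < Real.log x ^ (1 - δ) := Real.rpow_pos_of_pos hl _
  have hsplit : chebyshevRatio S δ x
      = (∑ d ∈ (Ioc 0 ⌊x⌋₊).filter (fun d : ℕ => x ^ (1 - η) < d),
        primeSupport S d * Λ d * sumUpTo (primeSupport Sᶜ) (x / d)) / (x * Real.log x ^ (1 - δ))
      + sumUpTo (fun d => primeSupport S d * Λ d * sumUpTo (primeSupport Sᶜ) (x / d)) (x ^ (1 - η))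
          / (x * Real.log x ^ (1 - δ)) := by
    rw [← add_div, ← sum_filter_le_eq_sumUpTo _ (x := x) (y := x ^ (1 - η)) ?_ (by positivity),
      sum_filter_add_sum_filter_not]
    · rfl
    · calc x ^ (1 - η) ≤ x ^ (1 : ℝ) := Real.rpow_le_rpow_of_exponent_le hx.le (by linarith)
        _ = x := Real.rpow_one x
  have hpos : 0 ≤ (∑ d ∈ (Ioc 0 ⌊x⌋₊).filter (fun d : ℕ => x ^ (1 - η) < d),
      primeSupport S d * Λ d * sumUpTo (primeSupport Sᶜ) (x / d))
        / (x * Real.log x ^ (1 - δ)) :=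
    div_nonneg (sum_nonneg fun d _ => mul_nonneg (vonMangoldt_nonneg_primeSupport S d)
      (sumUpTo_primeSupport_nonneg _ _)) (by positivity)
  have hrη : |r * (θ * (1 - η ^ (1 - δ))) - r * θ| = |r| * θ * η ^ (1 - δ) := by
    rw [show r * (θ * (1 - η ^ (1 - δ))) - r * θ = -(r * (θ * η ^ (1 - δ))) by ring, abs_neg,
      abs_mul, abs_of_nonneg (mul_nonneg hθ0 hητ.le)]
    ring
  have hrη' := hrη.le
  have hlog4 : 0 ≤ (Real.log 4 + 4) * c * η ^ (1 - δ) :=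
    mul_nonneg (mul_nonneg (add_nonneg (Real.log_nonneg (by norm_num)) (by norm_num)) hc) hητ.le
  rw [add_mul] at hηε
  rw [hsplit]
  change |_ - r * W x| ≤ e * W x at h1
  generalize (∑ d ∈ (Ioc 0 ⌊x⌋₊).filter (fun d : ℕ => x ^ (1 - η) < d),
    primeSupport S d * Λ d * sumUpTo (primeSupport Sᶜ) (x / d)) / (x * Real.log x ^ (1 - δ)) = U
    at h2 hpos ⊢
  generalize sumUpTo (fun d => primeSupport S d * Λ d * sumUpTo (primeSupport Sᶜ) (x / d))
    (x ^ (1 - η)) / (x * Real.log x ^ (1 - δ)) = V at h1 ⊢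
  rw [abs_le] at h1 hrη' ⊢
  rw [abs_lt] at h4
  constructor <;> linarith [h1.1, h1.2, hrη'.1, hrη'.2, h4.1, h4.2]

theorem exists_tendsto_countRatio
    (hS : HasLogDensity (fun p => if (p : ℕ) ∈ S then 1 else 0) δ) (hδ0 : 0 ≤ δ)
    (hδ : δ < 1 / 2) : ∃ κ : ℝ, 0 < κ ∧ Tendsto (countRatio S δ) atTop (𝓝 κ) := by
  obtain ⟨c, hc, hL⟩ := exists_tendsto_sumUpTo_inv (S := Sᶜ) (δ := 1 - δ)
    (by convert hasLogDensity_compl hS) (by linarith)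
  have hH := tendsto_sumUpTo_inv_div_rpow_zero hS (τ := 1 - δ) (by linarith)
  have hτ : 0 < 1 - δ := by linarith
  set θ := δ / (1 - δ) with hθ
  have hθ0 : 0 ≤ θ := div_nonneg hδ0 hτ.le
  have hθ1 : θ < 1 := by rw [hθ, div_lt_one hτ]; linarith
  set r := c * (1 - δ) with hr
  have hfix : r + r * θ = c := by
    rw [hr, hθ]; field_simp; ring
  refine ⟨r, mul_pos hc hτ, ?_⟩
  have hsum := tendsto_countRatio_add_chebyshevRatio hL hH
  have hzero : Tendsto (fun x => countRatio S δ x - r) atTop (𝓝 0) := by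
    refine tendsto_zero_of_contraction (B := 3 * c + 1 + r) hθ1 hθ0 ?_ fun e he hev ε hε => ?_
    · filter_upwards [countRatio_eventually_le hL hH, eventually_ge_atTop 1] with x hx hx1
      have := countRatio_nonneg S δ hx1
      have hr0 : 0 < r := mul_pos hc hτ
      rw [abs_le]
      constructor <;> linarith
    · have h1 := Metric.tendsto_nhds.1 hsum (ε / 2) (by positivity)
      filter_upwards [h1, eventually_abs_chebyshevRatio_sub_le hS hδ0 (by linarith) hL hc.le he
        (show 0 < ε / 2 by positivity) hev] with x h2 h3
      rw [Real.dist_eq, abs_lt] at h2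
      rw [abs_le] at h3 ⊢
      constructor <;> linarith [h2.1, h2.2, h3.1, h3.2]
  have h := hzero.add_const r
  rw [zero_add] at h
  exact h.congr fun x => sub_add_cancel _ _

end Contraction

lemma hasLogDensity_splittingField {m N : ℕ} {g : ℤ} (hm : 2 ≤ m) (hN : N ≠ 0) (hNm : N ∣ m)
    (hg : g ≠ 0) {P : Set ℕ}
    (hP : P = {q : ℕ | q.Prime ∧ ¬ ((q : ℤ) ∣ m * g) ∧ q % m = 1 ∧
        ¬ ∃ y : ZMod q, y ^ N = (g : ZMod q)}) :
    HasLogDensity (fun p => if (p : ℕ) ∈ P then 1 else 0)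
      (1 / (m.totient : ℝ) - 1 / (Module.finrank ℚ
        (((X : ℚ[X]) ^ N - C (g : ℚ)) * ((X : ℚ[X]) ^ m - 1)).SplittingField : ℝ)) := by
  set f : ℚ[X] := ((X : ℚ[X]) ^ N - C (g : ℚ)) * ((X : ℚ[X]) ^ m - 1) with hf
  have hc : CharZero f.SplittingField := algebraRat.charZero _
  have key : ∀ A : Algebra ℚ f.SplittingField, A = DivisionRing.toRatAlgebra →
      @IsSplittingField ℚ f.SplittingField _ _ A f →
      @FiniteDimensional ℚ f.SplittingField _ _ A.toModule →
      HasLogDensity (fun p => if (p : ℕ) ∈ P then 1 else 0)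
      (1 / (m.totient : ℝ) - 1 / (@Module.finrank ℚ f.SplittingField _ _ A.toModule : ℝ)) := by
    rintro _ rfl hL hfd
    have : NumberField f.SplittingField := { to_charZero := hc, to_finiteDimensional := hfd }
    exact hasLogDensity_not_power hm hN hNm hg hL hP
  have h := key _ (Subsingleton.elim _ _) (IsSplittingField.splittingField f)
    (Polynomial.IsSplittingField.finiteDimensional f.SplittingField f)
  convert h

/-- If a set of primes `P` has logarithmic density `δ < 1 / 2`, then the number of integers up to
`x` without prime factor in `P` is asymptotic to a constant times `x / (log x) ^ δ`. -/
theorem exists_tendsto_card_filter_div {P : Set ℕ} {δ : ℝ} (hP : ∀ q ∈ P, q.Prime)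
    (hD : HasLogDensity (fun p => if (p : ℕ) ∈ P then 1 else 0) δ) (hδ : δ < 1 / 2) :
    ∃ κ : ℝ, 0 < κ ∧ Tendsto (fun x : ℕ =>
      (((Finset.Icc 1 x).filter (fun m => ∀ q ∈ P, ¬ q ∣ m)).card : ℝ)
        / ((x : ℝ) / (Real.log x) ^ δ)) atTop (𝓝 κ) := by
  have hδ0 : 0 ≤ δ := HasLogDensity.nonneg (fun p => by split_ifs <;> norm_num) hD
  obtain ⟨κ, hκ, hlim⟩ := exists_tendsto_countRatio hD hδ0 hδ
  refine ⟨κ, hκ, (hlim.comp tendsto_natCast_atTop_atTop).congr fun x => ?_⟩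
  have hcount : sumUpTo (primeSupport Pᶜ) x
      = (((Finset.Icc 1 x).filter (fun m => ∀ q ∈ P, ¬ q ∣ m)).card : ℝ) := by
    rw [sumUpTo, Nat.floor_natCast, Finset.card_filter, Nat.cast_sum]
    refine Finset.sum_congr rfl fun n hn => ?_
    have hn0 : n ≠ 0 := (Finset.mem_Ioc.1 hn).1.ne'
    have hiff : (n ≠ 0 ∧ ∀ q, q.Prime → q ∣ n → q ∈ Pᶜ) ↔ ∀ q ∈ P, ¬ q ∣ n :=
      ⟨fun h q hq hd => h.2 q (hP q hq) hd hq, fun h => ⟨hn0, fun q _ hd hq => h q hq hd⟩⟩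
    rw [primeSupport_apply, if_congr hiff rfl rfl, Nat.cast_ite, Nat.cast_one, Nat.cast_zero]
  rw [Function.comp_apply, countRatio, hcount, div_div_eq_mul_div]

lemma one_div_totient_sub_one_div_lt_half {n d : ℕ} (hn : 2 < n) (hd : 0 < d) :
    1 / (n.totient : ℝ) - 1 / (d : ℝ) < 1 / 2 := by
  have hφ : 2 ≤ n.totient := by
    obtain ⟨k, hk⟩ := Nat.totient_even hn
    have := Nat.totient_pos.2 (show 0 < n by omega)
    omega
  have h1 : 1 / (n.totient : ℝ) ≤ 1 / 2 :=
    one_div_le_one_div_of_le two_pos (by exact_mod_cast hφ)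
  have h2 : 0 < 1 / (d : ℝ) := one_div_pos.2 (Nat.cast_pos.2 hd)
  linarith

/-- **Asymptotic count of `P_g`-free integers (Wirsing-type).**
Let `N ≥ 2` and let `g` be a nonzero integer such that `X^N − g` has no root in
`ℚ(ζ_{2N})`.  Let `P_g` be the set of primes `q` with `q ∤ 2Ng`, `q ≡ 1 (mod 2N)` and `g`
not an `N`-th power mod `q`; let `L_g` be the splitting field of `(X^N − g)(X^{2N} − 1)`
over `ℚ` and `δ_g = 1/φ(2N) − 1/[L_g : ℚ]`.  Then for some constant `κ > 0` the number of
`P_g`-free integers in `[1, X]` is asymptotic to `κ·X/(log X)^{δ_g}`. -/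
theorem Pg_free_count_asymptotic (N : ℕ+) (hN : 2 ≤ (N : ℕ)) (g : ℤ) (hg : g ≠ 0)
    (hroot : ∀ x : CyclotomicField (2 * N) ℚ, x ^ (N : ℕ) ≠ (g : CyclotomicField (2 * N) ℚ))
    (P : Set ℕ)
    (hP : P = {q : ℕ | q.Prime ∧ ¬ ((q : ℤ) ∣ 2 * (N : ℕ) * g) ∧ q % (2 * (N : ℕ)) = 1 ∧
        ¬ ∃ y : ZMod q, y ^ (N : ℕ) = (g : ZMod q)})
    (δ : ℝ)
    (hδ : δ = 1 / (Nat.totient (2 * (N : ℕ)) : ℝ) -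
        1 / (Module.finrank ℚ
          ((((X : ℚ[X]) ^ (N : ℕ) - C (g : ℚ)) *
            ((X : ℚ[X]) ^ (2 * (N : ℕ)) - 1)).SplittingField) : ℝ)) :
    ∃ κ : ℝ, 0 < κ ∧
      Tendsto (fun X : ℕ =>
          (((Finset.Icc 1 X).filter (fun m => ∀ q ∈ P, ¬ q ∣ m)).card : ℝ) /
            ((X : ℝ) / (Real.log X) ^ δ))
        atTop (nhds κ) := by
  refine exists_tendsto_card_filter_div (fun q hq => by rw [hP] at hq; exact hq.1) ?_ ?_
  · rw [hδ]
    exact hasLogDensity_splittingField (by omega) (by omega) (Dvd.intro_left 2 rfl) hg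
      (by rw [hP]; push_cast; rfl)
  · rw [hδ]
    exact one_div_totient_sub_one_div_lt_half (by omega) Module.finrank_pos
end

section
/- Fix n ≥ 4 and let t be an integer with |t| > 1, gcd(t, n(n−1)) = 1, and such that t·L_n(t) is squarefree, where L_n(t) = (−1)^{n(n−1)/2}·n^n + (−1)^{(n−1)(n−2)/2}·(n−1)^{n−1}·t. Then the polynomial f_t(X) = X^n + tX + t is irreducible over ℚ, and for K_t = ℚ(α_t) with α_t a root of f_t, the ring of integers of K_t equals ℤ[α_t]; that is, Algebra.adjoin ℤ {α_t} = ⊤ in 𝓞_{K_t}. In particular K_t is monogenic. -/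
open NumberField Polynomial

/-- If `a` is a root of `X ^ n + t X + t`, then `m a + k` divides `m ^ n f(-k / m)`. -/
lemma linear_dvd_trinomial_value {R : Type*} [CommRing R] {n : ℕ} (hn : 1 ≤ n) {t : ℤ} {a : R}
    (ha : a ^ n + (t : R) * a + (t : R) = 0) (m k : ℤ) :
    (m : R) * a + k ∣ (((-k) ^ n - t * m ^ (n - 1) * k + t * m ^ n : ℤ) : R) := by
  obtain ⟨c, hc⟩ := sub_dvd_pow_sub_pow ((m : R) * a) (-(k : R)) n
  obtain ⟨N, rfl⟩ : ∃ N, n = N + 1 := ⟨n - 1, by omega⟩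
  refine ⟨-(c + t * m ^ N), ?_⟩
  push_cast [Nat.add_sub_cancel]
  rw [mul_pow] at hc
  linear_combination -hc + (m : R) ^ (N + 1) * ha

lemma linear_dvd_sub_intCast {R : Type*} [CommRing R] {a : R} {m k M : ℤ}
    (hdvd : (m : R) * a + k ∣ (M : R)) (hcop : IsCoprime m M) :
    ∃ b : ℤ, (m : R) * a + k ∣ a - b := by
  obtain ⟨u, v, huv⟩ := hcop
  obtain ⟨c, hc⟩ := hdvd
  refine ⟨-u * k, u + v * c * a, ?_⟩
  have huv' : (u : R) * m + v * M = 1 := by exact_mod_cast congrArg (Int.cast : ℤ → R) huv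
  push_cast
  linear_combination (-a) * huv' + v * a * hc

/-- If the generator of `ℤ[a]` is congruent to an integer modulo `γ`, so is every element. -/
lemma exists_intCast_dvd_sub_of_mem_adjoin {S : Type*} [CommRing S] {a : S}
    {γ : Algebra.adjoin ℤ {a}} {b : ℤ}
    (hb : γ ∣ (⟨a, Algebra.self_mem_adjoin_singleton ℤ a⟩ : Algebra.adjoin ℤ {a}) - b)
    {y : S} (hy : y ∈ Algebra.adjoin ℤ {a}) :
    ∃ c : ℤ, γ ∣ (⟨y, hy⟩ : Algebra.adjoin ℤ {a}) - c := by
  induction hy using Algebra.adjoin_induction with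
  | mem x hx =>
    obtain rfl : x = a := hx
    exact ⟨b, hb⟩
  | algebraMap r =>
    refine ⟨r, ?_⟩
    convert dvd_zero γ using 1
    rw [sub_eq_zero]
    ext
    simp
  | add x y hx hy ihx ihy =>
    obtain ⟨c, hc⟩ := ihx
    obtain ⟨d, hd⟩ := ihy
    refine ⟨c + d, ?_⟩
    convert dvd_add hc hd using 1
    ext
    push_cast
    ring
  | mul x y hx hy ihx ihy =>
    obtain ⟨c, hc⟩ := ihx
    obtain ⟨d, hd⟩ := ihy
    refine ⟨c * d, ?_⟩
    convert dvd_add (hc.mul_right ⟨y, hy⟩) (hd.mul_left (c : Algebra.adjoin ℤ {a})) using 1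
    ext
    push_cast
    ring

/-- Suppose `γ ∈ ℤ[α]` divides a squarefree integer `M` that divides the norm of `γ`, and `α` is
congruent to an integer modulo `γ`. Then multiplication by `γ` reflects membership in `ℤ[α]`. -/
lemma mem_adjoin_of_mul_mem_of_squarefree {K : Type*} [Field K] [NumberField K] {α : 𝓞 K}
    {γ : Algebra.adjoin ℤ {α}} {b M : ℤ}
    (hb : γ ∣ (⟨α, Algebra.self_mem_adjoin_singleton ℤ α⟩ : Algebra.adjoin ℤ {α}) - b)
    (hM : γ ∣ (M : Algebra.adjoin ℤ {α})) (hsf : Squarefree M)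
    (hnorm : M ∣ Algebra.norm ℤ (γ : 𝓞 K)) {x : 𝓞 K}
    (hx : (γ : 𝓞 K) * x ∈ Algebra.adjoin ℤ {α}) : x ∈ Algebra.adjoin ℤ {α} := by
  obtain ⟨c, r, hr⟩ := exists_intCast_dvd_sub_of_mem_adjoin hb hx
  obtain ⟨s, hs⟩ := hM
  have hr' : (γ : 𝓞 K) * (x - r) = c := by
    have := congrArg (Subtype.val) hr
    push_cast at this
    linear_combination this
  have hs' : (M : 𝓞 K) = γ * s := by
    have := congrArg (Subtype.val) hs
    push_cast at this
    exact this
  have hγ : (γ : 𝓞 K) ≠ 0 := by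
    intro h
    rw [h, zero_mul] at hs'
    exact hsf.ne_zero (by exact_mod_cast hs')
  have hMc : M ∣ c := by
    have h := congrArg (Algebra.norm ℤ) hr'
    rw [map_mul, ← eq_intCast (algebraMap ℤ (𝓞 K)) c, Algebra.norm_algebraMap] at h
    exact (hsf.dvd_pow_iff_dvd Module.finrank_pos.ne').1 (h ▸ hnorm.mul_right _)
  obtain ⟨d, rfl⟩ := hMc
  have hxr : x = r + s * d := by
    apply mul_left_cancel₀ hγ
    push_cast at hr'
    linear_combination hr' + d * hs'
  rw [hxr]
  exact add_mem r.2 (mul_mem s.2 (intCast_mem _ d))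

lemma norm_eq_neg_one_pow_mul_coeff_zero_minpoly {F E : Type*} [Field F] [Field E] [Algebra F E]
    [FiniteDimensional F E] {θ : E} (hθ : Algebra.adjoin F {θ} = ⊤) :
    Algebra.norm F θ = (-1) ^ (minpoly F θ).natDegree * (minpoly F θ).coeff 0 := by
  have h := Algebra.PowerBasis.norm_gen_eq_coeff_zero_minpoly
    (PowerBasis.ofAdjoinEqTop (Algebra.IsIntegral.isIntegral (R := F) θ) hθ)
  rwa [← PowerBasis.natDegree_minpoly, PowerBasis.ofAdjoinEqTop_gen] at h

lemma norm_sub_algebraMap {F E : Type*} [Field F] [Field E] [Algebra F E]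
    [FiniteDimensional F E] {θ : E} (hθ : Algebra.adjoin F {θ} = ⊤) (q : F) :
    Algebra.norm F (θ - algebraMap F E q) =
      (-1) ^ (minpoly F θ).natDegree * (minpoly F θ).eval q := by
  have htop : Algebra.adjoin F {θ - algebraMap F E q} = ⊤ := by
    rw [eq_top_iff, ← hθ, Algebra.adjoin_le_iff, Set.singleton_subset_iff]
    simpa using add_mem (Algebra.self_mem_adjoin_singleton F (θ - algebraMap F E q))
      (algebraMap_mem _ q)
  rw [norm_eq_neg_one_pow_mul_coeff_zero_minpoly htop, minpoly.sub_algebraMap,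
    natDegree_comp, natDegree_X_add_C, mul_one, coeff_zero_eq_eval_zero, eval_comp]
  simp

lemma monic_trinomial_family {R : Type*} [CommRing R] [Nontrivial R] {n : ℕ} (hn : 2 ≤ n) (t : R) :
    ((X : R[X]) ^ n + C t * X + C t).Monic := by
  rw [add_assoc]
  refine monic_X_pow_add (degree_linear_le.trans_lt ?_)
  exact_mod_cast hn

lemma natDegree_trinomial_family {R : Type*} [CommRing R] [Nontrivial R] {n : ℕ} (hn : 2 ≤ n) (t : R) :
    ((X : R[X]) ^ n + C t * X + C t).natDegree = n := by
  rw [add_assoc]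
  refine natDegree_eq_of_degree_eq_some ?_
  rw [degree_add_eq_left_of_degree_lt] <;> rw [degree_X_pow]
  exact degree_linear_le.trans_lt (by exact_mod_cast hn)

/-- Eisenstein's criterion at a prime divisor of `t`. -/
lemma trinomial_irreducible {n : ℕ} (hn : 2 ≤ n) {t : ℤ} (ht : 1 < |t|) (hsf : Squarefree t) :
    Irreducible ((X : ℚ[X]) ^ n + C (t : ℚ) * X + C (t : ℚ)) := by
  have hmon := monic_trinomial_family hn t
  have hdeg := natDegree_trinomial_family hn t
  obtain ⟨p, hp, hpt⟩ := Int.exists_prime_and_dvd (n := t) (by zify; exact ht.ne')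
  have hirr : Irreducible ((X : ℤ[X]) ^ n + C t * X + C t) := by
    refine irreducible_of_eisenstein_criterion (P := Ideal.span {p})
      ((Ideal.span_singleton_prime hp.ne_zero).2 hp) ?_ ?_ ?_ ?_ hmon.isPrimitive
    · rw [hmon.leadingCoeff, Ideal.mem_span_singleton]
      exact fun h => hp.not_isUnit (isUnit_of_dvd_one h)
    · intro i hi
      rw [degree_eq_natDegree hmon.ne_zero, hdeg] at hi
      have hi' : i < n := by exact_mod_cast hi
      rw [Ideal.mem_span_singleton, coeff_add, coeff_add, coeff_X_pow, if_neg hi'.ne, zero_add,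
        coeff_C_mul, coeff_C]
      refine dvd_add (hpt.mul_right _) ?_
      split_ifs
      · exact hpt
      · exact dvd_zero p
    · rw [← natDegree_pos_iff_degree_pos, hdeg]
      omega
    · have h0 : ((X : ℤ[X]) ^ n + C t * X + C t).coeff 0 = t := by
        simp [coeff_X_pow, show 0 ≠ n by omega]
      rw [h0, Ideal.span_singleton_pow, Ideal.mem_span_singleton, pow_two]
      exact fun h => hp.not_isUnit (hsf p h)
  have := (hmon.irreducible_iff_irreducible_map_fraction_map (K := ℚ)).1 hirr
  simpa using this

section Trinomial

variable {K : Type*} [Field K] [NumberField K] {α : 𝓞 K} {n : ℕ} {t : ℤ}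

lemma minpoly_rat_eq_trinomial (hn : 2 ≤ n)
    (hirr : Irreducible ((X : ℚ[X]) ^ n + C (t : ℚ) * X + C (t : ℚ)))
    (hα : (α : K) ^ n + (t : K) * (α : K) + (t : K) = 0) :
    minpoly ℚ (α : K) = X ^ n + C (t : ℚ) * X + C (t : ℚ) :=
  (minpoly.eq_of_irreducible_of_monic hirr
    (by simpa only [map_add, map_mul, map_pow, aeval_X, aeval_C, map_intCast] using hα)
    (monic_trinomial_family hn _)).symm

lemma minpoly_int_eq_trinomial (hn : 2 ≤ n)
    (hirr : Irreducible ((X : ℚ[X]) ^ n + C (t : ℚ) * X + C (t : ℚ)))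
    (hα : (α : K) ^ n + (t : K) * (α : K) + (t : K) = 0) :
    minpoly ℤ α = X ^ n + C t * X + C t := by
  apply map_injective (algebraMap ℤ ℚ) (RingHom.injective_int _)
  rw [← minpoly.isIntegrallyClosed_eq_field_fractions ℚ K (Algebra.IsIntegral.isIntegral α)]
  simpa using minpoly_rat_eq_trinomial hn hirr hα

lemma norm_linear_eq (hn : 2 ≤ n)
    (hirr : Irreducible ((X : ℚ[X]) ^ n + C (t : ℚ) * X + C (t : ℚ)))
    (hα : (α : K) ^ n + (t : K) * (α : K) + (t : K) = 0)
    (hgen : Algebra.adjoin ℚ {(α : K)} = ⊤) {m : ℤ} (hm : m ≠ 0) (k : ℤ) :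
    Algebra.norm ℤ ((m : 𝓞 K) * α + k) =
      (-1) ^ n * ((-k) ^ n - t * m ^ (n - 1) * k + t * m ^ n) := by
  have hmin := minpoly_rat_eq_trinomial hn hirr hα
  have hfin : Module.finrank ℚ K = n := by
    rw [(PowerBasis.ofAdjoinEqTop (Algebra.IsIntegral.isIntegral (R := ℚ) (α : K)) hgen).finrank,
      ← PowerBasis.natDegree_minpoly, PowerBasis.ofAdjoinEqTop_gen, hmin, natDegree_trinomial_family hn]
  have hm' : (m : ℚ) ≠ 0 := by exact_mod_cast hm
  have hmK : (m : K) ≠ 0 := by exact_mod_cast hm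
  have hfac : (((m : 𝓞 K) * α + k : 𝓞 K) : K) =
      algebraMap ℚ K m * ((α : K) - algebraMap ℚ K (-k / m)) := by
    push_cast
    simp
    field_simp
    ring
  have h : (Algebra.norm ℤ ((m : 𝓞 K) * α + k) : ℚ) =
      (-1) ^ n * ((-k) ^ n - t * m ^ (n - 1) * k + t * m ^ n) := by
    rw [Algebra.coe_norm_int, hfac, map_mul, Algebra.norm_algebraMap, hfin,
      norm_sub_algebraMap hgen, hmin, natDegree_trinomial_family hn]
    obtain ⟨N, rfl⟩ : ∃ N, n = N + 1 := ⟨n - 1, by omega⟩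
    simp only [eval_add, eval_pow, eval_X, eval_mul, eval_C, Nat.add_sub_cancel]
    rw [div_pow]
    field_simp
    ring
  exact_mod_cast h

lemma mem_adjoin_of_linear_mul_mem (hn : 2 ≤ n)
    (hirr : Irreducible ((X : ℚ[X]) ^ n + C (t : ℚ) * X + C (t : ℚ)))
    (hα : (α : K) ^ n + (t : K) * (α : K) + (t : K) = 0)
    (hgen : Algebra.adjoin ℚ {(α : K)} = ⊤) {m k M : ℤ} (hm : m ≠ 0)
    (hMeq : M = (-k) ^ n - t * m ^ (n - 1) * k + t * m ^ n)
    (hcop : IsCoprime m M) (hsf : Squarefree M) {x : 𝓞 K}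
    (hx : ((m : 𝓞 K) * α + k) * x ∈ Algebra.adjoin ℤ {α}) : x ∈ Algebra.adjoin ℤ {α} := by
  set a : Algebra.adjoin ℤ {α} := ⟨α, Algebra.self_mem_adjoin_singleton ℤ α⟩ with ha_def
  have ha : a ^ n + (t : Algebra.adjoin ℤ {α}) * a + (t : Algebra.adjoin ℤ {α}) = 0 := by
    ext
    push_cast
    simpa using hα
  have hM := linear_dvd_trinomial_value (by omega) ha m k
  rw [← hMeq] at hM
  obtain ⟨b, hb⟩ := linear_dvd_sub_intCast hM hcop
  have hcoe : (((m : Algebra.adjoin ℤ {α}) * a + k : Algebra.adjoin ℤ {α}) : 𝓞 K) =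
      (m : 𝓞 K) * α + k := by
    push_cast
    rfl
  refine mem_adjoin_of_mul_mem_of_squarefree hb hM hsf ?_ (hcoe ▸ hx)
  rw [hcoe, norm_linear_eq hn hirr hα hgen hm, hMeq]
  exact Dvd.intro_left _ rfl

end Trinomial

/-- The linear factor of the trinomial discriminant is, up to sign, `(n-1) ^ n f(-n / (n-1))`. -/
lemma discriminant_factor_associated {n : ℕ} (hn : 2 ≤ n) (t : ℤ) :
    Associated ((-1) ^ (n * (n - 1) / 2) * (n : ℤ) ^ n +
        (-1) ^ ((n - 1) * (n - 2) / 2) * ((n : ℤ) - 1) ^ (n - 1) * t)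
      ((-(n : ℤ)) ^ n - t * ((n : ℤ) - 1) ^ (n - 1) * n + t * ((n : ℤ) - 1) ^ n) := by
  obtain ⟨N, rfl⟩ : ∃ N, n = N + 2 := ⟨n - 2, by omega⟩
  have hexp : (N + 2) * (N + 2 - 1) / 2 = (N + 2 - 1) * (N + 2 - 2) / 2 + (N + 1) := by
    have : (N + 2) * (N + 2 - 1) = (N + 2 - 1) * (N + 2 - 2) + (N + 1) * 2 := by
      simp only [Nat.add_sub_cancel, show N + 2 - 1 = N + 1 by omega]
      ring
    rw [this, Nat.add_mul_div_right _ _ two_pos]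
  rw [hexp]
  generalize (N + 2 - 1) * (N + 2 - 2) / 2 = e
  refine ⟨((-1 : ℤˣ)) ^ (e + 1), ?_⟩
  simp only [show N + 2 - 1 = N + 1 by omega]
  rw [neg_pow ((N + 2 : ℕ) : ℤ) (N + 2)]
  push_cast
  rcases neg_one_pow_eq_or ℤ e with h | h <;> rcases neg_one_pow_eq_or ℤ N with h' | h' <;>
    simp only [pow_add, h, h'] <;> ring

/-- **Monogenic specializations of the trinomial family `X^n + tX + t`.**
Fix `n ≥ 4` and an integer `t` with `|t| > 1`, `gcd(t, n(n−1)) = 1`, and `t·L_n(t)`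
squarefree, where `L_n(t) = (−1)^{n(n−1)/2} n^n + (−1)^{(n−1)(n−2)/2} (n−1)^{n−1} t`.
Then `f_t(X) = X^n + tX + t` is irreducible over `ℚ`, and for `K_t = ℚ(α_t)` with `α_t` a
root of `f_t` one has `𝓞_{K_t} = ℤ[α_t]`; in particular `K_t` is monogenic. -/
theorem trinomial_family_monogenic (n : ℕ) (hn : 4 ≤ n) (t : ℤ) (ht : 1 < |t|)
    (hcop : Int.gcd t ((n : ℤ) * ((n : ℤ) - 1)) = 1)
    (L : ℤ)
    (hL : L = (-1) ^ (n * (n - 1) / 2) * (n : ℤ) ^ n +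
        (-1) ^ ((n - 1) * (n - 2) / 2) * ((n : ℤ) - 1) ^ (n - 1) * t)
    (hsf : Squarefree (t * L)) :
    Irreducible ((X : ℚ[X]) ^ n + C (t : ℚ) * X + C (t : ℚ)) ∧
    ∀ (K : Type) [Field K] [NumberField K] (α : 𝓞 K),
      (α : K) ^ n + (t : K) * (α : K) + (t : K) = 0 →
      Algebra.adjoin ℚ {(α : K)} = ⊤ →
      Algebra.adjoin ℤ {α} = ⊤ := by
  have hn2 : 2 ≤ n := by omega
  have htsf : Squarefree t := hsf.of_mul_left
  have hirr := trinomial_irreducible hn2 ht htsf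
  refine ⟨hirr, fun K _ _ α hα hgen => ?_⟩
  have hα' : α ^ n + (t : 𝓞 K) * α + (t : 𝓞 K) = 0 := by
    ext
    push_cast
    simpa using hα
  have hassoc := discriminant_factor_associated hn2 t
  rw [← hL] at hassoc
  have hpow : ∀ j : ℕ, ∀ x : 𝓞 K, α ^ j * x ∈ Algebra.adjoin ℤ {α} →
      x ∈ Algebra.adjoin ℤ {α} := by
    intro j
    induction j with
    | zero => simp
    | succ j ih =>
      intro x hx
      refine ih x (mem_adjoin_of_linear_mul_mem hn2 hirr hα hgen (m := 1) (k := 0) (M := t)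
        one_ne_zero (by simp [show n ≠ 0 by omega]) isCoprime_one_left htsf ?_)
      convert hx using 1
      push_cast
      ring
  have hcop' : IsCoprime ((n : ℤ) - 1) L := by
    have h1 : IsCoprime ((n : ℤ) - 1) (n : ℤ) := ⟨-1, 1, by ring⟩
    obtain ⟨N, rfl⟩ : ∃ N, n = N + 2 := ⟨n - 2, by omega⟩
    rw [hL, show (-1) ^ ((N + 2 - 1) * (N + 2 - 2) / 2) * (((N + 2 : ℕ) : ℤ) - 1) ^ (N + 2 - 1) * t
      = (((N + 2 : ℕ) : ℤ) - 1) * ((-1) ^ ((N + 2 - 1) * (N + 2 - 2) / 2) *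
        (((N + 2 : ℕ) : ℤ) - 1) ^ N * t) by
        rw [show N + 2 - 1 = N + 1 by omega, pow_succ (((N + 2 : ℕ) : ℤ) - 1)]; ring]
    rw [IsCoprime.add_mul_left_right_iff]
    exact (isCoprime_mul_unit_left_right (isUnit_one.neg.pow _) _ _).2 h1.pow_right
  have hderiv : aeval α (derivative (minpoly ℤ α)) ∈ conductor ℤ α := by
    refine SetLike.le_def.mp ?_ (Ideal.mem_span_singleton_self _)
    rw [← conductor_mul_differentIdeal ℤ ℚ K α hgen]
    exact Ideal.mul_le_left
  rw [eq_top_iff]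
  rintro x -
  have hx := mem_conductor_iff.1 hderiv x
  rw [minpoly_int_eq_trinomial hn2 hirr hα] at hx
  have hval : aeval α (derivative ((X : ℤ[X]) ^ n + C t * X + C t)) =
      (n : 𝓞 K) * α ^ (n - 1) + (t : 𝓞 K) := by
    rw [derivative_add, derivative_add, derivative_X_pow, derivative_C_mul, derivative_X,
      derivative_C]
    simp
  rw [hval] at hx
  have hself := Algebra.self_mem_adjoin_singleton ℤ α
  refine mem_adjoin_of_linear_mul_mem hn2 hirr hα hgen (m := (n : ℤ) - 1) (k := n)
    (by omega) rfl ?_ (hassoc.squarefree_iff.1 hsf.of_mul_right) (hpow n _ ?_)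
  · obtain ⟨u, hu⟩ := hassoc
    rw [← hu]
    exact (isCoprime_mul_unit_right_right u.isUnit _ _).2 hcop'
  · convert mul_mem (mul_mem hself (add_mem hself (one_mem _))) hx using 1
    have hp : α ^ n = α ^ (n - 1) * α := by rw [← pow_succ]; congr 1; omega
    push_cast
    linear_combination -α * x * hα' + (α + 1) * n * x * hp
end
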